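/- arXiv:1610.09965 — 3 statements merged into one kernel-verified Lean document; each statement's English description precedes it below -/
import Mathlib

section
/- In the Markov-modulated setting with P_π(A_1=0)=0, exactly one of the following three alternatives holds for the embedded products (Π_{τ_n(i)})_{n≥0}: (T1') Π_{τ_n(i)}→0 a.s.; (T2') P_i(|Π_{τ(i)}|=1)=1; (T3') limsup_{n→∞}|Π_{τ_n(i)}|=∞ a.s. Moreover, the alternative that occurs is the same for all i∈S. -/
open MeasureTheory ProbabilityTheory Filter
open scoped ENNReal NNReal Topology

noncomputable section

namespace Perpetuities

/-- The positive part of the logarithm, with the convention `log⁺ 0 = 0`. -/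
def logplus (x : ℝ) : ℝ := max (Real.log x) 0

/-- Weak convergence of a sequence of (probability) measures on `ℝ`. -/
def WeakLim (μ : ℕ → Measure ℝ) (ν : Measure ℝ) : Prop :=
  ∀ f : BoundedContinuousFunction ℝ ℝ,
    Tendsto (fun n => ∫ x, f x ∂ μ n) atTop (nhds (∫ x, f x ∂ ν))

/-- `|f n| → ∞` in `μ`-probability. -/
def TendstoInfInMeasure {Ω : Type*} [MeasurableSpace Ω] (μ : Measure Ω) (f : ℕ → Ω → ℝ) : Prop :=
  ∀ x : ℝ, 0 < x → Tendsto (fun n => μ {ω | |f n ω| ≤ x}) atTop (nhds 0)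

/-- `d` is the lattice span (period) of the distribution of the `ℕ`-valued random
variable `T` under `μ`, i.e. `d` is the greatest common divisor of the support. -/
def LatticeSpan {Ω : Type*} [MeasurableSpace Ω] (μ : Measure Ω) (T : Ω → ℕ) (d : ℕ) : Prop :=
  (∀ n, 0 < μ {ω | T ω = n} → d ∣ n) ∧ ∀ e : ℕ, (∀ n, 0 < μ {ω | T ω = n} → e ∣ n) → e ∣ d

/-- The Markov-modulated setting: an ergodic (irreducible, aperiodic, positive recurrent)
Markov chain `M` on a countable state space `S` with transition matrix `p` and stationary
distribution `π`, modulating a sequence `(A_n, B_n)_{n ≥ 1}` of real random pairs (indexed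
here so that `A n`, `B n` are the paper's `A_{n+1}`, `B_{n+1}`): conditionally on the whole
path of the chain, the pairs are independent and the conditional law of `(A_{n+1}, B_{n+1})`
given the path depends only on `(M_n, M_{n+1})`, via the stochastic kernel `K`.
`P i` is the underlying probability measure conditioned on `M 0 = i`. -/
structure MMSetting (S : Type*) (Ω : Type*) [MeasurableSpace S] [MeasurableSingletonClass S]
    [Countable S] [MeasurableSpace Ω] where
  P : S → Measure Ω
  prob : ∀ i, IsProbabilityMeasure (P i)
  π : S → ℝ≥0∞
  πsum : ∑' i, π i = 1
  πpos : ∀ i, 0 < π i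
  p : S → S → ℝ≥0∞
  psum : ∀ i, ∑' j, p i j = 1
  stationary : ∀ j, ∑' i, π i * p i j = π j
  K : S → S → Measure (ℝ × ℝ)
  Kprob : ∀ i j, IsProbabilityMeasure (K i j)
  M : ℕ → Ω → S
  A : ℕ → Ω → ℝ
  B : ℕ → Ω → ℝ
  measM : ∀ n, Measurable (M n)
  measA : ∀ n, Measurable (A n)
  measB : ∀ n, Measurable (B n)
  start : ∀ i, P i {ω | M 0 ω = i} = 1
  chain : ∀ (i : S) (n : ℕ) (path : ℕ → S), path 0 = i →
    P i (⋂ k ∈ Finset.range (n + 1), {ω | M k ω = path k})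
      = ∏ k ∈ Finset.range n, p (path k) (path (k + 1))
  modulated : ∀ (i : S) (n : ℕ) (path : ℕ → S) (E : ℕ → Set (ℝ × ℝ)), path 0 = i →
    (∀ k, MeasurableSet (E k)) →
    P i ((⋂ k ∈ Finset.range (n + 1), {ω | M k ω = path k}) ∩
        ⋂ k ∈ Finset.range n, {ω | (A k ω, B k ω) ∈ E k})
      = P i (⋂ k ∈ Finset.range (n + 1), {ω | M k ω = path k})
        * ∏ k ∈ Finset.range n, K (path k) (path (k + 1)) (E k)
  irreducible : ∀ i j, ∃ n, 0 < P i {ω | M n ω = j}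
  recurrent : ∀ i, P i {ω | ∃ n, 0 < n ∧ M n ω = i} = 1
  posRecurrent : ∀ i, ∫⁻ ω, ((sInf {n | 0 < n ∧ M n ω = i} : ℕ) : ℝ≥0∞) ∂ P i < ⊤
  aperiodic : ∀ (i : S) (d : ℕ), (∀ n, 0 < n → 0 < P i {ω | M n ω = i} → d ∣ n) → d = 1

namespace MMSetting

variable {S : Type*} [MeasurableSpace S] [MeasurableSingletonClass S] [Countable S]
variable {Ω : Type*} [MeasurableSpace Ω]
variable (X : MMSetting S Ω)

/-- `Pπ = ∑ i, π i • P i`, the stationary (unconditional) probability measure. -/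
def Pπ : Measure Ω := Measure.sum fun i => X.π i • X.P i

/-- `Pprod n = Π_n = A_1 ⋯ A_n`, with `Π_0 = 1`. -/
def Pprod (n : ℕ) (ω : Ω) : ℝ := ∏ k ∈ Finset.range n, X.A k ω

/-- `Ssum n = ∑_{k=1}^n Π_{k-1} B_k`, the value `Ψ_1 ∘ ⋯ ∘ Ψ_n (0)` of the backward
iteration started at `0`. -/
def Ssum (n : ℕ) (ω : Ω) : ℝ := ∑ k ∈ Finset.range n, X.Pprod k ω * X.B k ω

/-- `Zb Z n = Ψ_1 ∘ ⋯ ∘ Ψ_n (Z) = Π_n Z + ∑_{k=1}^n Π_{k-1} B_k`, the backward iteration. -/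
def Zb (Z : Ω → ℝ) (n : ℕ) (ω : Ω) : ℝ := X.Pprod n ω * Z ω + X.Ssum n ω

/-- `Zf Z n = Ψ_n ∘ ⋯ ∘ Ψ_1 (Z)`, the forward iteration. -/
def Zf (Z : Ω → ℝ) : ℕ → Ω → ℝ
  | 0 => Z
  | n + 1 => fun ω => X.A n ω * Zf Z n ω + X.B n ω

/-- The perpetuity `Z_∞ = ∑_{n ≥ 1} Π_{n-1} B_n`. -/
def Zinf (ω : Ω) : ℝ := ∑' n, X.Pprod n ω * X.B n ω

/-- `tau i n = τ_n(i)`, the `n`-th return time of the driving chain to the state `i`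
(`τ_0(i) = 0`). -/
def tau (i : S) : ℕ → Ω → ℕ
  | 0 => fun _ => 0
  | n + 1 => fun ω => sInf {k | tau i n ω < k ∧ X.M k ω = i}

/-- `A_1^i = Π_{τ(i)}`. -/
def Ai (i : S) (ω : Ω) : ℝ := X.Pprod (X.tau i 1 ω) ω

/-- `B_1^i = ∑_{k=1}^{τ(i)} Π_{k-1} B_k`. -/
def Bi (i : S) (ω : Ω) : ℝ := X.Ssum (X.tau i 1 ω) ω

/-- `W^i = max_{1 ≤ k ≤ τ(i)} |Π_{k-1} B_k|`. -/
def Wi (i : S) (ω : Ω) : ℝ :=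
  (((Finset.range (X.tau i 1 ω)).sup fun k => ‖X.Pprod k ω * X.B k ω‖₊ : ℝ≥0) : ℝ)

/-- `S_{τ(i)} = - log |Π_{τ(i)}|`. -/
def Stau (i : S) (ω : Ω) : ℝ := - Real.log |X.Ai i ω|

/-- The function `J_i`: `J_i(0) = 1`, and for `x > 0`, `J_i(x) = x / E_i (S_{τ(i)}⁺ ∧ x)`
if `P_i(S_{τ(i)} ≤ 0) < 1`, and `J_i(x) = x` otherwise. -/
def Ji (i : S) (x : ℝ) : ℝ :=
  if x = 0 then 1
  else if X.P i {ω | X.Stau i ω ≤ 0} < 1 then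
    x / ∫ ω, min (max (X.Stau i ω) 0) x ∂ X.P i
  else x

/-- `τ̂(i) = inf {k ≥ 1 : M_k = i, Π_k = 1}`. -/
def hatτ (i : S) (ω : Ω) : ℕ := sInf {k | 0 < k ∧ X.M k ω = i ∧ X.Pprod k ω = 1}

/-- `Z` is an admissible initial value: it is (conditionally on `M 0`, i.e. under each `P i`)
independent of the modulated sequence `(M_n, A_n, B_n)_{n ≥ 1}`. -/
def Admissible (Z : Ω → ℝ) : Prop :=
  Measurable Z ∧
    ∀ i : S, IndepFun Z (fun ω => fun n : ℕ => (X.M (n + 1) ω, X.A n ω, X.B n ω)) (X.P i)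

/-- The degeneracy condition: `A_1 c_{M_1} + B_1 = c_{M_0}` a.s. for the family `c`. -/
def DegenD (c : S → ℝ) : Prop :=
  ∀ᵐ ω ∂ X.Pπ, X.A 0 ω * c (X.M 1 ω) + X.B 0 ω = c (X.M 0 ω)

/-- The dual degeneracy condition: `A_1 c_{M_0} + B_1 = c_{M_1}` a.s. for the family `c`. -/
def DegenDdual (c : S → ℝ) : Prop :=
  ∀ᵐ ω ∂ X.Pπ, X.A 0 ω * c (X.M 0 ω) + X.B 0 ω = c (X.M 1 ω)

end MMSetting

end Perpetuities

namespace Perpetuities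

namespace MMSetting

variable {S : Type*} [MeasurableSpace S] [MeasurableSingletonClass S] [Countable S]
variable {Ω : Type*} [MeasurableSpace Ω] (X : MMSetting S Ω)

/-- Alternative (T1'): `Π_{τ_n(i)} → 0` a.s. -/
def AltT1 (i : S) : Prop :=
  ∀ᵐ ω ∂ X.Pπ, Tendsto (fun n => X.Pprod (X.tau i n ω) ω) atTop (nhds 0)

/-- Alternative (T2'): `P_i(|Π_{τ(i)}| = 1) = 1`. -/
def AltT2 (i : S) : Prop := X.P i {ω | |X.Ai i ω| = 1} = 1

/-- Alternative (T3'): `limsup_n |Π_{τ_n(i)}| = ∞` a.s. (equivalently, the sequence is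
a.s. unbounded). -/
def AltT3 (i : S) : Prop := ∀ᵐ ω ∂ X.Pπ, ∀ C : ℝ, ∃ n, C < |X.Pprod (X.tau i n ω) ω|

end MMSetting

open MMSetting

theorem conv_cancel (μ ν : Measure ℝ) [IsProbabilityMeasure μ] [IsProbabilityMeasure ν]
    (h : μ ∗ ν = ν) : ∀ᵐ r ∂μ, r = 0 := by
  have h1 : ∀ t, charFun μ t * charFun ν t = charFun ν t := by
    intro t
    rw [← charFun_conv, h]
  have hc : Continuous (charFun ν) := continuous_charFun
  have h0 : charFun ν 0 = 1 := by simp [charFun_zero]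
  have ht : Tendsto (fun n : ℕ => charFun ν (1 / ((n : ℝ) + 1))) atTop (𝓝 1) := by
    have := (hc.tendsto 0).comp (tendsto_one_div_add_atTop_nhds_zero_nat (𝕜 := ℝ))
    rw [h0] at this
    exact this
  have hne : ∀ᶠ n : ℕ in atTop, charFun ν (1 / ((n : ℝ) + 1)) ≠ 0 :=
    ht.eventually_ne one_ne_zero
  obtain ⟨N, hN⟩ := eventually_atTop.1 hne
  have h2 : ∀ n ≥ N, charFun μ (1 / ((n : ℝ) + 1)) = 1 := by
    intro n hn
    exact mul_right_cancel₀ (hN n hn) (by rw [h1, one_mul])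
  have h3 : ∀ n : ℕ, n ≥ N → ∀ᵐ r ∂μ, Real.cos (1 / ((n : ℝ) + 1) * r) = 1 := by
    intro n hn
    set t : ℝ := 1 / ((n : ℝ) + 1)
    have h4 := h2 n hn
    have hIr : Integrable (fun r : ℝ => Real.cos (t * r)) μ := by
      refine Integrable.of_bound (C := 1) (by fun_prop) ?_
      exact Eventually.of_forall fun r => by simpa using Real.abs_cos_le_one _
    have hIc : Integrable (fun r : ℝ => Complex.exp (t * r * Complex.I)) μ := by
      refine Integrable.of_bound (C := 1) (by fun_prop) ?_
      refine Eventually.of_forall fun r => ?_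
      rw [← Complex.ofReal_mul, Complex.norm_exp_ofReal_mul_I]
    have h5 : ∫ r, Real.cos (t * r) ∂μ = 1 := by
      rw [charFun_apply_real] at h4
      have h6 := congrArg Complex.re h4
      have h7 := integral_re hIc
      simp only [RCLike.re_to_complex] at h7
      rw [← h7] at h6
      simp only [← Complex.ofReal_mul, Complex.exp_ofReal_mul_I_re, Complex.one_re] at h6
      exact h6
    have h6 : ∫ r, (1 - Real.cos (t * r)) ∂μ = 0 := by
      rw [integral_sub (integrable_const _) hIr, h5]; simp
    have h7 := (integral_eq_zero_iff_of_nonneg (f := fun r : ℝ => 1 - Real.cos (t * r)) (μ := μ)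
      (fun r => by simpa using Real.cos_le_one _) ((integrable_const _).sub hIr)).1 h6
    filter_upwards [h7] with r hr
    simp only [Pi.zero_apply] at hr
    linarith
  have h4 : ∀ᵐ r ∂μ, ∀ n : ℕ, n ≥ N → Real.cos (1 / ((n : ℝ) + 1) * r) = 1 := by
    rw [ae_all_iff]; intro n
    by_cases hn : n ≥ N
    · filter_upwards [h3 n hn] with r hr _ using hr
    · exact Eventually.of_forall fun r h => absurd h hn
  filter_upwards [h4] with r hr
  obtain ⟨m, hm⟩ := exists_nat_gt |r|
  have h5 := hr (max m N) (le_max_right _ _)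
  set k := max m N
  have hk : |r| < (k : ℝ) + 1 := by
    have : (m : ℝ) ≤ k := by exact_mod_cast le_max_left m N
    linarith
  have hk0 : (0 : ℝ) < (k : ℝ) + 1 := by positivity
  have h6 : |1 / ((k : ℝ) + 1) * r| < 1 := by
    rw [abs_mul, abs_of_pos (by positivity), one_div, inv_mul_lt_iff₀ hk0]; linarith
  rw [abs_lt] at h6
  have := (Real.cos_eq_one_iff_of_lt_of_lt (by linarith [Real.pi_gt_three])
    (by linarith [Real.pi_gt_three])).1 h5
  rcases mul_eq_zero.1 this with h | h
  · exact absurd h (by positivity)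
  · exact h

section RW
set_option linter.unusedSectionVars false
variable {T : Type*} [MeasurableSpace T] {Q : Measure T} [IsProbabilityMeasure Q]
  {μ : Measure ℝ} [IsProbabilityMeasure μ] {X : T → ℝ} {θ : T → T}

theorem rw_coboundary (hX : Measurable X) (hθ : Measurable θ)
    (h : Q.map (fun x => (X x, θ x)) = μ.prod Q) (L : T → ℝ) (hL : Measurable L)
    (hLe : ∀ᵐ x ∂Q, L x = X x + L (θ x)) : ∀ᵐ r ∂μ, r = 0 := by
  have : IsProbabilityMeasure (Q.map L) := Measure.isProbabilityMeasure_map hL.aemeasurable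
  apply conv_cancel μ (Q.map L)
  have h1 : Q.map L = (Q.map (fun x => (X x, θ x))).map (fun z => z.1 + L z.2) := by
    rw [Measure.map_map (by fun_prop) (by fun_prop)]
    exact Measure.map_congr hLe
  rw [h] at h1
  have h2 : (μ.prod Q).map (Prod.map id L) = μ.prod (Q.map L) := by
    rw [← Measure.map_prod_map _ _ measurable_id hL, Measure.map_id]
  rw [Measure.conv, ← h2, Measure.map_map (by fun_prop) (by fun_prop), h1]
  rfl

theorem rw_apply (hX : Measurable X) (hθ : Measurable θ)
    (h : Q.map (fun x => (X x, θ x)) = μ.prod Q) {B : Set ℝ} {G : Set T}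
    (hB : MeasurableSet B) (hG : MeasurableSet G) :
    Q (X ⁻¹' B ∩ θ ⁻¹' G) = μ B * Q G := by
  rw [← Measure.prod_prod, ← h, Measure.map_apply (by fun_prop) (hB.prod hG)]
  rfl

theorem rw_cyl (hX : Measurable X) (hθ : Measurable θ)
    (h : Q.map (fun x => (X x, θ x)) = μ.prod Q) (n : ℕ) :
    ∀ t : ℕ → Set ℝ, (∀ i, MeasurableSet (t i)) →
      Q {x | ∀ k < n, X (θ^[k] x) ∈ t k} = ∏ k ∈ Finset.range n, μ (t k) := by
  induction n with
  | zero => intro t _; simp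
  | succ n ih =>
    intro t ht
    have h1 : {x | ∀ k < n + 1, X (θ^[k] x) ∈ t k}
        = X ⁻¹' (t 0) ∩ θ ⁻¹' {x | ∀ k < n, X (θ^[k] x) ∈ t (k + 1)} := by
      ext x
      simp only [Set.mem_ofPred_eq, Set.mem_inter_iff, Set.mem_preimage]
      constructor
      · intro hx
        refine ⟨hx 0 (by omega), fun k hk => ?_⟩
        have := hx (k + 1) (by omega)
        rwa [Function.iterate_succ_apply] at this
      · rintro ⟨h0, hx⟩ k hk
        cases k with
        | zero => exact h0
        | succ k => rw [Function.iterate_succ_apply]; exact hx k (by omega)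
    have hm : MeasurableSet {x | ∀ k < n, X (θ^[k] x) ∈ t (k + 1)} := by
      have : {x | ∀ k < n, X (θ^[k] x) ∈ t (k + 1)}
          = ⋂ k, ⋂ (_ : k < n), (fun x => X (θ^[k] x)) ⁻¹' (t (k + 1)) := by
        ext x; simp
      rw [this]
      exact MeasurableSet.iInter fun k => MeasurableSet.iInter fun _ =>
        (hX.comp (hθ.iterate k)) (ht _)
    rw [h1, rw_apply hX hθ h (ht 0) hm, ih _ (fun i => ht _), Finset.prod_range_succ', mul_comm]

theorem rw_law (hX : Measurable X) (hθ : Measurable θ)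
    (h : Q.map (fun x => (X x, θ x)) = μ.prod Q) :
    Q.map (fun x (k : ℕ) => X (θ^[k] x)) = Measure.infinitePi (fun _ : ℕ => μ) := by
  have hm : Measurable (fun x (k : ℕ) => X (θ^[k] x)) :=
    measurable_pi_lambda _ fun k => hX.comp (hθ.iterate k)
  refine Measure.eq_infinitePi _ fun s t ht => ?_
  rw [Measure.map_apply hm (MeasurableSet.pi s.countable_toSet fun i _ => ht i)]
  obtain ⟨n, hn⟩ : ∃ n, s ⊆ Finset.range n := s.exists_nat_subset_range
  classical
  have := rw_cyl hX hθ h n (fun k => if k ∈ s then t k else Set.univ) (fun i => by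
    split_ifs
    · exact ht i
    · exact MeasurableSet.univ)
  have e : (fun x (k : ℕ) => X (θ^[k] x)) ⁻¹' (Set.pi s t) =
      {x | ∀ k < n, X (θ^[k] x) ∈ if k ∈ s then t k else Set.univ} := by
    ext x
    simp only [Set.mem_preimage, Set.mem_pi, Set.mem_ofPred_eq]
    constructor
    · intro hx k _
      split_ifs with hk
      · exact hx k hk
      · trivial
    · intro hx k hk
      have := hx k (Finset.mem_range.1 (hn hk))
      rw [if_pos (by exact hk)] at this
      exact this
  rw [e, this]
  rw [← Finset.prod_subset hn]
  · exact Finset.prod_congr rfl fun k hk => by rw [if_pos hk]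
  · intro k _ hk
    rw [if_neg hk]; simp

/-- conditioning on an invariant event keeps the renewal structure -/
theorem rw_cond (hX : Measurable X) (hθ : Measurable θ)
    (h : Q.map (fun x => (X x, θ x)) = μ.prod Q) {E : Set T} (hE : MeasurableSet E)
    (hinv : θ ⁻¹' E = E) (h0 : Q E ≠ 0) :
    (Q[|E]).map (fun x => (X x, θ x)) = μ.prod (Q[|E]) := by
  have : IsProbabilityMeasure (Q[|E]) := cond_isProbabilityMeasure h0
  symm
  refine Measure.prod_eq fun B G hB hG => ?_
  rw [Measure.map_apply (by fun_prop) (hB.prod hG), cond_apply hE, cond_apply hE]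
  have : E ∩ (fun x => (X x, θ x)) ⁻¹' (B ×ˢ G) = X ⁻¹' B ∩ θ ⁻¹' (E ∩ G) := by
    conv_lhs => rw [← hinv]
    ext x; simp only [Set.mem_inter_iff, Set.mem_preimage, Set.mem_prod]; tauto
  rw [this, rw_apply hX hθ h hB (hE.inter hG)]
  ring

def rwL (X : T → ℝ) (θ : T → T) (x : T) : EReal :=
  limsup (fun n : ℕ => ((birkhoffSum θ X n x : ℝ) : EReal)) atTop

theorem rwL_eq (X : T → ℝ) (θ : T → T) (x : T) : rwL X θ x = X x + rwL X θ (θ x) := by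
  have h1 : rwL X θ x = limsup (fun n : ℕ => ((birkhoffSum θ X (n + 1) x : ℝ) : EReal)) atTop :=
    (limsup_nat_add _ 1).symm
  rw [h1]
  simp only [birkhoffSum_succ', EReal.coe_add]
  have hm : Monotone (fun y : EReal => (X x : EReal) + y) := fun a b hab => add_le_add le_rfl hab
  have hc : Continuous (fun y : EReal => (X x : EReal) + y) := by
    rw [continuous_iff_continuousAt]; intro y
    refine (EReal.continuousAt_add (p := ((X x : EReal), y)) ?_ ?_).comp
      (Continuous.continuousAt (by fun_prop)) <;> simp
  exact (hm.map_limsup_of_continuousAt _ hc.continuousAt).symm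

theorem rwL_meas (hX : Measurable X) (hθ : Measurable θ) : Measurable (rwL X θ) := by
  unfold rwL
  refine Measurable.limsup fun n => ?_
  have : Measurable (birkhoffSum θ X n) := by
    unfold birkhoffSum
    exact Finset.measurable_fun_sum _ fun k _ => hX.comp (hθ.iterate k)
  exact this.coe_real_ereal

theorem rw_zero_one (hX : Measurable X) (hθ : Measurable θ)
    (h : Q.map (fun x => (X x, θ x)) = μ.prod Q) :
    Q {x | rwL X θ x = ⊤} = 0 ∨ Q {x | rwL X θ x = ⊤} = 1 := by
  set E := {x | rwL X θ x = ⊤} with hEdef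
  have hE : MeasurableSet E := rwL_meas hX hθ (measurableSet_singleton ⊤)
  have hinv : θ ⁻¹' E = E := by
    ext x
    simp only [hEdef, Set.mem_preimage, Set.mem_ofPred_eq]
    rw [rwL_eq X θ x]
    induction rwL X θ (θ x) <;> simp
    exact EReal.coe_ne_top _
  by_cases h0 : Q E = 0
  · exact Or.inl h0
  right
  have : IsProbabilityMeasure (Q[|E]) := cond_isProbabilityMeasure h0
  have h1 := rw_law hX hθ (rw_cond hX hθ h hE hinv h0)
  rw [← rw_law hX hθ h] at h1
  have hm : Measurable (fun x (k : ℕ) => X (θ^[k] x)) :=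
    measurable_pi_lambda _ fun k => hX.comp (hθ.iterate k)
  let E' : Set (ℕ → ℝ) := {y | limsup (fun n : ℕ =>
    ((∑ k ∈ Finset.range n, y k : ℝ) : EReal)) atTop = ⊤}
  have hE' : MeasurableSet E' := by
    have : Measurable fun y : ℕ → ℝ => limsup (fun n : ℕ =>
        ((∑ k ∈ Finset.range n, y k : ℝ) : EReal)) atTop := by
      refine Measurable.limsup fun n => ?_
      exact (Finset.measurable_fun_sum _ fun k _ => measurable_pi_apply k).coe_real_ereal
    exact this (measurableSet_singleton ⊤)
  have e : (fun x (k : ℕ) => X (θ^[k] x)) ⁻¹' E' = E := rfl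
  have h2 := congrArg (fun m => m E') h1
  simp only [Measure.map_apply hm hE', e] at h2
  rw [← h2, cond_apply hE, Set.inter_self, ENNReal.inv_mul_cancel h0 (measure_ne_top _ _)]

theorem rw_trichotomy (hX : Measurable X) (hθ : Measurable θ)
    (h : Q.map (fun x => (X x, θ x)) = μ.prod Q) :
    (∀ᵐ r ∂μ, r = 0) ∨
    (∀ᵐ x ∂Q, Tendsto (fun n => birkhoffSum θ X n x) atTop atBot) ∨
    (∀ᵐ x ∂Q, ∀ C : ℝ, ∃ n, C < birkhoffSum θ X n x) := by
  by_cases hμ : ∀ᵐ r ∂μ, r = 0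
  · exact Or.inl hμ
  right
  set E := {x | rwL X θ x ≠ ⊤ ∧ rwL X θ x ≠ ⊥} with hEdef
  have hE : MeasurableSet E :=
    (rwL_meas hX hθ (measurableSet_singleton ⊤).compl).inter
      (rwL_meas hX hθ (measurableSet_singleton ⊥).compl)
  have hinv : θ ⁻¹' E = E := by
    ext x
    simp only [hEdef, Set.mem_preimage, Set.mem_ofPred_eq]
    rw [rwL_eq X θ x]
    induction rwL X θ (θ x) <;> simp [← EReal.coe_add]
  have hE0 : Q E = 0 := by
    by_contra h0
    have : IsProbabilityMeasure (Q[|E]) := cond_isProbabilityMeasure h0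
    apply hμ
    refine rw_coboundary hX hθ (rw_cond hX hθ h hE hinv h0) (fun x => (rwL X θ x).toReal)
      (rwL_meas hX hθ).ereal_toReal ?_
    have : ∀ᵐ x ∂Q[|E], x ∈ E := by
      exact ae_cond_mem hE
    filter_upwards [this] with x hx
    rw [← hinv] at hx
    rw [rwL_eq X θ x, EReal.toReal_add (by simp) (by simp) hx.1 hx.2, EReal.toReal_coe]
  have hE1 : ∀ᵐ x ∂Q, x ∉ E := measure_eq_zero_iff_ae_notMem.1 hE0
  rcases rw_zero_one hX hθ h with h1 | h1
  · left
    have h2 : ∀ᵐ x ∂Q, x ∉ {x | rwL X θ x = ⊤} := measure_eq_zero_iff_ae_notMem.1 h1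
    filter_upwards [hE1, h2] with x hx1 hx2
    have hb : rwL X θ x = ⊥ := by
      by_contra hb; exact hx1 ⟨hx2, hb⟩
    rw [tendsto_atBot]
    intro b
    have : limsup (fun n : ℕ => ((birkhoffSum θ X n x : ℝ) : EReal)) atTop < (b : EReal) := by
      change rwL X θ x < _
      rw [hb]; exact EReal.bot_lt_coe b
    filter_upwards [eventually_lt_of_limsup_lt this] with n hn
    exact (EReal.coe_lt_coe_iff.1 hn).le
  · right
    have h2 : ∀ᵐ x ∂Q, x ∈ {x | rwL X θ x = ⊤} := by
      exact (prob_compl_eq_zero_iff (μ := Q) (s := {x | rwL X θ x = ⊤})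
        (rwL_meas hX hθ (measurableSet_singleton ⊤))).2 h1
    filter_upwards [h2] with x hx C
    have : (C : EReal) < limsup (fun n : ℕ => ((birkhoffSum θ X n x : ℝ) : EReal)) atTop := by
      change _ < rwL X θ x
      rw [hx]; exact EReal.coe_lt_top C
    obtain ⟨n, hn⟩ := (frequently_lt_of_lt_limsup (by isBoundedDefault) this).exists
    exact ⟨n, EReal.coe_lt_coe_iff.1 hn⟩

theorem birkhoff_meas (hX : Measurable X) (hθ : Measurable θ) (n : ℕ) :
    Measurable (birkhoffSum θ X n) := by
  unfold birkhoffSum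
  exact Finset.measurable_fun_sum _ fun k _ => hX.comp (hθ.iterate k)

theorem rw_sup_step (hX : Measurable X) (hθ : Measurable θ)
    (h : Q.map (fun x => (X x, θ x)) = μ.prod Q) (W : T → EReal) (hW : Measurable W)
    (hWs : ∀ᵐ x ∂Q, ∀ c : ℝ, (c : EReal) < W (θ x) → ((X x + c : ℝ) : EReal) < W x) (a : ℝ)
    (N : ℕ) : ∀ c : ℝ, Q {x | ((-a : ℝ) : EReal) < W x} *
      Q {x | ∃ n ≤ N, c < birkhoffSum θ X n x} ≤ Q {x | ((c - a : ℝ) : EReal) < W x} := by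
  have triv : ∀ (N : ℕ) (c : ℝ), c < 0 → Q {x | ((-a : ℝ) : EReal) < W x} *
      Q {x | ∃ n ≤ N, c < birkhoffSum θ X n x} ≤ Q {x | ((c - a : ℝ) : EReal) < W x} := by
    intro N c hc
    calc _ ≤ Q {x | ((-a : ℝ) : EReal) < W x} * 1 := by gcongr; exact prob_le_one
      _ = Q {x | ((-a : ℝ) : EReal) < W x} := mul_one _
      _ ≤ _ := by
        refine measure_mono fun x hx => ?_
        rw [Set.mem_ofPred_eq] at hx ⊢
        refine lt_of_le_of_lt ?_ hx
        exact EReal.coe_le_coe_iff.2 (by linarith)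
  induction N with
  | zero =>
    intro c
    by_cases hc : c < 0
    · exact triv 0 c hc
    · have : {x | ∃ n ≤ 0, c < birkhoffSum θ X n x} = ∅ := by
        ext x; simp; exact not_lt.1 hc
      rw [this]; simp
  | succ N ih =>
    intro c
    by_cases hc : c < 0
    · exact triv _ c hc
    have e1 : {x | ∃ n ≤ N + 1, c < birkhoffSum θ X n x} ⊆ (fun x => (X x, θ x)) ⁻¹'
        {z | ∃ n ≤ N, c - z.1 < birkhoffSum θ X n z.2} := by
      rintro x ⟨n, hn, hx⟩
      cases n with
      | zero => simp at hx; exact absurd hx hc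
      | succ n =>
        rw [birkhoffSum_succ'] at hx
        exact ⟨n, by omega, by simp only; linarith⟩
    have m1 : MeasurableSet {z : ℝ × T | ∃ n ≤ N, c - z.1 < birkhoffSum θ X n z.2} := by
      have : {z : ℝ × T | ∃ n ≤ N, c - z.1 < birkhoffSum θ X n z.2} =
          ⋃ n, ⋃ (_ : n ≤ N), {z : ℝ × T | c - z.1 < birkhoffSum θ X n z.2} := by
        ext z; simp
      rw [this]
      refine MeasurableSet.iUnion fun n => MeasurableSet.iUnion fun _ => measurableSet_lt (by fun_prop) ?_
      exact (birkhoff_meas hX hθ n).comp measurable_snd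
    have m2 : MeasurableSet {z : ℝ × T | ((c - z.1 - a : ℝ) : EReal) < W z.2} := by
      refine measurableSet_lt ?_ (hW.comp measurable_snd)
      exact Measurable.coe_real_ereal (by fun_prop)
    have e2 : (fun x => (X x, θ x)) ⁻¹' {z | ((c - z.1 - a : ℝ) : EReal) < W z.2}
        ≤ᵐ[Q] {x | ((c - a : ℝ) : EReal) < W x} := by
      filter_upwards [hWs] with x hx hx2
      have := hx _ hx2
      have e : X x + (c - X x - a) = c - a := by ring
      rw [e] at this
      exact this
    calc Q {x | ((-a : ℝ) : EReal) < W x} * Q {x | ∃ n ≤ N + 1, c < birkhoffSum θ X n x}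
        ≤ Q {x | ((-a : ℝ) : EReal) < W x} * (μ.prod Q) {z | ∃ n ≤ N, c - z.1 < birkhoffSum θ X n z.2} := by
          rw [← h, Measure.map_apply (by fun_prop) m1]
          gcongr
      _ = ∫⁻ r, Q {x | ((-a : ℝ) : EReal) < W x} * Q {x | ∃ n ≤ N, c - r < birkhoffSum θ X n x} ∂μ := by
          rw [Measure.prod_apply m1, ← lintegral_const_mul _ (measurable_measure_prodMk_left m1)]
          rfl
      _ ≤ ∫⁻ r, Q {x | ((c - r - a : ℝ) : EReal) < W x} ∂μ := lintegral_mono fun r => ih (c - r)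
      _ = (μ.prod Q) {z | ((c - z.1 - a : ℝ) : EReal) < W z.2} := by
          rw [Measure.prod_apply m2]; rfl
      _ = Q ((fun x => (X x, θ x)) ⁻¹' {z | ((c - z.1 - a : ℝ) : EReal) < W z.2}) := by
          rw [← h, Measure.map_apply (by fun_prop) m2]
      _ ≤ _ := measure_mono_ae e2

theorem rw_sup (hX : Measurable X) (hθ : Measurable θ)
    (h : Q.map (fun x => (X x, θ x)) = μ.prod Q) (W : T → EReal) (hW : Measurable W)
    (hWs : ∀ᵐ x ∂Q, ∀ c : ℝ, (c : EReal) < W (θ x) → ((X x + c : ℝ) : EReal) < W x)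
    (hb : ∀ᵐ x ∂Q, W x ≠ ⊥) (ht : ∀ᵐ x ∂Q, W x ≠ ⊤) :
    ¬ ∀ᵐ x ∂Q, ∀ C : ℝ, ∃ n, C < birkhoffSum θ X n x := by
  intro hS
  -- choose a
  obtain ⟨a, ha⟩ : ∃ a : ℕ, Q {x | ((-(a : ℝ) : ℝ) : EReal) < W x} ≠ 0 := by
    by_contra hcon
    push Not at hcon
    have h1 : ∀ᵐ x ∂Q, ∀ a : ℕ, ¬ (((-(a : ℝ) : ℝ) : EReal) < W x) := by
      rw [ae_all_iff]; intro a
      exact measure_eq_zero_iff_ae_notMem.1 (hcon a)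
    have h2 : ∀ᵐ x ∂Q, False := by
      filter_upwards [h1, hb, ht] with x hx h3 h4
      lift W x to ℝ using ⟨h4, h3⟩ with w
      obtain ⟨n, hn⟩ := exists_nat_gt (-w)
      exact hx n (EReal.coe_lt_coe_iff.2 (by linarith))
    simp at h2
    exact IsProbabilityMeasure.ne_zero Q h2
  set q := Q {x | ((-(a : ℝ) : ℝ) : EReal) < W x}
  have hq : ∀ c : ℝ, q ≤ Q {x | ((c - a : ℝ) : EReal) < W x} := by
    intro c
    have h1 : Q (⋃ N : ℕ, {x | ∃ n ≤ N, c < birkhoffSum θ X n x}) = 1 := by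
      rw [← prob_compl_eq_zero_iff (MeasurableSet.iUnion fun N => ?_)]
      · have : ∀ᵐ x ∂Q, x ∈ (⋃ N : ℕ, {x | ∃ n ≤ N, c < birkhoffSum θ X n x}) := by
          filter_upwards [hS] with x hx
          obtain ⟨n, hn⟩ := hx c
          exact Set.mem_iUnion.2 ⟨n, n, le_rfl, hn⟩
        exact this
      · have : {x | ∃ n ≤ N, c < birkhoffSum θ X n x} =
          ⋃ n, ⋃ (_ : n ≤ N), {x | c < birkhoffSum θ X n x} := by
          ext z; simp
        rw [this]
        exact MeasurableSet.iUnion fun n => MeasurableSet.iUnion fun _ =>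
          measurableSet_lt measurable_const (birkhoff_meas hX hθ n)
    have hmono : Monotone fun N : ℕ => {x | ∃ n ≤ N, c < birkhoffSum θ X n x} := by
      rintro N N' hN x ⟨n, hn, hx⟩
      exact ⟨n, hn.trans hN, hx⟩
    have h2 := tendsto_measure_iUnion_atTop (μ := Q) hmono
    rw [h1] at h2
    have h3 := ENNReal.Tendsto.const_mul (a := q) h2 (Or.inl one_ne_zero)
    rw [mul_one] at h3
    exact le_of_tendsto' h3 fun N => rw_sup_step hX hθ h W hW hWs a N c
  have hanti : Antitone fun m : ℕ => {x | (((m : ℝ) - a : ℝ) : EReal) < W x} := by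
    intro m m' hm x hx
    rw [Set.mem_ofPred_eq] at hx ⊢
    refine lt_of_le_of_lt (EReal.coe_le_coe_iff.2 ?_) hx
    have : (m : ℝ) ≤ m' := by exact_mod_cast hm
    linarith
  have h4 := tendsto_measure_iInter_atTop (μ := Q)
    (fun m => (measurableSet_lt measurable_const hW).nullMeasurableSet) hanti
    ⟨0, measure_ne_top _ _⟩
  have h5 := ge_of_tendsto' h4 fun m => hq m
  have h6 : Q (⋂ m : ℕ, {x | (((m : ℝ) - a : ℝ) : EReal) < W x}) = 0 := by
    rw [measure_eq_zero_iff_ae_notMem]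
    filter_upwards [hb, ht] with x h3 h4 hx
    simp only [Set.mem_iInter, Set.mem_ofPred_eq] at hx
    lift W x to ℝ using ⟨h4, h3⟩ with w
    obtain ⟨n, hn⟩ := exists_nat_gt (w + a)
    have := EReal.coe_lt_coe_iff.1 (hx n)
    linarith
  rw [h6] at h5
  exact ha (le_antisymm h5 bot_le)

end RW
section PathSpace
set_option linter.unusedSectionVars false
variable {S : Type*} [MeasurableSpace S] [MeasurableSingletonClass S] [Countable S]
variable {Ω : Type*} [MeasurableSpace Ω]

abbrev PS (S : Type*) := ℕ → S × ℝ

def ppr {S : Type*} (n : ℕ) (x : PS S) : ℝ := ∏ k ∈ Finset.range n, (x k).2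

def pta {S : Type*} (i : S) : ℕ → PS S → ℕ
  | 0 => fun _ => 0
  | n + 1 => fun x => sInf {k | pta i n x < k ∧ (x k).1 = i}

def psh {S : Type*} (n : ℕ) (x : PS S) : PS S := fun k => x (n + k)

def ptrunc {S : Type*} (n : ℕ) (x : PS S) : PS S :=
  fun k => if k < n then x k else ((x n).1, 0)

def rect {S : Type*} (n : ℕ) (path : ℕ → S) (E : ℕ → Set ℝ) : Set (PS S) :=
  {x | (∀ k ≤ n, (x k).1 = path k) ∧ ∀ k < n, (x k).2 ∈ E k}

theorem mem_rect {S : Type*} {n : ℕ} {path : ℕ → S} {E : ℕ → Set ℝ} {x : PS S} :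
    x ∈ rect n path E ↔ (∀ k ≤ n, (x k).1 = path k) ∧ ∀ k < n, (x k).2 ∈ E k := Iff.rfl

def toPath (X : MMSetting S Ω) (ω : Ω) : PS S := fun k => (X.M k ω, X.A k ω)

theorem toPath_meas (X : MMSetting S Ω) : Measurable (toPath X) :=
  measurable_pi_lambda _ fun k => (X.measM k).prodMk (X.measA k)

def QL (X : MMSetting S Ω) (i : S) : Measure (PS S) := (X.P i).map (toPath X)

instance QL_prob (X : MMSetting S Ω) (i : S) : IsProbabilityMeasure (QL X i) := by
  have := X.prob i
  exact Measure.isProbabilityMeasure_map (toPath_meas X).aemeasurable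

theorem psh_meas (n : ℕ) : Measurable (psh n : PS S → PS S) :=
  measurable_pi_lambda _ fun k => measurable_pi_apply (n + k)

theorem ptrunc_meas (n : ℕ) : Measurable (ptrunc n : PS S → PS S) := by
  refine measurable_pi_lambda _ fun k => ?_
  unfold ptrunc
  split_ifs
  · exact measurable_pi_apply k
  · exact (measurable_fst.comp (measurable_pi_apply n)).prodMk measurable_const

theorem state_meas (k : ℕ) (i : S) : MeasurableSet {x : PS S | (x k).1 = i} :=
  (measurable_fst.comp (measurable_pi_apply k)) (measurableSet_singleton i)

theorem rect_meas (n : ℕ) (path : ℕ → S) {E : ℕ → Set ℝ} (hE : ∀ k, MeasurableSet (E k)) :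
    MeasurableSet (rect n path E) := by
  have : rect n path E = (⋂ k, ⋂ (_ : k ≤ n), {x : PS S | (x k).1 = path k}) ∩
      ⋂ k, ⋂ (_ : k < n), (fun x : PS S => (x k).2) ⁻¹' (E k) := by
    ext x; simp [mem_rect]
  rw [this]
  refine (MeasurableSet.iInter fun k => MeasurableSet.iInter fun _ => state_meas _ _).inter
    (MeasurableSet.iInter fun k => MeasurableSet.iInter fun _ =>
      (measurable_snd.comp (measurable_pi_apply k)) (hE k))

theorem QL_rect (X : MMSetting S Ω) (i : S) (n : ℕ) (path : ℕ → S) (E : ℕ → Set ℝ)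
    (h0 : path 0 = i) (hE : ∀ k, MeasurableSet (E k)) :
    QL X i (rect n path E) = ∏ k ∈ Finset.range n,
      (X.p (path k) (path (k + 1)) * X.K (path k) (path (k + 1)) (E k ×ˢ Set.univ)) := by
  rw [QL, Measure.map_apply (toPath_meas X) (rect_meas n path hE)]
  have := X.modulated i n path (fun k => E k ×ˢ Set.univ) h0
    (fun k => (hE k).prod MeasurableSet.univ)
  rw [X.chain i n path h0, ← Finset.prod_mul_distrib] at this
  rw [← this]
  congr 1
  ext ω
  simp [mem_rect, toPath]

theorem QL_start (X : MMSetting S Ω) (i : S) : ∀ᵐ x ∂QL X i, (x 0).1 = i := by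
  have := X.prob i
  rw [QL, ae_map_iff (toPath_meas X).aemeasurable (state_meas 0 i)]
  have h := X.start i
  exact (prob_compl_eq_zero_iff (μ := X.P i) (s := {ω | X.M 0 ω = i})
    ((X.measM 0) (measurableSet_singleton i))).2 h

theorem QL_rect_zero (X : MMSetting S Ω) (i : S) (n : ℕ) (path : ℕ → S) (E : ℕ → Set ℝ)
    (h0 : path 0 ≠ i) : QL X i (rect n path E) = 0 := by
  rw [measure_eq_zero_iff_ae_notMem]
  filter_upwards [QL_start X i] with x hx hr
  exact h0 ((hr.1 0 (Nat.zero_le _)).symm.trans hx)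

theorem rect_ext {ν₁ ν₂ : Measure (PS S)} [IsFiniteMeasure ν₁] [IsFiniteMeasure ν₂] (n₀ : ℕ)
    (h : ∀ m ≥ n₀, ∀ (path : ℕ → S) (E : ℕ → Set ℝ), (∀ k, MeasurableSet (E k)) →
      ν₁ (rect m path E) = ν₂ (rect m path E)) : ν₁ = ν₂ := by
  classical
  have key : ∀ (s : Finset ℕ) (t : ℕ → Set (S × ℝ)), (∀ i, MeasurableSet (t i)) →
      ν₁ (Set.pi s t) = ν₂ (Set.pi s t) := by
    intro s t ht
    obtain ⟨m₀, hm₀⟩ : ∃ n, s ⊆ Finset.range n := s.exists_nat_subset_range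
    set m := max m₀ n₀
    let ex : (Fin (m + 1) → S) → ℕ → S := fun q k =>
      if hk : k < m + 1 then q ⟨k, hk⟩ else q 0
    let Ee : (Fin (m + 1) → S) → ℕ → Set ℝ := fun q k =>
      if k ∈ s then {a | (ex q k, a) ∈ t k} else Set.univ
    have hEe : ∀ q k, MeasurableSet (Ee q k) := by
      intro q k
      simp only [Ee]
      split_ifs
      · exact measurable_prodMk_left (ht k)
      · exact MeasurableSet.univ
    have hU : Set.pi s t = ⋃ q : Fin (m + 1) → S, rect m (ex q) (Ee q) := by
      ext x
      simp only [Set.mem_pi, Set.mem_iUnion, mem_rect]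
      constructor
      · intro hx
        have e : ∀ k ≤ m, ex (fun k : Fin (m + 1) => (x k).1) k = (x k).1 := by
          intro k hk
          simp only [ex]
          rw [dif_pos (by omega)]
        refine ⟨fun k => (x k).1, fun k hk => (e k hk).symm, fun k hk => ?_⟩
        simp only [Ee]
        split_ifs with hks
        · rw [Set.mem_ofPred_eq, e k hk.le]
          exact hx k hks
        · trivial
      · rintro ⟨q, h1, h2⟩ k hk
        have hkm : k < m := lt_of_lt_of_le (Finset.mem_range.1 (hm₀ hk)) (le_max_left _ _)
        have h3 := h2 k hkm
        simp only [Ee] at h3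
        rw [if_pos (by exact hk), Set.mem_ofPred_eq, ← h1 k hkm.le] at h3
        exact h3
    have hd : Pairwise (Function.onFun Disjoint fun q : Fin (m + 1) → S => rect m (ex q) (Ee q)) := by
      intro q q' hqq
      rw [Function.onFun, Set.disjoint_left]
      intro x hx hx'
      apply hqq
      funext k
      have h1 := hx.1 k (by omega)
      have h2 := hx'.1 k (by omega)
      simp only [ex] at h1 h2
      rw [dif_pos k.2] at h1 h2
      exact h1.symm.trans h2
    rw [hU, measure_iUnion hd fun q => rect_meas _ _ (hEe q),
      measure_iUnion hd fun q => rect_meas _ _ (hEe q)]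
    exact tsum_congr fun q => h m (le_max_right _ _) _ _ (hEe q)
  refine ext_of_generate_finite _ generateFrom_squareCylinders.symm
    (isPiSystem_squareCylinders (fun _ => MeasurableSpace.isPiSystem_measurableSet)
      (fun _ => by simp)) ?_ ?_
  · rintro _ ⟨s, t, ht, rfl⟩
    exact key s t fun i => ht i trivial
  · have := key ∅ (fun _ => Set.univ) (fun _ => MeasurableSet.univ)
    simpa using this

theorem markov_rect (X : MMSetting S Ω) (i : S) (n : ℕ) (path : ℕ → S) (E : ℕ → Set ℝ)
    (hE : ∀ k, MeasurableSet (E k)) {G : Set (PS S)} (hG : MeasurableSet G) :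
    QL X i (rect n path E ∩ psh n ⁻¹' G) = QL X i (rect n path E) * QL X (path n) G := by
  by_cases h0 : path 0 = i
  swap
  · rw [QL_rect_zero X i n path E h0, zero_mul]
    exact measure_mono_null Set.inter_subset_left (QL_rect_zero X i n path E h0)
  have hF := rect_meas n path hE
  have main : ((QL X i).restrict (rect n path E)).map (psh n)
      = (QL X i (rect n path E)) • QL X (path n) := by
    have : IsFiniteMeasure ((QL X i (rect n path E)) • QL X (path n)) :=
      Measure.smul_finite _ (measure_ne_top _ _)
    refine rect_ext 0 fun m _ q D hD => ?_
    rw [Measure.map_apply (psh_meas n) (rect_meas m q hD),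
      Measure.restrict_apply (psh_meas n (rect_meas m q hD)), Measure.smul_apply, smul_eq_mul]
    by_cases hq : q 0 = path n
    swap
    · rw [QL_rect_zero X _ m q D hq, mul_zero]
      have : psh n ⁻¹' rect m q D ∩ rect n path E = ∅ := by
        ext x
        simp only [Set.mem_inter_iff, Set.mem_preimage, Set.mem_empty_iff_false, iff_false, not_and]
        intro h1 h2
        have h3 := h1.1 0 (Nat.zero_le _)
        have h4 := h2.1 n le_rfl
        simp only [psh, add_zero] at h3
        exact hq (h3.symm.trans h4)
      rw [this, measure_empty]
    have e : psh n ⁻¹' rect m q D ∩ rect n path E =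
        rect (n + m) (fun k => if k ≤ n then path k else q (k - n))
          (fun k => if k < n then E k else D (k - n)) := by
      ext x
      simp only [Set.mem_inter_iff, Set.mem_preimage, mem_rect, psh]
      constructor
      · rintro ⟨⟨h1, h2⟩, h3, h4⟩
        refine ⟨fun k hk => ?_, fun k hk => ?_⟩
        · split_ifs with hkn
          · exact h3 k hkn
          · have := h1 (k - n) (by omega)
            rwa [show n + (k - n) = k by omega] at this
        · split_ifs with hkn
          · exact h4 k hkn
          · have := h2 (k - n) (by omega)
            rwa [show n + (k - n) = k by omega] at this
      · rintro ⟨h1, h2⟩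
        refine ⟨⟨fun k hk => ?_, fun k hk => ?_⟩, fun k hk => ?_, fun k hk => ?_⟩
        · have := h1 (n + k) (by omega)
          by_cases hk0 : k = 0
          · subst hk0
            simpa [hq] using this
          · rwa [if_neg (by omega), show n + k - n = k by omega] at this
        · have := h2 (n + k) (by omega)
          rwa [if_neg (by omega), show n + k - n = k by omega] at this
        · have := h1 k (by omega)
          rwa [if_pos hk] at this
        · have := h2 k (by omega)
          rwa [if_pos hk] at this
    rw [e, QL_rect X i (n + m) _ _ (by simpa using h0), QL_rect X i n path E h0 hE,
      QL_rect X (path n) m q D hq hD, Finset.prod_range_add]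
    · congr 1
      · refine Finset.prod_congr rfl fun k hk => ?_
        have hk := Finset.mem_range.1 hk
        simp only [if_pos hk, if_pos hk.le, if_pos (show k + 1 ≤ n by omega)]
      · refine Finset.prod_congr rfl fun k hk => ?_
        have e1 : (if n + k ≤ n then path (n + k) else q (n + k - n)) = q k := by
          by_cases hk0 : k = 0
          · subst hk0; simp [hq]
          · rw [if_neg (by omega), show n + k - n = k by omega]
        have e2 : (if n + k + 1 ≤ n then path (n + k + 1) else q (n + k + 1 - n)) = q (k + 1) := by
          rw [if_neg (by omega), show n + k + 1 - n = k + 1 by omega]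
        have e3 : (if n + k < n then E (n + k) else D (n + k - n)) = D k := by
          rw [if_neg (by omega), show n + k - n = k by omega]
        simp only [e1, e2, e3]
    · intro k
      split_ifs
      · exact hE k
      · exact hD _
  have := congrArg (fun m => m G) main
  simp only [Measure.smul_apply, smul_eq_mul] at this
  rw [Measure.map_apply (psh_meas n) hG, Measure.restrict_apply (psh_meas n hG)] at this
  rw [Set.inter_comm, this]

/-- `F` is determined by the path up to time `n`. -/
def UpTo {S : Type*} (n : ℕ) (F : Set (PS S)) : Prop :=
  ∀ x y : PS S, (∀ k < n, x k = y k) → (x n).1 = (y n).1 → (x ∈ F ↔ y ∈ F)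

theorem markov (X : MMSetting S Ω) (i j : S) (n : ℕ) {F : Set (PS S)} (hF : MeasurableSet F)
    (hFn : UpTo n F) {G : Set (PS S)} (hG : MeasurableSet G) :
    QL X i (F ∩ {x | (x n).1 = j} ∩ psh n ⁻¹' G)
      = QL X i (F ∩ {x | (x n).1 = j}) * QL X j G := by
  have hS := state_meas (S := S) n j
  have main : ((QL X i).restrict ({x | (x n).1 = j} ∩ psh n ⁻¹' G)).map (ptrunc n)
      = QL X j G • ((QL X i).restrict {x | (x n).1 = j}).map (ptrunc n) := by
    have : IsFiniteMeasure (QL X j G • ((QL X i).restrict {x | (x n).1 = j}).map (ptrunc n)) :=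
      Measure.smul_finite _ (measure_ne_top _ _)
    refine rect_ext n fun m hm path E hE => ?_
    have hR := ptrunc_meas n (rect_meas m path hE)
    rw [Measure.smul_apply, smul_eq_mul, Measure.map_apply (ptrunc_meas n) (rect_meas m path hE),
      Measure.map_apply (ptrunc_meas n) (rect_meas m path hE), Measure.restrict_apply hR,
      Measure.restrict_apply hR]
    by_cases hc : (∀ k, n ≤ k → k ≤ m → path k = path n) ∧ (∀ k, n ≤ k → k < m → (0 : ℝ) ∈ E k)
    · have e : ptrunc n ⁻¹' rect m path E = rect n path E := by
        ext x
        simp only [Set.mem_preimage, mem_rect, ptrunc]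
        constructor
        · rintro ⟨h1, h2⟩
          refine ⟨fun k hk => ?_, fun k hk => ?_⟩
          · have := h1 k (by omega)
            split_ifs at this with hkn
            · exact this
            · have : k = n := by omega
              subst this; assumption
          · have := h2 k (by omega)
            rwa [if_pos hk] at this
        · rintro ⟨h1, h2⟩
          refine ⟨fun k hk => ?_, fun k hk => ?_⟩
          · split_ifs with hkn
            · exact h1 k hkn.le
            · rw [hc.1 k (by omega) hk]; exact h1 n le_rfl
          · split_ifs with hkn
            · exact h2 k hkn
            · exact hc.2 k (by omega) hk
      rw [e]
      by_cases hj : path n = j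
      · have e1 : rect n path E ∩ {x | (x n).1 = j} = rect n path E := by
          rw [Set.inter_eq_left]
          intro x hx
          exact (hx.1 n le_rfl).trans hj
        rw [← Set.inter_assoc, e1, markov_rect X i n path E hE hG, hj, mul_comm]
      · have e1 : rect n path E ∩ {x | (x n).1 = j} = ∅ := by
          ext x
          simp only [Set.mem_inter_iff, Set.mem_empty_iff_false, iff_false, not_and]
          intro hx hx2
          exact hj ((hx.1 n le_rfl).symm.trans hx2)
        rw [← Set.inter_assoc, e1]; simp
    · have e : ptrunc n ⁻¹' rect m path E = ∅ := by
        ext x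
        simp only [Set.mem_preimage, mem_rect, ptrunc, Set.mem_empty_iff_false, iff_false]
        rintro ⟨h1, h2⟩
        apply hc
        have h3 := h1 n hm
        simp only [lt_irrefl, if_false] at h3
        refine ⟨fun k hk hkm => ?_, fun k hk hkm => ?_⟩
        · have := h1 k hkm
          rw [if_neg (by omega)] at this
          exact this.symm.trans h3
        · have := h2 k hkm
          rwa [if_neg (by omega)] at this
      rw [e]; simp
  have e : ptrunc n ⁻¹' F = F := by
    ext x
    rw [Set.mem_preimage]
    refine hFn _ _ (fun k hk => ?_) ?_ <;> simp [ptrunc]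
    intro h; omega
  have := congrArg (fun m => m F) main
  simp only [Measure.smul_apply, smul_eq_mul] at this
  have hR := ptrunc_meas n hF
  rw [Measure.map_apply (ptrunc_meas n) hF, Measure.map_apply (ptrunc_meas n) hF,
    Measure.restrict_apply hR, Measure.restrict_apply hR, e] at this
  rw [Set.inter_assoc, this, mul_comm]

theorem upTo_univ (n : ℕ) : UpTo n (Set.univ : Set (PS S)) := fun _ _ _ _ => by simp

theorem QL_null (X : MMSetting S Ω) {G : Set (PS S)} (hG : MeasurableSet G)
    (h : ∀ k, QL X k G = 0) (j : S) (n : ℕ) : QL X j (psh n ⁻¹' G) = 0 := by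
  have : psh n ⁻¹' G ⊆ ⋃ k : S, (Set.univ ∩ {x : PS S | (x n).1 = k} ∩ psh n ⁻¹' G) := by
    intro x hx
    rw [Set.mem_iUnion]
    exact ⟨(x n).1, ⟨trivial, rfl⟩, hx⟩
  refine measure_mono_null this (measure_iUnion_null fun k => ?_)
  rw [markov X j k n MeasurableSet.univ (upTo_univ n) hG, h k, mul_zero]

theorem QL_irred (X : MMSetting S Ω) (i j : S) : ∃ n, QL X i {x | (x n).1 = j} ≠ 0 := by
  obtain ⟨n, hn⟩ := X.irreducible i j
  refine ⟨n, ?_⟩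
  rw [QL, Measure.map_apply (toPath_meas X) (state_meas n j)]
  exact hn.ne'

/-- infinitely many visits to `i` -/
def Rec {S : Type*} (i : S) (x : PS S) : Prop := ∀ m, ∃ k, m < k ∧ (x k).1 = i

theorem later_meas (i : S) (m : ℕ) : MeasurableSet {x : PS S | ∃ k, m < k ∧ (x k).1 = i} := by
  have : {x : PS S | ∃ k, m < k ∧ (x k).1 = i} = ⋃ k, ⋃ (_ : m < k), {x : PS S | (x k).1 = i} := by
    ext x; simp
  rw [this]
  exact MeasurableSet.iUnion fun k => MeasurableSet.iUnion fun _ => state_meas k i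

theorem Rec_meas (i : S) : MeasurableSet {x : PS S | Rec i x} := by
  have : {x : PS S | Rec i x} = ⋂ m, {x : PS S | ∃ k, m < k ∧ (x k).1 = i} := by
    ext x; simp [Rec]
  rw [this]
  exact MeasurableSet.iInter fun m => later_meas i m

theorem Rec_shift {S : Type*} {i : S} {x : PS S} (h : Rec i x) (n : ℕ) : Rec i (psh n x) := by
  intro m
  obtain ⟨k, hk, hx⟩ := h (n + m)
  exact ⟨k - n, by omega, by simp only [psh]; rwa [show n + (k - n) = k by omega]⟩

theorem QL_rec_self (X : MMSetting S Ω) (i : S) : ∀ᵐ x ∂QL X i, Rec i x := by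
  have := X.prob i
  have hV : QL X i {x | ∃ k, 0 < k ∧ (x k).1 = i}ᶜ = 0 := by
    rw [prob_compl_eq_zero_iff (later_meas i 0), QL,
      Measure.map_apply (toPath_meas X) (later_meas i 0)]
    exact X.recurrent i
  have h1 : ∀ᵐ x ∂QL X i, ∀ m, (x m).1 = i → ∃ k, m < k ∧ (x k).1 = i := by
    rw [ae_all_iff]; intro m
    have h2 := markov X i i m MeasurableSet.univ (upTo_univ m) (later_meas i 0).compl
    rw [hV, mul_zero] at h2
    filter_upwards [measure_eq_zero_iff_ae_notMem.1 h2] with x hx hxm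
    by_contra hcon
    apply hx
    refine ⟨⟨trivial, hxm⟩, ?_⟩
    rintro ⟨k, hk, hk2⟩
    exact hcon ⟨m + k, by omega, hk2⟩
  filter_upwards [h1, QL_start X i] with x hx h0 m
  induction m with
  | zero => exact hx 0 h0
  | succ m ih =>
    obtain ⟨k, hk, hxk⟩ := ih
    obtain ⟨l, hl, hxl⟩ := hx k hxk
    exact ⟨l, by omega, hxl⟩

theorem QL_rec (X : MMSetting S Ω) (i j : S) : ∀ᵐ x ∂QL X j, Rec i x := by
  obtain ⟨n, hn⟩ := QL_irred X i j
  have h2 := markov X i j n MeasurableSet.univ (upTo_univ n) (Rec_meas i).compl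
  have h3 : QL X i (Set.univ ∩ {x | (x n).1 = j} ∩ psh n ⁻¹' {x : PS S | Rec i x}ᶜ) = 0 := by
    rw [measure_eq_zero_iff_ae_notMem]
    filter_upwards [QL_rec_self X i] with x hx hx2
    exact hx2.2 (Rec_shift hx n)
  rw [h3, Set.univ_inter] at h2
  rcases mul_eq_zero.1 h2.symm with h | h
  · exact absurd h hn
  · exact h

theorem ae_Pπ_iff (X : MMSetting S Ω) (p : Ω → Prop) :
    (∀ᵐ ω ∂X.Pπ, p ω) ↔ ∀ j, ∀ᵐ ω ∂X.P j, p ω := by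
  rw [MMSetting.Pπ, Measure.ae_sum_iff]
  refine forall_congr' fun j => ?_
  rw [Measure.ae_ennreal_smul_measure_iff (X.πpos j).ne']

theorem QL_ne (X : MMSetting S Ω) (hA : X.Pπ {ω | X.A 0 ω = 0} = 0) (j : S) :
    ∀ᵐ x ∂QL X j, ∀ k, (x k).2 ≠ 0 := by
  have h1 := (ae_Pπ_iff X _).1 (measure_eq_zero_iff_ae_notMem.1 hA)
  have hm : MeasurableSet {x : PS S | (x 0).2 = 0} :=
    (measurable_snd.comp (measurable_pi_apply 0)) (measurableSet_singleton 0)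
  have h2 : ∀ k, QL X k {x : PS S | (x 0).2 = 0} = 0 := by
    intro k
    rw [QL, Measure.map_apply (toPath_meas X) hm]
    exact measure_eq_zero_iff_ae_notMem.2 (h1 k)
  rw [ae_all_iff]; intro k
  exact measure_eq_zero_iff_ae_notMem.1 (QL_null X hm h2 j k)

theorem ppr_add {S : Type*} (n m : ℕ) (x : PS S) : ppr (n + m) x = ppr n x * ppr m (psh n x) := by
  unfold ppr psh
  rw [Finset.prod_range_add]

theorem ppr_ne {S : Type*} {x : PS S} (h : ∀ k, (x k).2 ≠ 0) (n : ℕ) : ppr n x ≠ 0 :=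
  Finset.prod_ne_zero_iff.2 fun k _ => h k

theorem pta_spec {S : Type*} {i : S} {x : PS S} (h : Rec i x) (n : ℕ) :
    pta i n x < pta i (n + 1) x ∧ (x (pta i (n + 1) x)).1 = i :=
  Nat.sInf_mem (s := {k | pta i n x < k ∧ (x k).1 = i}) (h (pta i n x))

theorem pta_le {S : Type*} {i : S} {x : PS S} {n k : ℕ} (h : pta i n x < k) (hk : (x k).1 = i) :
    pta i (n + 1) x ≤ k := Nat.sInf_le (s := {k | pta i n x < k ∧ (x k).1 = i}) ⟨h, hk⟩

theorem pta_pos {S : Type*} {i : S} {x : PS S} (h : Rec i x) (n : ℕ) : 0 < pta i (n + 1) x :=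
  lt_of_le_of_lt (Nat.zero_le _) (pta_spec h n).1

theorem pta_ge {S : Type*} {i : S} {x : PS S} (h : Rec i x) (n : ℕ) : n ≤ pta i n x := by
  induction n with
  | zero => exact Nat.zero_le _
  | succ n ih => have := (pta_spec h n).1; omega

theorem pta_shift {S : Type*} {i : S} {x : PS S} (h : Rec i x) (n : ℕ) :
    pta i (n + 1) x = pta i 1 x + pta i n (psh (pta i 1 x) x) := by
  have h' := Rec_shift h (pta i 1 x)
  induction n with
  | zero => rfl
  | succ n ih =>
    have a := pta_spec h' n
    have b := pta_spec h (n + 1)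
    have c := (pta_spec h 0).1
    apply le_antisymm
    · exact pta_le (by omega) a.2
    · have h1 : pta i (n + 1) (psh (pta i 1 x) x) ≤ pta i (n + 1 + 1) x - pta i 1 x := by
        refine pta_le (by omega) ?_
        simp only [psh]
        rw [show pta i 1 x + (pta i (n + 1 + 1) x - pta i 1 x) = pta i (n + 1 + 1) x by omega]
        exact b.2
      omega

theorem pta_visit {S : Type*} {i : S} {x : PS S} (h : Rec i x) {k : ℕ} (hk : 0 < k)
    (hx : (x k).1 = i) : ∃ n, pta i (n + 1) x = k := by
  classical
  have hex : ∃ n, k ≤ pta i n x := ⟨k, pta_ge h k⟩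
  have h1 := Nat.find_spec hex
  have h2 := fun m => Nat.find_min (m := m) hex
  cases hn : Nat.find hex with
  | zero => rw [hn] at h1; simp only [pta] at h1; omega
  | succ n =>
    rw [hn] at h1 h2
    have := h2 n (by omega)
    exact ⟨n, le_antisymm (pta_le (by omega) hx) h1⟩

theorem pta_one_eq {S : Type*} {i : S} {x : PS S} {n : ℕ} (hn : 0 < n) :
    pta i 1 x = n ↔ (x n).1 = i ∧ ∀ k, 0 < k → k < n → (x k).1 ≠ i := by
  constructor
  · intro h
    have hne : {k | pta i 0 x < k ∧ (x k).1 = i}.Nonempty := by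
      by_contra hcon
      rw [Set.not_nonempty_iff_eq_empty] at hcon
      have : pta i 1 x = 0 := by simp only [pta] at hcon ⊢; rw [hcon]; exact Nat.sInf_empty
      omega
    have h1 : pta i 1 x ∈ {k | pta i 0 x < k ∧ (x k).1 = i} := Nat.sInf_mem hne
    refine ⟨h ▸ h1.2, fun k hk hkn hx => ?_⟩
    have := pta_le (n := 0) (i := i) (x := x) hk hx
    simp only [zero_add] at this
    omega
  · rintro ⟨h1, h2⟩
    apply le_antisymm (pta_le (n := 0) hn h1)
    by_contra hcon
    have hm : pta i 1 x ∈ {k | pta i 0 x < k ∧ (x k).1 = i} := Nat.sInf_mem ⟨n, hn, h1⟩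
    exact h2 _ hm.1 (not_le.1 hcon) hm.2

theorem sInf_meas {T : Type*} [MeasurableSpace T] (p : ℕ → T → Prop)
    (hp : ∀ k, MeasurableSet {x | p k x}) : Measurable fun x => sInf {k | p k x} := by
  classical
  have hm : MeasurableSet {x | ∃ k, p k x} := by
    have : {x | ∃ k, p k x} = ⋃ k, {x | p k x} := by ext; simp
    rw [this]; exact MeasurableSet.iUnion hp
  refine measurable_to_countable' fun n => ?_
  have : (fun x => sInf {k | p k x}) ⁻¹' {n} =
      ({x | p n x} ∩ ⋂ k, ⋂ (_ : k < n), {x | p k x}ᶜ) ∪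
        (if n = 0 then {x | ∃ k, p k x}ᶜ else ∅) := by
    ext x
    simp only [Set.mem_preimage, Set.mem_singleton_iff, Set.mem_union, Set.mem_inter_iff,
      Set.mem_iInter, Set.mem_compl_iff, Set.mem_ofPred_eq]
    by_cases hne : ∃ k, p k x
    · have h1 : p (sInf {k | p k x}) x := Nat.sInf_mem (s := {k | p k x}) hne
      constructor
      · rintro rfl
        exact Or.inl ⟨h1, fun k hk => Nat.notMem_of_lt_sInf (s := {k | p k x}) hk⟩
      · rintro (⟨ha, hb⟩ | h)
        · apply le_antisymm (Nat.sInf_le ha)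
          by_contra hc
          exact hb _ (not_le.1 hc) h1
        · split_ifs at h
          · exact absurd hne h
          · exact absurd h (by simp)
    · have he : {k | p k x} = ∅ := by
        ext k; simp; exact fun hk => hne ⟨k, hk⟩
      rw [he, Nat.sInf_empty]
      constructor
      · intro h
        right
        rw [if_pos h.symm]
        exact hne
      · rintro (⟨ha, _⟩ | h)
        · exact absurd ⟨n, ha⟩ hne
        · split_ifs at h with h0
          · exact h0.symm
          · exact absurd h (by simp)
  rw [this]
  refine MeasurableSet.union ((hp n).inter
    (MeasurableSet.iInter fun k => MeasurableSet.iInter fun _ => (hp k).compl)) ?_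
  split_ifs
  · exact hm.compl
  · exact MeasurableSet.empty

theorem pta_meas (i : S) (n : ℕ) : Measurable (pta i n : PS S → ℕ) := by
  induction n with
  | zero => exact measurable_const
  | succ n ih =>
    refine sInf_meas (fun k x => pta i n x < k ∧ (x k).1 = i) fun k => ?_
    exact (measurableSet_lt ih measurable_const).inter (state_meas k i)

theorem ppr_meas (n : ℕ) : Measurable (ppr n : PS S → ℝ) := by
  unfold ppr
  exact Finset.measurable_fun_prod _ fun k _ => measurable_snd.comp (measurable_pi_apply k)

theorem ppr_pta_meas (i : S) (n : ℕ) : Measurable fun x : PS S => ppr (pta i n x) x := by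
  have : Measurable fun z : ℕ × PS S => ppr z.1 z.2 :=
    measurable_from_prod_countable_right fun n => ppr_meas n
  exact this.comp ((pta_meas i n).prodMk measurable_id)

/-- log of the product over the first cycle -/
def cX {S : Type*} (i : S) (x : PS S) : ℝ := Real.log |ppr (pta i 1 x) x|
/-- the path after the first return -/
def cθ {S : Type*} (i : S) (x : PS S) : PS S := psh (pta i 1 x) x

theorem cX_meas (i : S) : Measurable (cX i : PS S → ℝ) := by
  unfold cX
  have := ppr_pta_meas i 1
  exact Real.measurable_log.comp this.abs

theorem cθ_meas (i : S) : Measurable (cθ i : PS S → PS S) := by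
  have : Measurable fun z : ℕ × PS S => psh z.1 z.2 :=
    measurable_from_prod_countable_right fun n => psh_meas n
  exact this.comp ((pta_meas i 1).prodMk measurable_id)

theorem cycle_apply (X : MMSetting S Ω) (i j : S) {B : Set ℝ} (hB : MeasurableSet B) :
    ∃ c : ℝ≥0∞, ∀ G : Set (PS S), MeasurableSet G →
      QL X j (cX i ⁻¹' B ∩ cθ i ⁻¹' G) = c * QL X i G := by
  let F : ℕ → Set (PS S) := fun n => {x | 0 < n ∧ pta i 1 x = n ∧ Real.log |ppr n x| ∈ B}
  have hF : ∀ n, MeasurableSet (F n) := fun n => by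
    have : F n = {x : PS S | 0 < n} ∩ (pta i 1 ⁻¹' {n} ∩ (fun x : PS S => Real.log |ppr n x|) ⁻¹' B) := by
      ext x; simp [F]
    rw [this]
    exact (MeasurableSet.const _).inter (((pta_meas i 1) (measurableSet_singleton n)).inter
      ((Real.measurable_log.comp (ppr_meas n).abs) hB))
  have hU : ∀ n, UpTo n (F n) := by
    intro n x y h1 h2
    simp only [F, Set.mem_ofPred_eq]
    refine and_congr_right fun hn => ?_
    have hp : ppr n x = ppr n y := by
      unfold ppr
      exact Finset.prod_congr rfl fun k hk => by rw [h1 k (Finset.mem_range.1 hk)]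
    rw [pta_one_eq hn, pta_one_eq hn, hp, h2]
    refine and_congr_left fun _ => and_congr_right fun _ => ?_
    refine forall_congr' fun k => forall_congr' fun _ => forall_congr' fun hk => ?_
    rw [h1 k hk]
  refine ⟨∑' n, QL X j (F n ∩ {x | (x n).1 = i}), fun G hG => ?_⟩
  have e : (cX i ⁻¹' B ∩ cθ i ⁻¹' G : Set (PS S)) =ᵐ[QL X j]
      ⋃ n, (F n ∩ {x | (x n).1 = i} ∩ psh n ⁻¹' G : Set (PS S)) := by
    rw [Filter.eventuallyEq_set]
    filter_upwards [QL_rec X i j] with x hx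
    simp only [Set.mem_iUnion, Set.mem_inter_iff, Set.mem_preimage, F, Set.mem_ofPred_eq]
    constructor
    · rintro ⟨h1, h2⟩
      exact ⟨pta i 1 x, ⟨⟨pta_pos hx 0, rfl, h1⟩, (pta_spec hx 0).2⟩, h2⟩
    · rintro ⟨n, ⟨⟨_, h1, h2⟩, _⟩, h4⟩
      subst h1
      exact ⟨h2, h4⟩
  rw [measure_congr e, measure_iUnion, ← ENNReal.tsum_mul_right]
  · exact tsum_congr fun n => markov X j i n (hF n) (hU n) hG
  · intro n m hnm
    rw [Function.onFun, Set.disjoint_left]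
    intro x hx hy
    exact hnm (hx.1.1.2.1.symm.trans hy.1.1.2.1)
  · intro n
    exact ((hF n).inter (state_meas n i)).inter (psh_meas n hG)

theorem cycle_renewal (X : MMSetting S Ω) (i j : S) :
    (QL X j).map (fun x => (cX i x, cθ i x)) = ((QL X j).map (cX i)).prod (QL X i) := by
  symm
  refine Measure.prod_eq fun B G hB hG => ?_
  obtain ⟨c, hc⟩ := cycle_apply X i j hB
  rw [Measure.map_apply ((cX_meas i).prodMk (cθ_meas i)) (hB.prod hG),
    Measure.map_apply (cX_meas i) hB]
  have h1 := hc Set.univ MeasurableSet.univ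
  simp only [Set.preimage_univ, Set.inter_univ, measure_univ, mul_one] at h1
  rw [h1, ← hc G hG]
  rfl

instance law_prob (X : MMSetting S Ω) (i j : S) : IsProbabilityMeasure ((QL X j).map (cX i)) :=
  Measure.isProbabilityMeasure_map (cX_meas i).aemeasurable

theorem cycle_map (X : MMSetting S Ω) (i j : S) : (QL X j).map (cθ i) = QL X i := by
  have h := congrArg (Measure.map Prod.snd) (cycle_renewal X i j)
  rw [Measure.map_map measurable_snd ((cX_meas i).prodMk (cθ_meas i))] at h
  rw [Measure.map_snd_prod, measure_univ, one_smul] at h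
  exact h

theorem cycle_ae (X : MMSetting S Ω) (i j : S) {p : PS S → Prop} (h : ∀ᵐ x ∂QL X i, p x) :
    ∀ᵐ x ∂QL X j, p (cθ i x) := by
  rw [← cycle_map X i j] at h
  exact ae_of_ae_map (cθ_meas i).aemeasurable h

theorem cycle_log {S : Type*} {i : S} {x : PS S} (h : Rec i x) (hn : ∀ k, (x k).2 ≠ 0) (n : ℕ) :
    birkhoffSum (cθ i) (cX i) n x = Real.log |ppr (pta i n x) x| := by
  induction n generalizing x with
  | zero => simp [pta, ppr]
  | succ n ih =>
    have hn' : ∀ k, (psh (pta i 1 x) x k).2 ≠ 0 := fun k => hn _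
    rw [birkhoffSum_succ', ih (x := cθ i x) (Rec_shift h _) (fun k => hn _), pta_shift h n, ppr_add, abs_mul,
      Real.log_mul (abs_ne_zero.2 (ppr_ne hn _)) (abs_ne_zero.2 (ppr_ne hn' _))]
    rfl
def D1 (X : MMSetting S Ω) (i : S) : Prop :=
  ∀ j, ∀ᵐ x ∂QL X j, Tendsto (fun n => ppr (pta i n x) x) atTop (𝓝 0)
def D2 (X : MMSetting S Ω) (i : S) : Prop := ∀ᵐ x ∂QL X i, |ppr (pta i 1 x) x| = 1
def D3 (X : MMSetting S Ω) (i : S) : Prop :=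
  ∀ j, ∀ᵐ x ∂QL X j, ∀ C : ℝ, ∃ n, C < |ppr (pta i n x) x|

theorem tau_eq (X : MMSetting S Ω) (i : S) (n : ℕ) (ω : Ω) :
    X.tau i n ω = pta i n (toPath X ω) := by
  induction n with
  | zero => rfl
  | succ n ih => simp only [MMSetting.tau, pta, ih, toPath]

theorem pprod_eq (X : MMSetting S Ω) (i : S) (n : ℕ) (ω : Ω) :
    X.Pprod (X.tau i n ω) ω = ppr (pta i n (toPath X ω)) (toPath X ω) := by
  rw [tau_eq]; rfl

theorem altT1_iff (X : MMSetting S Ω) (i : S) : X.AltT1 i ↔ D1 X i := by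
  unfold MMSetting.AltT1 D1
  rw [ae_Pπ_iff]
  refine forall_congr' fun j => ?_
  rw [QL, ae_map_iff (toPath_meas X).aemeasurable
    (measurableSet_tendsto (𝓝 0) fun n => ppr_pta_meas i n)]
  simp only [pprod_eq]

theorem altT2_iff (X : MMSetting S Ω) (i : S) : X.AltT2 i ↔ D2 X i := by
  have := X.prob i
  unfold MMSetting.AltT2 D2
  have hm : MeasurableSet {x : PS S | |ppr (pta i 1 x) x| = 1} :=
    (ppr_pta_meas i 1).abs (measurableSet_singleton 1)
  have e : {ω | |X.Ai i ω| = 1} = toPath X ⁻¹' {x : PS S | |ppr (pta i 1 x) x| = 1} := by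
    ext ω
    simp only [Set.mem_ofPred_eq, Set.mem_preimage, MMSetting.Ai, pprod_eq]
  rw [QL, ae_map_iff (toPath_meas X).aemeasurable hm, e,
    ← prob_compl_eq_zero_iff (toPath_meas X hm)]
  rfl

theorem altT3_iff (X : MMSetting S Ω) (i : S) : X.AltT3 i ↔ D3 X i := by
  unfold MMSetting.AltT3 D3
  rw [ae_Pπ_iff]
  refine forall_congr' fun j => ?_
  have hm : MeasurableSet {x : PS S | ∀ C : ℝ, ∃ n, C < |ppr (pta i n x) x|} := by
    have : {x : PS S | ∀ C : ℝ, ∃ n, C < |ppr (pta i n x) x|} =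
        ⋂ C : ℕ, ⋃ n, {x : PS S | (C : ℝ) < |ppr (pta i n x) x|} := by
      ext x
      simp only [Set.mem_ofPred_eq, Set.mem_iInter, Set.mem_iUnion]
      refine ⟨fun h C => h C, fun h C => ?_⟩
      obtain ⟨m, hm⟩ := exists_nat_gt C
      obtain ⟨n, hn⟩ := h m
      exact ⟨n, hm.trans hn⟩
    rw [this]
    exact MeasurableSet.iInter fun C => MeasurableSet.iUnion fun n =>
      measurableSet_lt measurable_const (ppr_pta_meas i n).abs
  rw [QL, ae_map_iff (toPath_meas X).aemeasurable hm]
  simp only [pprod_eq]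

theorem ae_false {T : Type*} [MeasurableSpace T] {Q : Measure T} [IsProbabilityMeasure Q]
    (h : ∀ᵐ _ ∂Q, False) : False := by
  obtain ⟨_, h⟩ := h.exists
  exact h

theorem abs_eq_one_of_log {a : ℝ} (h : a ≠ 0) (hl : Real.log |a| = 0) : |a| = 1 :=
  Real.eq_one_of_pos_of_log_eq_zero (abs_pos.2 h) hl

theorem D2_of_law (X : MMSetting S Ω) (hA : X.Pπ {ω | X.A 0 ω = 0} = 0) (i : S)
    (h : ∀ᵐ r ∂(QL X i).map (cX i), r = 0) : D2 X i := by
  have h1 := ae_of_ae_map (cX_meas i).aemeasurable h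
  filter_upwards [h1, QL_ne X hA i] with x hx hn
  exact abs_eq_one_of_log (ppr_ne hn _) hx

theorem D_tri (X : MMSetting S Ω) (hA : X.Pπ {ω | X.A 0 ω = 0} = 0) (i : S) :
    D1 X i ∨ D2 X i ∨ D3 X i := by
  rcases rw_trichotomy (cX_meas i) (cθ_meas i) (cycle_renewal X i i) with h | h | h
  · exact Or.inr (Or.inl (D2_of_law X hA i h))
  · left
    intro j
    filter_upwards [cycle_ae X i j h, QL_ne X hA j, QL_rec X i j] with x hx hn hr
    have h1 : Tendsto (fun n => birkhoffSum (cθ i) (cX i) (n + 1) x) atTop atBot := by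
      simp only [birkhoffSum_succ']
      exact tendsto_atBot_add_const_left _ _ hx
    have h2 := (tendsto_add_atTop_iff_nat (f := fun n => birkhoffSum (cθ i) (cX i) n x) 1).1 h1
    simp only [cycle_log hr hn] at h2
    have h3 := Real.tendsto_exp_atBot.comp h2
    rw [tendsto_zero_iff_abs_tendsto_zero]
    refine h3.congr fun n => ?_
    simp only [Function.comp]
    rw [Real.exp_log (abs_pos.2 (ppr_ne hn _))]
  · right; right
    intro j
    filter_upwards [cycle_ae X i j h, QL_ne X hA j, QL_rec X i j] with x hx hn hr C
    obtain ⟨n, hh⟩ := hx (C - cX i x)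
    refine ⟨n + 1, ?_⟩
    have h1 : C < birkhoffSum (cθ i) (cX i) (n + 1) x := by
      rw [birkhoffSum_succ']; linarith
    rw [cycle_log hr hn] at h1
    exact h1.trans_le (Real.log_le_self (abs_nonneg _))

theorem D2_all (X : MMSetting S Ω) (hA : X.Pπ {ω | X.A 0 ω = 0} = 0) (i : S) (h : D2 X i) :
    ∀ᵐ x ∂QL X i, ∀ n, |ppr (pta i n x) x| = 1 := by
  have hmp : MeasurePreserving (cθ i) (QL X i) (QL X i) := ⟨cθ_meas i, cycle_map X i i⟩
  have h1 : ∀ᵐ x ∂QL X i, cX i x = 0 := by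
    filter_upwards [h] with x hx
    simp [cX, hx]
  have h2 : ∀ᵐ x ∂QL X i, ∀ k, cX i ((cθ i)^[k] x) = 0 := by
    rw [ae_all_iff]; intro k
    exact (hmp.iterate k).quasiMeasurePreserving.ae h1
  filter_upwards [h2, QL_ne X hA i, QL_rec X i i] with x hx hn hr n
  apply abs_eq_one_of_log (ppr_ne hn _)
  rw [← cycle_log hr hn n]
  exact Finset.sum_eq_zero fun k _ => hx k

theorem D2_solid (X : MMSetting S Ω) (hA : X.Pπ {ω | X.A 0 ω = 0} = 0) (i j : S) (h : D2 X i) :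
    D2 X j := by
  let G : Set (PS S) := {y | ∀ k l, (y k).1 = i → (y l).1 = i → |ppr k y| = |ppr l y|}
  have hG : MeasurableSet G := by
    have : G = ⋂ k, ⋂ l, ({y : PS S | (y k).1 = i}ᶜ ∪ ({y : PS S | (y l).1 = i}ᶜ ∪
        {y : PS S | |ppr k y| = |ppr l y|})) := by
      ext y
      simp only [G, Set.mem_ofPred_eq, Set.mem_iInter, Set.mem_union, Set.mem_compl_iff]
      refine forall_congr' fun k => forall_congr' fun l => ?_
      tauto
    rw [this]
    exact MeasurableSet.iInter fun k => MeasurableSet.iInter fun l =>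
      (state_meas k i).compl.union ((state_meas l i).compl.union
        (measurableSet_eq_fun (ppr_meas k).abs (ppr_meas l).abs))
  have hGj : ∀ᵐ y ∂QL X j, y ∈ G := by
    obtain ⟨n, hn⟩ := QL_irred X i j
    have h2 := markov X i j n MeasurableSet.univ (upTo_univ n) hG.compl
    have h3 : QL X i (Set.univ ∩ {x | (x n).1 = j} ∩ psh n ⁻¹' Gᶜ) = 0 := by
      rw [measure_eq_zero_iff_ae_notMem]
      filter_upwards [QL_rec X i i, QL_ne X hA i, D2_all X hA i h] with x hr hne hx hx2
      apply hx2.2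
      have hv : ∀ k, (x k).1 = i → |ppr k x| = 1 := by
        intro k hk
        rcases Nat.eq_zero_or_pos k with h0 | h0
        · subst h0; simp [ppr]
        · obtain ⟨m, hm⟩ := pta_visit hr h0 hk
          rw [← hm]; exact hx _
      intro k l hk hl
      have h4 := hv (n + k) hk
      have h5 := hv (n + l) hl
      rw [ppr_add, abs_mul] at h4 h5
      exact mul_left_cancel₀ (abs_ne_zero.2 (ppr_ne hne n)) (h4.trans h5.symm)
    rw [h3, Set.univ_inter] at h2
    rcases mul_eq_zero.1 h2.symm with h | h
    · exact absurd h hn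
    · exact h
  apply D2_of_law X hA
  refine rw_coboundary (cX_meas j) (cθ_meas j) (cycle_renewal X j j) (cX i) (cX_meas i) ?_
  filter_upwards [hGj, QL_ne X hA j, QL_rec X i j, QL_rec X j j] with x hx hn hr hrj
  have hn' : ∀ k, (psh (pta j 1 x) x k).2 ≠ 0 := fun k => hn _
  have hr' : Rec i (cθ j x) := Rec_shift hr _
  have e : cX j x + cX i (cθ j x) = Real.log |ppr (pta j 1 x + pta i 1 (cθ j x)) x| := by
    rw [ppr_add, abs_mul,
      Real.log_mul (abs_ne_zero.2 (ppr_ne hn _)) (abs_ne_zero.2 (ppr_ne hn' _))]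
    rfl
  rw [e, cX, hx _ (pta j 1 x + pta i 1 (cθ j x)) (pta_spec hr 0).2 (pta_spec hr' 0).2]

theorem D13 (X : MMSetting S Ω) (hA : X.Pπ {ω | X.A 0 ω = 0} = 0) (i j : S) (h1 : D1 X i)
    (h3 : D3 X j) : False := by
  let W : PS S → EReal := fun x => ⨆ n : ℕ, ((Real.log |ppr (pta i (n + 1) x) x| : ℝ) : EReal)
  have hW : Measurable W := Measurable.iSup fun n =>
    (Real.measurable_log.comp (ppr_pta_meas i (n + 1)).abs).coe_real_ereal
  refine rw_sup (cX_meas j) (cθ_meas j) (cycle_renewal X j j) W hW ?_ ?_ ?_ ?_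
  · filter_upwards [QL_ne X hA j, QL_rec X i j, QL_rec X j j] with x hn hr hrj c hc
    have hn' : ∀ k, (psh (pta j 1 x) x k).2 ≠ 0 := fun k => hn _
    have hr' : Rec i (cθ j x) := Rec_shift hr _
    obtain ⟨n, hn2⟩ := lt_iSup_iff.1 hc
    have hn3 := EReal.coe_lt_coe_iff.1 hn2
    obtain ⟨m, hm⟩ := pta_visit (k := pta j 1 x + pta i (n + 1) (cθ j x)) hr
      (by have : 0 < pta j 1 x := pta_pos hrj 0; omega) (pta_spec hr' n).2
    refine lt_of_lt_of_le ?_ (le_iSup _ m)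
    rw [EReal.coe_lt_coe_iff, hm, ppr_add, abs_mul,
      Real.log_mul (abs_ne_zero.2 (ppr_ne hn _)) (abs_ne_zero.2 (ppr_ne hn' _))]
    change cX j x + c < cX j x + Real.log |ppr (pta i (n + 1) (cθ j x)) (cθ j x)|
    linarith
  · refine Eventually.of_forall fun x hx => ?_
    have := le_iSup (fun n : ℕ => ((Real.log |ppr (pta i (n + 1) x) x| : ℝ) : EReal)) 0
    change _ ≤ W x at this
    rw [hx, le_bot_iff] at this
    exact EReal.coe_ne_bot _ this
  · filter_upwards [h1 j] with x hx hxt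
    obtain ⟨C, hC⟩ := (hx.abs).bddAbove_range
    have : W x ≤ (C : EReal) := iSup_le fun n => by
      rw [EReal.coe_le_coe_iff]
      exact (Real.log_le_self (abs_nonneg _)).trans (hC ⟨n + 1, rfl⟩)
    rw [hxt, top_le_iff] at this
    exact EReal.coe_ne_top _ this
  · filter_upwards [h3 j, QL_ne X hA j, QL_rec X j j] with x hx hn hr C
    obtain ⟨n, hh⟩ := hx (Real.exp C)
    refine ⟨n, ?_⟩
    rw [cycle_log hr hn]
    exact (Real.lt_log_iff_exp_lt (abs_pos.2 (ppr_ne hn _))).2 hh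

theorem D12 (X : MMSetting S Ω) (hA : X.Pπ {ω | X.A 0 ω = 0} = 0) (i : S) (h1 : D1 X i)
    (h2 : D2 X i) : False := by
  refine ae_false (Q := QL X i) ?_
  filter_upwards [h1 i, D2_all X hA i h2] with x hx h
  have := hx.abs
  simp only [h, abs_zero] at this
  exact one_ne_zero (tendsto_nhds_unique tendsto_const_nhds this)

theorem D23 (X : MMSetting S Ω) (hA : X.Pπ {ω | X.A 0 ω = 0} = 0) (i : S) (h2 : D2 X i)
    (h3 : D3 X i) : False := by
  refine ae_false (Q := QL X i) ?_
  filter_upwards [h3 i, D2_all X hA i h2] with x hx h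
  obtain ⟨n, hn⟩ := hx 1
  rw [h n] at hn
  exact lt_irrefl _ hn

end PathSpace

/-- **Proposition 2.2** (trichotomy for the embedded multiplicative random walks).
If `P_π(A_1 = 0) = 0`, then for every `i ∈ S` exactly one of the alternatives
(T1') `Π_{τ_n(i)} → 0` a.s., (T2') `P_i(|Π_{τ(i)}| = 1) = 1`,
(T3') `limsup_n |Π_{τ_n(i)}| = ∞` a.s. holds, and the alternative that occurs is the
same for all `i ∈ S`. -/
theorem trichotomy_embedded
    {S : Type*} [MeasurableSpace S] [MeasurableSingletonClass S] [Countable S]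
    {Ω : Type*} [MeasurableSpace Ω] (X : MMSetting S Ω)
    (hA : X.Pπ {ω | X.A 0 ω = 0} = 0) :
    (∀ i : S, ∃! k : Fin 3, ![X.AltT1 i, X.AltT2 i, X.AltT3 i] k) ∧
      (∀ i j : S, ∀ k : Fin 3,
        (![X.AltT1 i, X.AltT2 i, X.AltT3 i] k ↔ ![X.AltT1 j, X.AltT2 j, X.AltT3 j] k)) := by
  have htri := fun i => D_tri X hA i
  have h12 := fun i => D12 X hA i
  have h23 := fun i => D23 X hA i
  have h13 := fun i j => D13 X hA i j
  have hs := fun i j => D2_solid X hA i j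
  simp only [← altT1_iff, ← altT2_iff, ← altT3_iff] at htri h12 h23 h13 hs
  constructor
  · intro i
    rcases htri i with h | h | h
    · refine ⟨0, h, fun k hk => ?_⟩
      fin_cases k
      · rfl
      · exact (h12 i h hk).elim
      · exact (h13 i i h hk).elim
    · refine ⟨1, h, fun k hk => ?_⟩
      fin_cases k
      · exact (h12 i hk h).elim
      · rfl
      · exact (h23 i h hk).elim
    · refine ⟨2, h, fun k hk => ?_⟩
      fin_cases k
      · exact (h13 i i hk h).elim
      · exact (h23 i hk h).elim
      · rfl
  · have key : ∀ i j : S, ∀ k : Fin 3,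
        ![X.AltT1 i, X.AltT2 i, X.AltT3 i] k → ![X.AltT1 j, X.AltT2 j, X.AltT3 j] k := by
      intro i j k hk
      fin_cases k
      · rcases htri j with h | h | h
        · exact h
        · exact (h12 i hk (hs j i h)).elim
        · exact (h13 i j hk h).elim
      · exact hs i j hk
      · rcases htri j with h | h | h
        · exact (h13 j i h hk).elim
        · exact (h23 i (hs j i h) hk).elim
        · exact h
    exact fun i j k => ⟨key i j k, key j i k⟩

end Perpetuities
end
end

section
/- In the Markov-modulated setting with |S|>1, if there exist constants b_i∈R such that P_i((A_1^i,B_1^i)=(1,b_i))=1 for all i∈S, then b_i=0 for all i∈S. -/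
open MeasureTheory ProbabilityTheory Filter
open scoped ENNReal NNReal Topology

noncomputable section

namespace Perpetuities

open MMSetting

/-- Edge relation of the chain. -/
def Edge {S Ω : Type*} [MeasurableSpace S] [MeasurableSingletonClass S] [Countable S]
    [MeasurableSpace Ω] (X : MMSetting S Ω) (i j : S) : Prop := X.p i j ≠ 0

/-- Composition of the affine maps along a path. -/
def comp {S : Type*} (w : S → S → ℝ × ℝ) : S → List S → ℝ × ℝ
  | _, [] => (1, 0)
  | s, t :: l => ((w s t).1 * (comp w t l).1, (w s t).2 + (w s t).1 * (comp w t l).2)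

theorem comp_append {S : Type*} (w : S → S → ℝ × ℝ) (t : S) (l : List S) (m : List S) :
    ∀ s, comp w s (m ++ t :: l) =
      ((comp w s (m ++ [t])).1 * (comp w t l).1,
        (comp w s (m ++ [t])).2 + (comp w s (m ++ [t])).1 * (comp w t l).2) := by
  induction m with
  | nil => intro s; simp [comp]
  | cons a m ih =>
    intro s
    simp only [List.cons_append, comp, ih a]
    ext <;> simp <;> ring

/-- Product and perpetuity sum as a function of the input sequence. -/
def FF (n : ℕ) (x : ℕ → ℝ × ℝ) : ℝ × ℝ :=
  (∏ k ∈ Finset.range n, (x k).1,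
    ∑ k ∈ Finset.range n, (∏ l ∈ Finset.range k, (x l).1) * (x k).2)

theorem FF_cont (n : ℕ) : Continuous (FF n) := by
  unfold FF; fun_prop

theorem FF_congr (n : ℕ) (x y : ℕ → ℝ × ℝ) (h : ∀ k < n, x k = y k) : FF n x = FF n y := by
  unfold FF
  congr 1
  · exact Finset.prod_congr rfl fun k hk => by rw [h k (Finset.mem_range.1 hk)]
  · refine Finset.sum_congr rfl fun k hk => ?_
    have hk := Finset.mem_range.1 hk
    rw [h k hk]
    congr 1
    exact Finset.prod_congr rfl fun l hl => by
      rw [h l ((Finset.mem_range.1 hl).trans hk)]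

theorem FF_list {S : Type*} (w : S → S → ℝ × ℝ) (d : S) (l : List S) : ∀ s,
    FF l.length (fun k => w ((s :: l).getD k d) ((s :: l).getD (k + 1) d)) = comp w s l := by
  induction l with
  | nil => intro s; simp [FF, comp]
  | cons t l ih =>
    intro s
    have := ih t
    simp only [comp, ← this]
    unfold FF
    simp only [List.length_cons]
    ext
    · simp [Finset.prod_range_succ', mul_comm]
    · simp [Finset.sum_range_succ', Finset.prod_range_succ', Finset.mul_sum]
      rw [add_comm]
      congr 1
      refine Finset.sum_congr rfl fun k _ => by ring

section
variable {S : Type*} [MeasurableSpace S] [MeasurableSingletonClass S] [Countable S]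
variable {Ω : Type*} [MeasurableSpace Ω]

theorem cycle_comp (X : MMSetting S Ω) (b : S → ℝ)
    (h : ∀ i : S, X.P i {ω | X.Ai i ω = 1 ∧ X.Bi i ω = b i} = 1)
    (w : S → S → ℝ × ℝ) (hw : ∀ i j, ∀ t ∈ 𝓝 (w i j), 0 < X.K i j t)
    (i : S) (m : List S) (him : i ∉ m) (hc : List.IsChain (Edge X) (i :: (m ++ [i]))) :
    comp w i (m ++ [i]) = (1, b i) := by
  have := X.prob i
  set l := m ++ [i] with hl
  set path : ℕ → S := fun k => (i :: l).getD k i with hpath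
  set n := l.length with hn
  set x0 : ℕ → ℝ × ℝ := fun k => w (path k) (path (k + 1)) with hx0
  have hF : FF n x0 = comp w i l := FF_list w i l i
  by_contra hne
  rw [← hF] at hne
  have hopen : IsOpen {x | FF n x ≠ (1, b i)} :=
    isOpen_ne_fun (FF_cont n) continuous_const
  obtain ⟨I, u, hu, hsub⟩ := isOpen_pi_iff.1 hopen x0 hne
  classical
  set E : ℕ → Set (ℝ × ℝ) := fun k => if k ∈ I then u k else Set.univ with hE
  have hp0 : path 0 = i := by simp [hpath]
  have hpn : path n = i := by
    simp [hpath, hn, hl]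
  have hpk : ∀ k, 0 < k → k < n → path k ≠ i := by
    intro k hk hkn hki
    obtain ⟨k, rfl⟩ : ∃ k', k = k' + 1 := ⟨k - 1, by omega⟩
    have hkm : k < m.length := by simp [hn, hl] at hkn; exact hkn
    apply him
    simp [hpath, hl, List.getElem?_append_left hkm, List.getElem?_eq_getElem hkm] at hki
    rw [← hki]
    exact List.getElem_mem hkm
  have hEm : ∀ k, MeasurableSet (E k) := by
    intro k
    by_cases hk : k ∈ I
    · simp only [hE, hk, if_true]; exact (hu k hk).1.measurableSet
    · simp [hE, hk]
  have hmod := X.modulated i n path E hp0 hEm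
  rw [X.chain i n path hp0] at hmod
  have hpos : X.P i ((⋂ k ∈ Finset.range (n + 1), {ω | X.M k ω = path k}) ∩
        ⋂ k ∈ Finset.range n, {ω | (X.A k ω, X.B k ω) ∈ E k}) ≠ 0 := by
    rw [hmod]
    refine mul_ne_zero (Finset.prod_ne_zero_iff.2 ?_) (Finset.prod_ne_zero_iff.2 ?_)
    · intro k hk
      have hk := Finset.mem_range.1 hk
      have h1 := List.isChain_iff_getElem.1 hc k (by simp; omega)
      have e1 : path k = (i :: l)[k]'(by simp; omega) := by
        simp only [hpath]
        rw [List.getD_eq_getElem]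
      have e2 : path (k + 1) = (i :: l)[k + 1]'(by simp; omega) := by
        simp only [hpath]
        rw [List.getD_eq_getElem]
      rw [e1, e2]
      exact h1
    · intro k hk
      apply ne_of_gt
      apply hw
      by_cases hk : k ∈ I
      · simp only [hE, hk, if_true]
        exact (hu k hk).1.mem_nhds (hu k hk).2
      · simp [hE, hk]
  apply hpos
  set V : Set Ω := (⋂ k ∈ Finset.range (n + 1), {ω | X.M k ω = path k}) ∩
        ⋂ k ∈ Finset.range n, {ω | (X.A k ω, X.B k ω) ∈ E k} with hV
  have hVm : MeasurableSet V := by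
    refine MeasurableSet.inter ?_ ?_
    · exact Finset.measurableSet_biInter _ fun k _ =>
        X.measM k (measurableSet_singleton (path k))
    · exact Finset.measurableSet_biInter _ fun k _ =>
        ((X.measA k).prodMk (X.measB k)) (hEm k)
  suffices hdis : ∀ ω, ω ∈ V → ¬ (X.Ai i ω = 1 ∧ X.Bi i ω = b i) by
    have hd : Disjoint {ω | X.Ai i ω = 1 ∧ X.Bi i ω = b i} V :=
      Set.disjoint_left.2 fun ω h1 h2 => hdis ω h2 h1
    have h1 := measure_union (μ := X.P i) hd hVm
    have h2 : (X.P i) ({ω | X.Ai i ω = 1 ∧ X.Bi i ω = b i} ∪ V) ≤ 1 := prob_le_one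
    rw [h1, h i] at h2
    by_contra h3
    exact absurd h2 (not_le.2 (ENNReal.lt_add_right ENNReal.one_ne_top h3))
  rintro ω ⟨h1, h2⟩ ⟨h3, h4⟩
  simp only [Set.mem_iInter, Finset.mem_range, Set.mem_ofPred_eq] at h1 h2
  have hn0 : 0 < n := by simp [hn, hl]
  have htau : X.tau i 1 ω = n := by
    have : X.tau i 1 ω = sInf {k | 0 < k ∧ X.M k ω = i} := rfl
    rw [this]
    apply le_antisymm
    · exact Nat.sInf_le ⟨hn0, by rw [h1 n (by omega), hpn]⟩
    · refine le_csInf ⟨n, hn0, by rw [h1 n (by omega), hpn]⟩ ?_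
      rintro k ⟨hk0, hk⟩
      by_contra hlt
      push Not at hlt
      exact hpk k hk0 hlt (by rw [← h1 k (by omega), hk])
  set y : ℕ → ℝ × ℝ := fun k => if k < n then (X.A k ω, X.B k ω) else x0 k with hy
  have hyF : FF n y = (1, b i) := by
    rw [FF_congr n y (fun k => (X.A k ω, X.B k ω)) (fun k hk => by simp [hy, hk])]
    unfold MMSetting.Ai at h3
    unfold MMSetting.Bi at h4
    rw [htau] at h3 h4
    exact Prod.ext h3 h4
  refine hsub (a := y) ?_ hyF
  intro k hk
  have hk : k ∈ I := hk
  by_cases hkn : k < n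
  · have := h2 k hkn
    simpa [hE, hy, hk, hkn] using this
  · simpa [hy, hkn] using (hu k hk).2

theorem exists_w (X : MMSetting S Ω) :
    ∃ w : S → S → ℝ × ℝ, ∀ i j, ∀ t ∈ 𝓝 (w i j), 0 < X.K i j t := by
  have : ∀ i j, ∃ x : ℝ × ℝ, ∀ t ∈ 𝓝 x, 0 < X.K i j t := by
    intro i j
    have := X.Kprob i j
    obtain ⟨x, -, hx⟩ := exists_mem_forall_mem_nhdsWithin_pos_measure
      (μ := X.K i j) (s := Set.univ) (by simp)
    exact ⟨x, by simpa using hx⟩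
  choose w hw using this
  exact ⟨w, hw⟩

theorem ae_edge (X : MMSetting S Ω) (i : S) :
    ∀ᵐ ω ∂ X.P i, X.M 0 ω = i ∧ ∀ n, Edge X (X.M n ω) (X.M (n + 1) ω) := by
  have := X.prob i
  have h0 : ∀ᵐ ω ∂ X.P i, X.M 0 ω = i := by
    rw [ae_iff]
    exact (prob_compl_eq_zero_iff (X.measM 0 (measurableSet_singleton i))).2 (X.start i)
  refine h0.and (ae_all_iff.2 fun n => ?_)
  have key : ∀ f : Fin (n + 2) → S, ∀ᵐ ω ∂ X.P i, X.M 0 ω = i →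
      (∀ k : Fin (n + 2), X.M k ω = f k) → Edge X (X.M n ω) (X.M (n + 1) ω) := by
    intro f
    set path : ℕ → S := fun k => if hk : k < n + 2 then f ⟨k, hk⟩ else i with hpath
    by_cases hi : path 0 = i
    · by_cases he : Edge X (path n) (path (n + 1))
      · filter_upwards with ω _ hω
        have e1 := hω ⟨n, by omega⟩
        have e2 := hω ⟨n + 1, by omega⟩
        simp only at e1 e2
        rw [e1, e2]
        simpa [hpath] using he
      · have hc := X.chain i (n + 1) path hi
        rw [Finset.prod_eq_zero (i := n) (by simp) (by simpa [Edge] using he)] at hc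
        have : ∀ᵐ ω ∂ X.P i, ω ∉ (⋂ k ∈ Finset.range (n + 1 + 1), {ω | X.M k ω = path k}) :=
          measure_eq_zero_iff_ae_notMem.1 hc
        filter_upwards [this] with ω hω _ hω'
        exfalso
        apply hω
        simp only [Set.mem_iInter, Finset.mem_range, Set.mem_ofPred_eq]
        intro k hk
        have := hω' ⟨k, hk⟩
        simpa [hpath, hk] using this
    · filter_upwards with ω h1 hω
      exfalso
      apply hi
      have := hω 0
      simp [hpath]
      rw [← h1, ← this]; rfl
  filter_upwards [h0, ae_all_iff.2 key] with ω h1 h2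
  exact h2 (fun k => X.M k ω) h1 (fun _ => rfl)

theorem exists_path (X : MMSetting S Ω) (i j : S) (n : ℕ) (h : 0 < X.P i {ω | X.M n ω = j}) :
    ∃ f : ℕ → S, f 0 = i ∧ f n = j ∧ ∀ k, Edge X (f k) (f (k + 1)) := by
  have h1 : ∃ᵐ ω ∂ X.P i, X.M n ω = j := frequently_ae_iff.2 h.ne'
  obtain ⟨ω, h2, h3, h4⟩ := (h1.and_eventually (ae_edge X i)).exists
  exact ⟨fun k => X.M k ω, h3, h2, h4⟩

theorem exists_reach (X : MMSetting S Ω) (i j : S) : Relation.ReflTransGen (Edge X) i j := by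
  obtain ⟨n, hn⟩ := X.irreducible i j
  obtain ⟨f, h0, h1, h2⟩ := exists_path X i j n hn
  have : ∀ k, Relation.ReflTransGen (Edge X) i (f k) := by
    intro k
    induction k with
    | zero => rw [h0]
    | succ k ih => exact ih.tail (h2 k)
  exact h1 ▸ this n
end

theorem exists_arc {S : Type*} (E : S → S → Prop) (i j : S) (hij : i ≠ j)
    (h : Relation.ReflTransGen E i j) :
    ∃ m : List S, i ∉ m ∧ j ∉ m ∧ List.IsChain E (i :: (m ++ [j])) := by
  have gen : ∀ x, Relation.ReflTransGen E x j →
      (x = j ∨ ∃ m : List S, i ∉ m ∧ j ∉ m ∧ List.IsChain E (x :: (m ++ [j]))) ∨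
      ∃ m : List S, i ∉ m ∧ j ∉ m ∧ List.IsChain E (i :: (m ++ [j])) := by
    intro x hx
    induction hx using Relation.ReflTransGen.head_induction_on with
    | refl => exact Or.inl (Or.inl rfl)
    | head hxy _ ih =>
      rename_i x y _
      rcases ih with (rfl | ⟨m, h1, h2, h3⟩) | h
      · exact Or.inl (Or.inr ⟨[], by simp, by simp, by simpa using hxy⟩)
      · by_cases hyi : y = i
        · subst hyi; exact Or.inr ⟨m, h1, h2, h3⟩
        by_cases hyj : y = j
        · subst hyj
          exact Or.inl (Or.inr ⟨[], by simp, by simp, by simpa using hxy⟩)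
        refine Or.inl (Or.inr ⟨y :: m, ?_, ?_, ?_⟩)
        · simp [h1, Ne.symm hyi]
        · simp [h2, Ne.symm hyj]
        · simpa using ⟨hxy, by simpa using h3⟩
      · exact Or.inr h
  rcases gen i h with (h | h) | h
  · exact absurd h hij
  · exact h
  · exact h

/-- Gluing two chains. -/
theorem chain_glue {S : Type*} (E : S → S → Prop) (s t : S) (m l : List S)
    (h1 : List.IsChain E (s :: (m ++ [t]))) (h2 : List.IsChain E (t :: l)) :
    List.IsChain E (s :: (m ++ t :: l)) := by
  have := (List.isChain_split (l₁ := s :: m) (l₂ := l) (c := t) (R := E)).2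
  simp only [List.cons_append] at this
  exact this ⟨h1, h2⟩

theorem chain_cut {S : Type*} (E : S → S → Prop) (s t : S) (m l : List S)
    (h : List.IsChain E (s :: (m ++ t :: l))) :
    List.IsChain E (s :: (m ++ [t])) ∧ List.IsChain E (t :: l) := by
  have := (List.isChain_split (l₁ := s :: m) (l₂ := l) (c := t) (R := E)).1
  simp only [List.cons_append] at this
  exact this h

theorem first_mem {S : Type*} (a : S) (l : List S) (h : a ∈ l) :
    ∃ u v, l = u ++ a :: v ∧ a ∉ u := by
  induction l with
  | nil => simp at h
  | cons c l ih =>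
    by_cases hc : a = c
    · exact ⟨[], l, by simp [hc], by simp⟩
    · obtain ⟨u, v, rfl, hu⟩ := ih (by simpa [hc] using h)
      exact ⟨c :: u, v, by simp, by simp [hc, hu]⟩


/-- **Lemma 4.3**. In the Markov-modulated setting with `|S| > 1`: if there are constants
`b_i ∈ ℝ` such that `P_i((A_1^i, B_1^i) = (1, b_i)) = 1` for all `i ∈ S`, then `b_i = 0`
for all `i ∈ S`. -/
theorem constant_cycle_shift_vanishes
    {S : Type*} [MeasurableSpace S] [MeasurableSingletonClass S] [Countable S] [Nontrivial S]
    {Ω : Type*} [MeasurableSpace Ω] (X : MMSetting S Ω)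
    (b : S → ℝ) (h : ∀ i : S, X.P i {ω | X.Ai i ω = 1 ∧ X.Bi i ω = b i} = 1) :
    ∀ i : S, b i = 0 := by
  obtain ⟨w, hw⟩ := exists_w X
  have cyc := cycle_comp X b h w hw
  have arc : ∀ i j, i ≠ j → ∃ m : List S, i ∉ m ∧ j ∉ m ∧
      List.IsChain (Edge X) (i :: (m ++ [j])) :=
    fun i j hij => exists_arc _ i j hij (exists_reach X i j)
  by_cases H : ∃ i j : S, i ≠ j ∧ ∃ m : List S, j ∉ m ∧ i ∉ m ∧
      List.IsChain (Edge X) (j :: (m ++ [j]))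
  · obtain ⟨i, j, hij, m, hjm, him, hm⟩ := H
    have hb : b j = 0 := by
      obtain ⟨α, h1, h2, h3⟩ := arc i j hij
      obtain ⟨δ, h4, h5, h6⟩ := arc j i hij.symm
      have c1 := cyc i (α ++ j :: δ) (by simp [h1, h5, hij])
        (by simpa using chain_glue _ i j α (δ ++ [i]) h3 h6)
      have c2 := cyc j m hjm hm
      have c3 := cyc i (α ++ j :: (m ++ j :: δ)) (by simp [h1, h5, hij, him])
        (by simpa using chain_glue _ i j α _ h3 (chain_glue _ j j m (δ ++ [i]) hm h6))
      simp only [List.append_assoc, List.cons_append] at c1 c3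
      rw [comp_append] at c1 c3
      rw [comp_append w j (δ ++ [i]) m, c2] at c3
      simp only [Prod.mk.injEq] at c1 c3
      have h0 : (comp w i (α ++ [j])).1 ≠ 0 := by
        intro h0; rw [h0] at c1; simp at c1
      have : (comp w i (α ++ [j])).1 * b j = 0 := by linarith [c1.2, c3.2]
      exact (mul_eq_zero.1 this).resolve_left h0
    intro k
    by_cases hk : k = j
    · rw [hk, hb]
    obtain ⟨α, h1, h2, h3⟩ := arc k j hk
    obtain ⟨δ, h4, h5, h6⟩ := arc j k (Ne.symm hk)
    have c1 := cyc k (α ++ j :: δ) (by simp [h1, h5, hk])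
        (by simpa using chain_glue _ k j α (δ ++ [k]) h3 h6)
    have c2 := cyc j (δ ++ k :: α) (by simp [h2, h4, Ne.symm hk])
        (by simpa using chain_glue _ j k δ (α ++ [j]) h6 h3)
    simp only [List.append_assoc, List.cons_append] at c1 c2
    rw [comp_append] at c1 c2
    simp only [Prod.mk.injEq, hb] at c1 c2
    obtain ⟨e1, e2⟩ := c1
    obtain ⟨e3, e4⟩ := c2
    rw [← e2]
    linear_combination (comp w k (α ++ [j])).1 * e4 - (comp w k (α ++ [j])).2 * e1
  · exfalso
    push Not at H
    obtain ⟨i, j, hij⟩ := exists_pair_ne S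
    have hmem : ∀ m : List S, j ∉ m → List.IsChain (Edge X) (j :: (m ++ [j])) →
        ∀ x, x ∈ j :: m := by
      intro m h1 h2 x
      by_cases hx : x = j
      · simp [hx]
      · by_contra hxm
        exact H x j hx m h1 (fun h => hxm (by simp [h])) h2
    have hnod : ∀ m : List S, j ∉ m → List.IsChain (Edge X) (j :: (m ++ [j])) →
        (j :: m).Nodup := by
      intro m h1 h2
      refine List.nodup_cons.2 ⟨h1, ?_⟩
      classical
      refine List.nodup_iff_count_le_one.2 fun x => ?_
      by_cases hx : x ∈ m
      · have hxj : j ≠ x := fun h => h1 (h ▸ hx)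
        obtain ⟨u, v, rfl, hu⟩ := first_mem x m hx
        have hv : x ∉ v := by
          intro hv
          obtain ⟨u', v', rfl, hu'⟩ := first_mem x v hv
          simp only [List.append_assoc, List.cons_append] at h2
          have h3 := (chain_cut _ _ _ _ _ (chain_cut _ _ _ _ _ h2).2).1
          exact H j x hxj u' hu' (fun h => h1 (by simp [h])) h3
        simp [List.count_append, List.count_eq_zero_of_not_mem hu,
          List.count_eq_zero_of_not_mem hv]
      · simp [List.count_eq_zero_of_not_mem hx]
    obtain ⟨m0, hm0, hm0c⟩ : ∃ m0 : List S, j ∉ m0 ∧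
        List.IsChain (Edge X) (j :: (m0 ++ [j])) := by
      obtain ⟨α, h1, h2, h3⟩ := arc i j hij
      obtain ⟨δ, h4, h5, h6⟩ := arc j i hij.symm
      exact ⟨δ ++ i :: α, by simp [h2, h4, Ne.symm hij],
        by simpa using chain_glue _ j i δ (α ++ [j]) h6 h3⟩
    have hlen : ∀ m : List S, j ∉ m → List.IsChain (Edge X) (j :: (m ++ [j])) →
        m.length + 1 = m0.length + 1 := by
      intro m h1 h2
      have : (j :: m).Perm (j :: m0) :=
        (List.perm_ext_iff_of_nodup (hnod m h1 h2) (hnod m0 hm0 hm0c)).2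
          fun x => ⟨fun _ => hmem m0 hm0 hm0c x, fun _ => hmem m h1 h2 x⟩
      simpa using this.length_eq
    have hdvd : ∀ N : ℕ, ∀ m : List S, m.length ≤ N →
        List.IsChain (Edge X) (j :: (m ++ [j])) → m0.length + 1 ∣ m.length + 1 := by
      intro N
      induction N with
      | zero =>
        intro m hm hc
        have : m = [] := List.length_eq_zero_iff.1 (by omega)
        subst this
        rw [hlen [] (by simp) hc]
      | succ N ih =>
        intro m hm hc
        by_cases hj : j ∈ m
        · obtain ⟨u, v, rfl, hu⟩ := first_mem j m hj
          simp only [List.append_assoc, List.cons_append] at hc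
          have hc' := chain_cut _ _ _ _ _ hc
          have e1 := hlen u hu hc'.1
          simp at hm
          have e2 := ih v (by omega) hc'.2
          have : (u ++ j :: v).length + 1 = (u.length + 1) + (v.length + 1) := by
            simp; ring
          rw [this, e1]
          exact dvd_add dvd_rfl e2
        · rw [hlen m hj hc]
    have h1 := X.aperiodic j (m0.length + 1) (by
      intro n hn hP
      obtain ⟨f, f0, fn, fe⟩ := exists_path X j j n hP
      obtain ⟨n, rfl⟩ : ∃ n', n = n' + 1 := ⟨n - 1, by omega⟩
      have := hdvd n ((List.range n).map fun k => f (k + 1)) (by simp) (by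
        have e : j :: (((List.range n).map fun k => f (k + 1)) ++ [j])
            = (List.range (n + 2)).map f := by
          rw [List.range_succ, List.range_succ_eq_map]
          simp [f0, fn, Function.comp_def]
        rw [e, List.isChain_iff_getElem]
        intro k hk
        simpa using fe k)
      simpa using this)
    have : m0 = [] := List.length_eq_zero_iff.1 (by omega)
    have := hmem m0 hm0 hm0c i
    simp_all

end Perpetuities
end
end

section
/- In the Markov-modulated setting with P_π(A_1=0)=0 and P_π(B_1=0)<1, suppose limsup_{n→∞}|Π_{τ_n(i)}|=∞ a.s. Then |Ψ_1∘…∘Ψ_n(Z_0)|→∞ in P_π-probability for every admissible Z_0 if and only if the degeneracy condition (D) fails. -/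
open MeasureTheory ProbabilityTheory Filter
open scoped ENNReal NNReal Topology

noncomputable section

namespace Perpetuities

open MMSetting

section Helpers

variable {S : Type*} [MeasurableSpace S] [MeasurableSingletonClass S] [Countable S]
variable {Ω : Type*} [MeasurableSpace Ω]
variable (X : MMSetting S Ω)

lemma measure_eq_tsum_fiber {β : Type*} [Countable β] [MeasurableSpace β]
    [MeasurableSingletonClass β] (μ : Measure Ω) (g : Ω → β) (hg : Measurable g) (E : Set Ω)
    (hE : MeasurableSet E) : μ E = ∑' s, μ (E ∩ g ⁻¹' {s}) := by
  rw [← measure_iUnion]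
  · congr 1
    ext ω
    simp
  · intro s s' hne
    refine Set.disjoint_left.2 ?_
    rintro ω ⟨_, h1⟩ ⟨_, h2⟩
    apply hne
    simp only [Set.mem_preimage, Set.mem_singleton_iff] at h1 h2
    rw [← h1, ← h2]
  · intro s
    exact hE.inter (hg (measurableSet_singleton s))

lemma cyl (j : S) (n : ℕ) (f : ℕ → S) (E : ℕ → Set (ℝ × ℝ)) (hf : f 0 = j)
    (hE : ∀ k, MeasurableSet (E k)) :
    X.P j {ω | (∀ a, a ≤ n → X.M a ω = f a) ∧ ∀ a, a < n → (X.A a ω, X.B a ω) ∈ E a}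
      = ∏ k ∈ Finset.range n, (X.p (f k) (f (k + 1)) * X.K (f k) (f (k + 1)) (E k)) := by
  rw [Finset.prod_mul_distrib, ← X.chain j n f hf, ← X.modulated j n f E hf hE]
  congr 1
  ext ω
  simp

/-- one coordinate of the driving sequence -/
def Yc (a : ℕ) (ω : Ω) : S × ℝ × ℝ := (X.M a ω, X.A a ω, X.B a ω)

lemma meas_Yc (a : ℕ) : Measurable (Yc X a) :=
  (X.measM a).prodMk ((X.measA a).prodMk (X.measB a))

lemma start_ne {j s : S} (h : s ≠ j) : X.P j {ω | X.M 0 ω = s} = 0 := by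
  have := X.prob j
  have h1 : X.P j {ω | X.M 0 ω = j}ᶜ = 0 :=
    (prob_compl_eq_zero_iff (X.measM 0 (measurableSet_singleton j))).2 (X.start j)
  refine measure_mono_null ?_ h1
  intro ω hω hω'
  exact h (hω.symm.trans hω')

lemma box_term (j k : S) (t n : ℕ) (U V : ℕ → Set (S × ℝ × ℝ)) (hU : ∀ a, MeasurableSet (U a))
    (hV : ∀ a, MeasurableSet (V a)) (s : Fin t → S) (s' : Fin (n + 1) → S) :
    X.P j {ω | ((∀ a, a < t → Yc X a ω ∈ U a) ∧ X.M t ω = k ∧ ∀ a, a < n → Yc X (t + a) ω ∈ V a) ∧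
        (∀ a : Fin t, X.M a ω = s a) ∧ ∀ a : Fin (n + 1), X.M (t + a) ω = s' a}
      = X.P j {ω | ((∀ a, a < t → Yc X a ω ∈ U a) ∧ X.M t ω = k) ∧ (∀ a : Fin t, X.M a ω = s a)} *
        X.P k {ω | (∀ a, a < n → Yc X a ω ∈ V a) ∧ ∀ a : Fin (n + 1), X.M a ω = s' a} := by
  by_cases h0 : s' 0 = k
  swap
  · have h1 : X.P k {ω | (∀ a, a < n → Yc X a ω ∈ V a) ∧ ∀ a : Fin (n + 1), X.M a ω = s' a} = 0 := by
      refine measure_mono_null ?_ (start_ne X h0)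
      rintro ω ⟨_, h⟩
      simpa using h 0
    rw [h1, mul_zero]
    refine measure_mono_null ?_ measure_empty
    rintro ω ⟨⟨_, h2, _⟩, _, h3⟩
    have := h3 0
    simp only [Fin.val_zero, add_zero] at this
    exact (h0 (this.symm.trans h2)).elim
  let f : ℕ → S := fun a => if h : a < t then s ⟨a, h⟩ else
    if h' : a - t < n + 1 then s' ⟨a - t, h'⟩ else k
  have fs : ∀ a (h : a < t), f a = s ⟨a, h⟩ := fun a h => by simp [f, h]
  have fs' : ∀ a (h : a < n + 1), f (t + a) = s' ⟨a, h⟩ := fun a h => by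
    have h1 : ¬ (t + a < t) := by omega
    have h2 : t + a - t = a := by omega
    simp only [f, h1, dif_neg, not_false_eq_true, h2, h, dif_pos]
  have ft : f t = k := by
    have := fs' 0 (Nat.succ_pos _)
    rw [add_zero] at this
    rw [this, ← h0]; rfl
  let E : ℕ → Set (ℝ × ℝ) := fun a => if a < t then {e | (f a, e) ∈ U a} else
    {e | (f a, e) ∈ V (a - t)}
  have hE : ∀ a, MeasurableSet (E a) := by
    intro a
    by_cases h : a < t
    · simp only [E, h, if_true]; exact measurable_prodMk_left (hU a)
    · simp only [E, h, if_false]; exact measurable_prodMk_left (hV _)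
  have E1 : ∀ a, a < t → E a = {e | (f a, e) ∈ U a} := fun a h => by simp [E, h]
  have E2 : ∀ a, E (t + a) = {e | (f (t + a), e) ∈ V a} := fun a => by simp [E]
  -- rewrite the events
  have e1 : {ω | ((∀ a, a < t → Yc X a ω ∈ U a) ∧ X.M t ω = k ∧
        ∀ a, a < n → Yc X (t + a) ω ∈ V a) ∧
        (∀ a : Fin t, X.M a ω = s a) ∧ ∀ a : Fin (n + 1), X.M (t + a) ω = s' a}
      = {ω | (∀ a, a ≤ t + n → X.M a ω = f a) ∧ ∀ a, a < t + n → (X.A a ω, X.B a ω) ∈ E a} := by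
    ext ω
    simp only [Set.mem_ofPred_eq]
    constructor
    · rintro ⟨⟨hu, hk, hv⟩, hs, hs'⟩
      have hM : ∀ a, a ≤ t + n → X.M a ω = f a := by
        intro a ha
        by_cases h : a < t
        · rw [fs a h, ← hs ⟨a, h⟩]
        · obtain ⟨b, rfl⟩ := Nat.exists_eq_add_of_le (not_lt.1 h)
          rw [fs' b (by omega), ← hs' ⟨b, by omega⟩]
      refine ⟨hM, ?_⟩
      intro a ha
      by_cases h : a < t
      · rw [E1 a h]
        have := hu a h
        simp only [Yc, hM a (by omega)] at this
        exact this
      · obtain ⟨b, rfl⟩ := Nat.exists_eq_add_of_le (not_lt.1 h)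
        rw [E2]
        have := hv b (by omega)
        simp only [Yc, hM (t + b) (by omega)] at this
        exact this
    · rintro ⟨hM, hE⟩
      refine ⟨⟨?_, ?_, ?_⟩, ?_, ?_⟩
      · intro a h
        have := hE a (by omega)
        rw [E1 a h] at this
        simp only [Yc, hM a (by omega)]
        exact this
      · rw [hM t (by omega), ft]
      · intro a h
        have := hE (t + a) (by omega)
        rw [E2] at this
        simp only [Yc, hM (t + a) (by omega)]
        exact this
      · intro a; rw [hM a (by omega), fs a a.2]
      · intro a; rw [hM (t + a) (by omega), fs' a a.2]
  have e2 : {ω | ((∀ a, a < t → Yc X a ω ∈ U a) ∧ X.M t ω = k) ∧ (∀ a : Fin t, X.M a ω = s a)}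
      = {ω | (∀ a, a ≤ t → X.M a ω = f a) ∧ ∀ a, a < t → (X.A a ω, X.B a ω) ∈ E a} := by
    ext ω
    simp only [Set.mem_ofPred_eq]
    constructor
    · rintro ⟨⟨hu, hk⟩, hs⟩
      have hM : ∀ a, a ≤ t → X.M a ω = f a := by
        intro a ha
        by_cases h : a < t
        · rw [fs a h, ← hs ⟨a, h⟩]
        · obtain rfl : a = t := by omega
          rw [ft, hk]
      refine ⟨hM, ?_⟩
      intro a h
      rw [E1 a h]
      have := hu a h
      simp only [Yc, hM a (by omega)] at this
      exact this
    · rintro ⟨hM, hE⟩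
      refine ⟨⟨?_, ?_⟩, ?_⟩
      · intro a h
        have := hE a (by omega)
        rw [E1 a h] at this
        simp only [Yc, hM a (by omega)]
        exact this
      · rw [hM t (by omega), ft]
      · intro a; rw [hM a (by omega), fs a a.2]
  have e3 : {ω | (∀ a, a < n → Yc X a ω ∈ V a) ∧ ∀ a : Fin (n + 1), X.M a ω = s' a}
      = {ω | (∀ a, a ≤ n → X.M a ω = f (t + a)) ∧
          ∀ a, a < n → (X.A a ω, X.B a ω) ∈ E (t + a)} := by
    ext ω
    simp only [Set.mem_ofPred_eq]
    constructor
    · rintro ⟨hv, hs'⟩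
      have hM : ∀ a, a ≤ n → X.M a ω = f (t + a) := by
        intro a ha
        rw [fs' a (by omega), ← hs' ⟨a, by omega⟩]
      refine ⟨hM, ?_⟩
      intro a h
      rw [E2]
      have := hv a (by omega)
      simp only [Yc, hM a (by omega)] at this
      exact this
    · rintro ⟨hM, hE⟩
      refine ⟨?_, ?_⟩
      · intro a h
        have := hE a (by omega)
        rw [E2] at this
        simp only [Yc, hM a (by omega)]
        exact this
      · intro a; rw [hM a (by omega), fs' a a.2]
  rw [e1, e2, e3]
  by_cases hj : f 0 = j
  · rw [cyl X j (t + n) f E hj hE, cyl X j t f E hj hE,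
      cyl X k n (fun a => f (t + a)) (fun a => E (t + a)) (by simpa using ft) (fun a => hE _),
      Finset.prod_range_add]
    rfl
  · have z1 : X.P j {ω | (∀ a, a ≤ t + n → X.M a ω = f a) ∧
        ∀ a, a < t + n → (X.A a ω, X.B a ω) ∈ E a} = 0 := by
      refine measure_mono_null ?_ (start_ne X hj)
      rintro ω ⟨h, _⟩
      exact h 0 (by omega)
    have z2 : X.P j {ω | (∀ a, a ≤ t → X.M a ω = f a) ∧
        ∀ a, a < t → (X.A a ω, X.B a ω) ∈ E a} = 0 := by
      refine measure_mono_null ?_ (start_ne X hj)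
      rintro ω ⟨h, _⟩
      exact h 0 (by omega)
    rw [z1, z2, zero_mul]

lemma meas_box (t n : ℕ) (U : ℕ → Set (S × ℝ × ℝ)) (hU : ∀ a, MeasurableSet (U a)) :
    MeasurableSet {ω | ∀ a, a < n → Yc X (t + a) ω ∈ U a} := by
  have : {ω | ∀ a, a < n → Yc X (t + a) ω ∈ U a} = ⋂ a, ⋂ (_ : a < n), Yc X (t + a) ⁻¹' U a := by
    ext; simp
  rw [this]
  exact MeasurableSet.iInter fun a => MeasurableSet.iInter fun _ => meas_Yc X _ (hU a)

lemma box (j k : S) (t n : ℕ) (U V : ℕ → Set (S × ℝ × ℝ)) (hU : ∀ a, MeasurableSet (U a))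
    (hV : ∀ a, MeasurableSet (V a)) :
    X.P j {ω | (∀ a, a < t → Yc X a ω ∈ U a) ∧ X.M t ω = k ∧ ∀ a, a < n → Yc X (t + a) ω ∈ V a}
      = X.P j {ω | (∀ a, a < t → Yc X a ω ∈ U a) ∧ X.M t ω = k} *
        X.P k {ω | ∀ a, a < n → Yc X a ω ∈ V a} := by
  have m1 : MeasurableSet {ω | ∀ a, a < t → Yc X a ω ∈ U a} := by
    simpa using meas_box X 0 t U hU
  have m2 : MeasurableSet {ω | ∀ a, a < n → Yc X a ω ∈ V a} := by
    simpa using meas_box X 0 n V hV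
  have m3 : MeasurableSet {ω | X.M t ω = k} := X.measM t (measurableSet_singleton k)
  have m4 := meas_box X t n V hV
  let g1 : Ω → (Fin t → S) := fun ω a => X.M a ω
  let g2 : ℕ → Ω → (Fin (n + 1) → S) := fun b ω a => X.M (b + a) ω
  have hg1 : Measurable g1 := measurable_pi_lambda _ fun a => X.measM _
  have hg2 : ∀ b, Measurable (g2 b) := fun b => measurable_pi_lambda _ fun a => X.measM _
  have m5 : MeasurableSet {ω | (∀ a, a < t → Yc X a ω ∈ U a) ∧ X.M t ω = k ∧
      ∀ a, a < n → Yc X (t + a) ω ∈ V a} := m1.inter (m3.inter m4)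
  have m6 : MeasurableSet {ω | (∀ a, a < t → Yc X a ω ∈ U a) ∧ X.M t ω = k} := m1.inter m3
  rw [measure_eq_tsum_fiber (X.P j) (fun ω => (g1 ω, g2 t ω)) (hg1.prodMk (hg2 t)) _ m5,
    measure_eq_tsum_fiber (X.P j) g1 hg1 _ m6,
    measure_eq_tsum_fiber (X.P k) (g2 0) (hg2 0) _ m2, ENNReal.tsum_prod',
    ← ENNReal.tsum_mul_right]
  refine tsum_congr fun s => ?_
  rw [← ENNReal.tsum_mul_left]
  refine tsum_congr fun s' => ?_
  have := box_term X j k t n U V hU hV s s'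
  convert this using 2
  · ext ω
    simp [g1, g2, funext_iff]
  · congr 1
    ext ω
    simp [g1, funext_iff]
  · congr 1
    ext ω
    simp [g2, funext_iff]

/-! ### sequence space -/

/-- shift -/
def shf (t : ℕ) (y : ℕ → S × ℝ × ℝ) : ℕ → S × ℝ × ℝ := fun a => y (t + a)

/-- past -/
def pst (t : ℕ) (y : ℕ → S × ℝ × ℝ) : Fin t → S × ℝ × ℝ := fun a => y a

/-- the law of the driving sequence -/
def lw (j : S) : Measure (ℕ → S × ℝ × ℝ) := (X.P j).map (fun ω a => Yc X a ω)

/-- chain at time `t` in state `k` -/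
def atS (t : ℕ) (k : S) : Set (ℕ → S × ℝ × ℝ) := {y | (y t).1 = k}

lemma meas_shf (t : ℕ) : Measurable (shf (S := S) t) :=
  measurable_pi_lambda _ fun _ => measurable_pi_apply _

lemma meas_pst (t : ℕ) : Measurable (pst (S := S) t) :=
  measurable_pi_lambda _ fun _ => measurable_pi_apply _

lemma meas_Y : Measurable (fun ω a => Yc X a ω) :=
  measurable_pi_lambda _ fun a => meas_Yc X a

lemma meas_atS (t : ℕ) (k : S) : MeasurableSet (atS t k) :=
  (measurable_fst.comp (measurable_pi_apply t)) (measurableSet_singleton k)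

instance lw_prob (j : S) : IsProbabilityMeasure (lw X j) := by
  have := X.prob j
  exact Measure.isProbabilityMeasure_map (meas_Y X).aemeasurable

theorem markov_s18 (j k : S) (t : ℕ) :
    (((lw X j).restrict (atS t k)).map (pst t)).prod (lw X k) =
    ((lw X j).restrict (atS t k)).map (fun y => (pst t y, shf t y)) := by
  have hps : Measurable (fun y : ℕ → S × ℝ × ℝ => (pst t y, shf t y)) :=
    (meas_pst t).prodMk (meas_shf t)
  refine Measure.prod_eq_generateFrom (generateFrom_pi (ι := Fin t))
    (generateFrom_squareCylinders (ι := ℕ)) isPiSystem_pi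
    (isPiSystem_squareCylinders (fun _ => MeasurableSpace.isPiSystem_measurableSet)
      (fun _ => MeasurableSet.univ)) ?_ ?_ ?_
  · exact ⟨fun _ => Set.univ, fun _ => ⟨fun _ => Set.univ, by simp, by simp⟩,
      fun _ => measure_lt_top _ _, by simp [Set.iUnion_const]⟩
  · exact ⟨fun _ => Set.univ, fun _ => ⟨∅, fun _ => Set.univ, by simp, by simp⟩,
      fun _ => measure_lt_top _ _, by simp [Set.iUnion_const]⟩
  · rintro _ ⟨U, hU, rfl⟩ _ ⟨s, V, hV, rfl⟩
    simp only [Set.mem_pi, Set.mem_univ, forall_const, Set.mem_ofPred_eq] at hU hV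
    classical
    obtain ⟨n, hn⟩ : ∃ n, ∀ a ∈ s, a < n :=
      ⟨s.sup id + 1, fun a ha => Nat.lt_succ_of_le (Finset.le_sup (f := id) ha)⟩
    let U' : ℕ → Set (S × ℝ × ℝ) := fun a => if h : a < t then U ⟨a, h⟩ else Set.univ
    let V' : ℕ → Set (S × ℝ × ℝ) := fun a => if a ∈ s then V a else Set.univ
    have hU' : ∀ a, MeasurableSet (U' a) := by
      intro a
      by_cases h : a < t
      · simp only [U', h, dif_pos]; exact hU _
      · simp [U', h]
    have hV' : ∀ a, MeasurableSet (V' a) := by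
      intro a
      by_cases h : a ∈ s
      · simp only [V', h, if_true]; exact hV _
      · simp [V', h]
    have m1 : MeasurableSet (Set.univ.pi U) := MeasurableSet.univ_pi hU
    have m2 : MeasurableSet ((s : Set ℕ).pi V) :=
      MeasurableSet.pi (Finset.countable_toSet _) fun a _ => hV a
    have := box X j k t n U' V' hU' hV'
    rw [Measure.map_apply hps (m1.prod m2), Measure.restrict_apply (hps (m1.prod m2)),
      Measure.map_apply (meas_pst t) m1, Measure.restrict_apply (meas_pst t m1), lw, lw,
      Measure.map_apply (meas_Y X) ((hps (m1.prod m2)).inter (meas_atS t k)),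
      Measure.map_apply (meas_Y X) ((meas_pst t m1).inter (meas_atS t k)),
      Measure.map_apply (meas_Y X) m2]
    have u1 : ∀ ω, (∀ a, a < t → Yc X a ω ∈ U' a) ↔ ∀ a : Fin t, Yc X a ω ∈ U a := by
      intro ω
      constructor
      · intro h a
        have := h a a.2
        simpa [U'] using this
      · intro h a ha
        simpa [U', ha] using h ⟨a, ha⟩
    have v1 : ∀ b ω, (∀ a, a < n → Yc X (b + a) ω ∈ V' a) ↔ ∀ a ∈ s, Yc X (b + a) ω ∈ V a := by
      intro b ω
      constructor
      · intro h a ha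
        simpa [V', ha] using h a (hn a ha)
      · intro h a _
        by_cases ha : a ∈ s
        · simpa [V', ha] using h a ha
        · simp [V', ha]
    have v0 := v1 0
    simp only [zero_add] at v0
    simp only [u1, v1, v0] at this
    convert this using 2
    · ext ω
      simp [pst, shf, atS, Set.mem_pi, Yc]
      tauto
    · congr 1
      ext ω
      simp [pst, atS, Set.mem_pi, Yc]
    · congr 1

/-- product of the multipliers -/
def pr (n : ℕ) (y : ℕ → S × ℝ × ℝ) : ℝ := ∏ a ∈ Finset.range n, (y a).2.1

/-- the backward sum -/
def sm (n : ℕ) (y : ℕ → S × ℝ × ℝ) : ℝ := ∑ a ∈ Finset.range n, pr a y * (y a).2.2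

/-- backward iteration from `z` -/
def zn (z : ℝ) (n : ℕ) (y : ℕ → S × ℝ × ℝ) : ℝ := pr n y * z + sm n y

/-- truncation -/
def tr (k : S) (t : ℕ) (y : ℕ → S × ℝ × ℝ) : ℕ → S × ℝ × ℝ :=
  fun a => if a < t then y a else (k, 0, 0)

/-- events depending only on the first `t` steps -/
def Adp {β : Type*} (t : ℕ) (f : (ℕ → S × ℝ × ℝ) → β) : Prop :=
  ∀ y y', (∀ a, a < t → y a = y' a) → (y t).1 = (y' t).1 → f y = f y'

lemma meas_pr (n : ℕ) : Measurable (pr (S := S) n) := by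
  unfold pr
  fun_prop

lemma meas_sm (n : ℕ) : Measurable (sm (S := S) n) := by
  unfold sm
  refine Finset.measurable_sum _ fun a _ => (meas_pr a).mul ?_
  fun_prop

lemma meas_zn (z : ℝ) (n : ℕ) : Measurable (zn (S := S) z n) :=
  ((meas_pr n).mul_const z).add (meas_sm n)

lemma pr_add (t n : ℕ) (y : ℕ → S × ℝ × ℝ) : pr (t + n) y = pr t y * pr n (shf t y) := by
  simp [pr, shf, Finset.prod_range_add]

lemma sm_add (t n : ℕ) (y : ℕ → S × ℝ × ℝ) :
    sm (t + n) y = sm t y + pr t y * sm n (shf t y) := by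
  simp only [sm, Finset.sum_range_add, pr_add, Finset.mul_sum]
  congr 1
  refine Finset.sum_congr rfl fun a _ => ?_
  simp only [shf]
  ring

lemma zn_add (z : ℝ) (t n : ℕ) (y : ℕ → S × ℝ × ℝ) :
    zn z (t + n) y = pr t y * zn z n (shf t y) + sm t y := by
  simp only [zn, pr_add, sm_add]; ring

lemma pr_congr {a : ℕ} {y y' : ℕ → S × ℝ × ℝ} (h : ∀ b, b < a → y b = y' b) : pr a y = pr a y' :=
  Finset.prod_congr rfl fun b hb => by rw [h b (Finset.mem_range.1 hb)]

lemma sm_congr {a : ℕ} {y y' : ℕ → S × ℝ × ℝ} (h : ∀ b, b < a → y b = y' b) : sm a y = sm a y' :=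
  Finset.sum_congr rfl fun b hb => by
    have hb := Finset.mem_range.1 hb
    rw [h b hb, pr_congr fun c hc => h c (hc.trans hb)]

theorem markov_lint (j k : S) (t : ℕ)
    (Φ : (ℕ → S × ℝ × ℝ) → (ℕ → S × ℝ × ℝ) → ℝ≥0∞) (hΦ : Measurable (Function.uncurry Φ))
    (hA : Adp t Φ) :
    ∫⁻ y in atS t k, Φ y (shf t y) ∂lw X j =
      ∫⁻ y in atS t k, ∫⁻ y', Φ y y' ∂lw X k ∂lw X j := by
  let ex : (Fin t → S × ℝ × ℝ) → (ℕ → S × ℝ × ℝ) :=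
    fun p a => if h : a < t then p ⟨a, h⟩ else (k, 0, 0)
  have hex : Measurable ex := by
    refine measurable_pi_lambda _ fun a => ?_
    by_cases h : a < t
    · simp only [ex, h, dif_pos]; exact measurable_pi_apply _
    · simp only [ex, h, dif_neg, not_false_eq_true]; exact measurable_const
  have key : ∀ y ∈ atS t k, Φ (ex (pst t y)) = Φ y := by
    intro y hy
    refine hA _ _ ?_ ?_
    · intro a ha; simp [ex, pst, ha]
    · simp only [ex, lt_irrefl, dif_neg, not_false_eq_true]; exact hy.symm
  have hm : Measurable (fun x : (Fin t → S × ℝ × ℝ) × (ℕ → S × ℝ × ℝ) => Φ (ex x.1) x.2) :=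
    hΦ.comp ((hex.comp measurable_fst).prodMk measurable_snd)
  have h := congrArg (fun μ => ∫⁻ x, Φ (ex x.1) x.2 ∂μ) (markov_s18 X j k t)
  beta_reduce at h
  rw [lintegral_map hm ((meas_pst t).prodMk (meas_shf t)), lintegral_prod _ hm.aemeasurable,
    lintegral_map hm.lintegral_prod_right' (meas_pst t)] at h
  rw [setLIntegral_congr_fun (meas_atS t k) (g := fun y => Φ (ex (pst t y)) (shf t y))
      (fun y hy => by simp only [key y hy]), ← h]
  exact setLIntegral_congr_fun (meas_atS t k) (fun y hy => by simp only [key y hy])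

theorem markov_set (j k : S) (t : ℕ) (H : (ℕ → S × ℝ × ℝ) → Set (ℕ → S × ℝ × ℝ))
    (hH : MeasurableSet {x : (ℕ → S × ℝ × ℝ) × (ℕ → S × ℝ × ℝ) | x.2 ∈ H x.1}) (hA : Adp t H) :
    lw X j {y | y ∈ atS t k ∧ shf t y ∈ H y} = ∫⁻ y in atS t k, lw X k (H y) ∂lw X j := by
  have h := markov_lint X j k t (fun y y' => (H y).indicator 1 y') ?_ ?_
  · have hs : ∀ y, MeasurableSet (H y) := fun y => measurable_prodMk_left hH
    simp only [lintegral_indicator_one (hs _)] at h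
    rw [← h]
    have hm : MeasurableSet {y | shf t y ∈ H y} := (measurable_id.prodMk (meas_shf t)) hH
    have : ∀ y : ℕ → S × ℝ × ℝ, (H y).indicator (1 : (ℕ → S × ℝ × ℝ) → ℝ≥0∞) (shf t y) =
        {y | shf t y ∈ H y}.indicator 1 y := by
      intro y; simp [Set.indicator]
    simp only [this]
    rw [lintegral_indicator_one hm, Measure.restrict_apply hm]
    congr 1
    ext y; simp [and_comm]
  · have : Function.uncurry (fun y y' => (H y).indicator (1 : (ℕ → S × ℝ × ℝ) → ℝ≥0∞) y') =
        {x : (ℕ → S × ℝ × ℝ) × (ℕ → S × ℝ × ℝ) | x.2 ∈ H x.1}.indicator 1 := by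
      ext ⟨y, y'⟩; simp [Set.indicator, Function.uncurry]
    rw [this]
    exact measurable_one.indicator hH
  · intro y y' h1 h2
    simp only [hA y y' h1 h2]

theorem markov_ae (j k : S) (t : ℕ) (H : (ℕ → S × ℝ × ℝ) → Set (ℕ → S × ℝ × ℝ))
    (hH : MeasurableSet {x : (ℕ → S × ℝ × ℝ) × (ℕ → S × ℝ × ℝ) | x.2 ∈ H x.1}) (hA : Adp t H) :
    (∀ᵐ y ∂lw X j, y ∈ atS t k → shf t y ∈ H y) ↔
      ∀ᵐ y ∂lw X j, y ∈ atS t k → ∀ᵐ y' ∂lw X k, y' ∈ H y := by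
  have h := markov_set X j k t (fun y => (H y)ᶜ) hH.compl
    (fun y y' h1 h2 => by simp only [hA y y' h1 h2])
  have e1 : (∀ᵐ y ∂lw X j, y ∈ atS t k → shf t y ∈ H y) ↔
      lw X j {y | y ∈ atS t k ∧ shf t y ∈ (H y)ᶜ} = 0 := by
    rw [ae_iff]
    have : {a | ¬(a ∈ atS t k → shf t a ∈ H a)} = {y | y ∈ atS t k ∧ shf t y ∈ (H y)ᶜ} := by
      ext y; simp
    rw [this]
  have hm : Measurable fun y => lw X k (H y)ᶜ := measurable_measure_prodMk_left hH.compl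
  rw [e1, h, lintegral_eq_zero_iff hm]
  change (∀ᵐ y ∂(lw X j).restrict (atS t k), lw X k (H y)ᶜ = 0) ↔ _
  rw [ae_restrict_iff' (meas_atS t k)]
  rfl

lemma bb (z : ℝ) (j k : S) (t n : ℕ) (Ev : Set (ℕ → S × ℝ × ℝ)) (hEv : MeasurableSet Ev)
    (hA : Adp t (· ∈ Ev)) (L L' w : ℝ) (hL : 0 < L) (hL' : 0 < L')
    (hr : ∀ y ∈ Ev, L / L' ≤ |pr t y|) (c : ℝ≥0∞)
    (hc : ∀ w, lw X k {y | |zn z n y - w| ≤ L'} ≤ c) :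
    lw X j (Ev ∩ atS t k ∩ {y | |zn z (t + n) y - w| ≤ L}) ≤ c * lw X j (Ev ∩ atS t k) := by
  let H : (ℕ → S × ℝ × ℝ) → Set (ℕ → S × ℝ × ℝ) :=
    fun y => {y' | y ∈ Ev ∧ |pr t y * zn z n y' + sm t y - w| ≤ L}
  have hH : MeasurableSet {x : (ℕ → S × ℝ × ℝ) × (ℕ → S × ℝ × ℝ) | x.2 ∈ H x.1} := by
    have h1 : MeasurableSet {x : (ℕ → S × ℝ × ℝ) × (ℕ → S × ℝ × ℝ) | x.1 ∈ Ev} :=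
      measurable_fst hEv
    have h2 : MeasurableSet {x : (ℕ → S × ℝ × ℝ) × (ℕ → S × ℝ × ℝ) |
        |pr t x.1 * zn z n x.2 + sm t x.1 - w| ≤ L} := by
      refine measurableSet_le ?_ measurable_const
      exact (((((meas_pr t).comp measurable_fst).mul ((meas_zn z n).comp measurable_snd)).add
        ((meas_sm t).comp measurable_fst)).sub_const w).abs
    exact h1.inter h2
  have hAH : Adp t H := by
    intro y y' h1 h2
    simp only [H, pr_congr h1, sm_congr h1, hA y y' h1 h2]
  have e := markov_set X j k t H hH hAH
  have e2 : Ev ∩ atS t k ∩ {y | |zn z (t + n) y - w| ≤ L} =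
      {y | y ∈ atS t k ∧ shf t y ∈ H y} := by
    ext y; simp [H, zn_add]; tauto
  rw [e2, e]
  calc ∫⁻ y in atS t k, lw X k (H y) ∂lw X j
      ≤ ∫⁻ y in atS t k, Ev.indicator (fun _ => c) y ∂lw X j := by
        refine lintegral_mono fun y => ?_
        by_cases hy : y ∈ Ev
        · simp only [hy, Set.indicator_of_mem]
          have hpos : 0 < L / L' := div_pos hL hL'
          have hp : 0 < |pr t y| := lt_of_lt_of_le hpos (hr y hy)
          have hne : pr t y ≠ 0 := abs_pos.1 hp
          refine le_trans (measure_mono ?_) (hc ((w - sm t y) / pr t y))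
          rintro y' ⟨_, h⟩
          have : pr t y * zn z n y' + sm t y - w =
              pr t y * (zn z n y' - (w - sm t y) / pr t y) := by
            field_simp; ring
          rw [this, abs_mul] at h
          have h3 : L ≤ |pr t y| * L' := (div_le_iff₀ hL').1 (hr y hy)
          exact le_of_mul_le_mul_left (h.trans h3) hp
        · have : H y = ∅ := by ext; simp [H, hy]
          simp [this]
    _ = c * lw X j (Ev ∩ atS t k) := by
        rw [lintegral_indicator hEv, lintegral_const, Measure.restrict_restrict hEv]
        simp

lemma gg (z : ℝ) (i j : S) (hit : ∀ᵐ y ∂lw X j, ∀ R : ℝ, ∃ a, (y a).1 = i ∧ R < |pr a y|)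
    (t : ℕ) (D : Set (ℕ → S × ℝ × ℝ)) (hD : MeasurableSet D) (hA : Adp t (· ∈ D))
    (L L' : ℝ) (hL : 0 < L) (hL' : 0 < L') (c : ℝ≥0∞)
    (hc : ∀ᶠ n in atTop, ∀ w, lw X i {y | |zn z n y - w| ≤ L'} ≤ c) (ε : ℝ≥0∞) (hε : 0 < ε) :
    ∀ᶠ n in atTop, ∀ w, lw X j (D ∩ {y | |zn z n y - w| ≤ L}) ≤ c * lw X j D + ε := by
  let Hit : ℕ → (ℕ → S × ℝ × ℝ) → Prop := fun a y => (y a).1 = i ∧ L / L' ≤ |pr a y|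
  have mHit : ∀ a, MeasurableSet {y | Hit a y} := fun a =>
    (meas_atS a i).inter (measurableSet_le measurable_const (meas_pr a).abs)
  let NH : ℕ → Set (ℕ → S × ℝ × ℝ) := fun N => {y | ∀ b, t ≤ b → b < N → ¬ Hit b y}
  have mNH : ∀ N, MeasurableSet (NH N) := by
    intro N
    have : NH N = ⋂ b, ⋂ (_ : t ≤ b), ⋂ (_ : b < N), {y | Hit b y}ᶜ := by
      ext y; simp [NH]
    rw [this]
    exact MeasurableSet.iInter fun b => MeasurableSet.iInter fun _ => MeasurableSet.iInter fun _ =>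
      (mHit b).compl
  have anti : Antitone NH := fun N N' h y hy b h1 h2 => hy b h1 (h2.trans_le h)
  have null : lw X j (⋂ N, NH N) = 0 := by
    refine measure_mono_null (t := {y | ¬ ∀ R : ℝ, ∃ a, (y a).1 = i ∧ R < |pr a y|}) ?_ hit
    intro y hy hR
    obtain ⟨a, h1, h2⟩ := hR (L / L' + ∑ b ∈ Finset.range t, |pr b y|)
    have hs : 0 ≤ ∑ b ∈ Finset.range t, |pr b y| := Finset.sum_nonneg fun b _ => abs_nonneg _
    have hta : t ≤ a := by
      by_contra h
      have : |pr a y| ≤ ∑ b ∈ Finset.range t, |pr b y| :=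
        Finset.single_le_sum (f := fun b => |pr b y|) (fun b _ => abs_nonneg _)
          (Finset.mem_range.2 (not_le.1 h))
      have : 0 < L / L' := div_pos hL hL'
      linarith
    have := Set.mem_iInter.1 hy (a + 1)
    exact this a hta (Nat.lt_succ_self a) ⟨h1, by linarith⟩
  have tend := tendsto_measure_iInter_atTop (μ := lw X j) (fun N => (mNH N).nullMeasurableSet) anti
    ⟨0, measure_ne_top _ _⟩
  rw [null] at tend
  obtain ⟨N, hN⟩ := (tend.eventually_le_const hε).exists
  obtain ⟨n0, hn0⟩ := eventually_atTop.1 hc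
  refine eventually_atTop.2 ⟨n0 + N, fun n hn w => ?_⟩
  let Ev : ℕ → Set (ℕ → S × ℝ × ℝ) := fun a => D ∩ NH a ∩ {y | L / L' ≤ |pr a y|}
  have mEv : ∀ a, MeasurableSet (Ev a) := fun a =>
    (hD.inter (mNH a)).inter (measurableSet_le measurable_const (meas_pr a).abs)
  have hEvA : ∀ a, t ≤ a → Adp a (· ∈ Ev a) := by
    intro a hta y y' h1 h2
    have e1 : (y ∈ D) = (y' ∈ D) := by
      refine hA y y' (fun b hb => h1 b (hb.trans_le hta)) ?_
      rcases hta.lt_or_eq with h | h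
      · rw [h1 t h]
      · rw [h]; exact h2
    have e2 : ∀ b, b ≤ a → pr b y = pr b y' := fun b hb =>
      pr_congr fun c hc => h1 c (hc.trans_le hb)
    have e3 : y ∈ NH a ↔ y' ∈ NH a := by
      refine forall_congr' fun b => forall_congr' fun _ => forall_congr' fun hb => ?_
      simp only [Hit, h1 b hb, e2 b hb.le]
    simp only [Ev, Set.mem_inter_iff, e1, e3, Set.mem_ofPred_eq, e2 a le_rfl]
  have sub : D ∩ {y | |zn z n y - w| ≤ L} ⊆ NH N ∪
      ⋃ a ∈ Finset.Ico t N, (Ev a ∩ atS a i ∩ {y | |zn z n y - w| ≤ L}) := by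
    rintro y ⟨hyD, hyz⟩
    by_cases hy : y ∈ NH N
    · exact Or.inl hy
    · right
      have : ∃ b, t ≤ b ∧ b < N ∧ Hit b y := by
        by_contra h
        push Not at h
        exact hy h
      classical
      let b := Nat.find this
      obtain ⟨h1, h2, h3⟩ := Nat.find_spec this
      simp only [Set.mem_iUnion]
      refine ⟨b, Finset.mem_Ico.2 ⟨h1, h2⟩, ⟨⟨⟨hyD, ?_⟩, h3.2⟩, h3.1⟩, hyz⟩
      intro b' hb1 hb2 hb3
      exact Nat.find_min this hb2 ⟨hb1, hb2.trans h2, hb3⟩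
  have disj : (↑(Finset.Ico t N) : Set ℕ).PairwiseDisjoint (fun a => Ev a ∩ atS a i) := by
    have : ∀ a b, t ≤ a → a < b → ∀ y, y ∈ Ev a ∩ atS a i → y ∈ Ev b ∩ atS b i → False := by
      intro a b hta hab y h1 h2
      exact h2.1.1.2 a hta hab ⟨h1.2, h1.1.2⟩
    intro a ha b hb hab
    simp only [Finset.coe_Ico, Set.mem_Ico] at ha hb
    refine Set.disjoint_left.2 fun y h1 h2 => ?_
    rcases lt_or_gt_of_ne hab with h | h
    · exact this a b ha.1 h y h1 h2
    · exact this b a hb.1 h y h2 h1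
  calc lw X j (D ∩ {y | |zn z n y - w| ≤ L})
      ≤ lw X j (NH N) + ∑ a ∈ Finset.Ico t N,
          lw X j (Ev a ∩ atS a i ∩ {y | |zn z n y - w| ≤ L}) :=
        (measure_mono sub).trans ((measure_union_le _ _).trans
          (add_le_add le_rfl (measure_biUnion_finset_le _ _)))
    _ ≤ ε + ∑ a ∈ Finset.Ico t N, c * lw X j (Ev a ∩ atS a i) := by
        refine add_le_add hN (Finset.sum_le_sum fun a ha => ?_)
        rw [Finset.mem_Ico] at ha
        have := bb X z j i a (n - a) (Ev a) (mEv a) (hEvA a ha.1) L L' w hL hL'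
          (fun y hy => hy.2) c (hn0 _ (by omega))
        rwa [show a + (n - a) = n by omega] at this
    _ = ε + c * lw X j (⋃ a ∈ Finset.Ico t N, (Ev a ∩ atS a i)) := by
        rw [← Finset.mul_sum, measure_biUnion_finset disj fun a _ => (mEv a).inter (meas_atS a i)]
    _ ≤ ε + c * lw X j D := by
        gcongr
        refine Set.iUnion₂_subset fun a _ y hy => hy.1.1.1
    _ = _ := add_comm _ _

/-- the affine map of the first `t` steps -/
def bl (t : ℕ) (y : ℕ → S × ℝ × ℝ) : ℝ × ℝ := (pr t y, sm t y)

lemma meas_bl (t : ℕ) : Measurable (bl (S := S) t) := (meas_pr t).prodMk (meas_sm t)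

/-- law of loops at `i` of length `t` -/
def rho (i : S) (t : ℕ) : Measure (ℝ × ℝ) := ((lw X i).restrict (atS t i)).map (bl t)

instance rho_fin (i : S) (t : ℕ) : IsFiniteMeasure (rho X i t) := by
  unfold rho; infer_instance

lemma two_block (z : ℝ) (i : S) (l m n : ℕ) (H : Set ((ℝ × ℝ) × (ℝ × ℝ) × ℝ))
    (hH : MeasurableSet H) :
    lw X i {y | y ∈ atS l i ∧ shf l y ∈ atS m i ∧
      (bl l y, bl m (shf l y), zn z n (shf m (shf l y))) ∈ H}
      = ∫⁻ u, ∫⁻ v, lw X i {y | (u, v, zn z n y) ∈ H} ∂rho X i m ∂rho X i l := by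
  have inner : ∀ u : ℝ × ℝ, lw X i {y | y ∈ atS m i ∧ (u, bl m y, zn z n (shf m y)) ∈ H} =
      ∫⁻ v, lw X i {y | (u, v, zn z n y) ∈ H} ∂rho X i m := by
    intro u
    have hm : MeasurableSet {x : (ℝ × ℝ) × (ℕ → S × ℝ × ℝ) | (u, x.1, zn z n x.2) ∈ H} :=
      (measurable_const.prodMk (measurable_fst.prodMk ((meas_zn z n).comp measurable_snd))) hH
    have := markov_set X i i m (fun y => {y' | (u, bl m y, zn z n y') ∈ H}) ?_ ?_
    · rw [rho, lintegral_map ?_ (meas_bl m)]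
      · exact this
      · exact measurable_measure_prodMk_left hm
    · exact (((meas_bl m).comp measurable_fst).prodMk measurable_snd) hm
    · intro y y' h1 h2
      simp only [bl, pr_congr h1, sm_congr h1]
  have hG : MeasurableSet {x : (ℝ × ℝ) × (ℕ → S × ℝ × ℝ) |
      x.2 ∈ atS m i ∧ (x.1, bl m x.2, zn z n (shf m x.2)) ∈ H} := by
    have h1 : MeasurableSet {x : (ℝ × ℝ) × (ℕ → S × ℝ × ℝ) | x.2 ∈ atS m i} :=
      measurable_snd (meas_atS m i)
    have h2 : MeasurableSet {x : (ℝ × ℝ) × (ℕ → S × ℝ × ℝ) |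
        (x.1, bl m x.2, zn z n (shf m x.2)) ∈ H} :=
      (measurable_fst.prodMk (((meas_bl m).comp measurable_snd).prodMk
        (((meas_zn z n).comp (meas_shf m)).comp measurable_snd))) hH
    exact h1.inter h2
  have := markov_set X i i l
    (fun y => {y' | y' ∈ atS m i ∧ (bl l y, bl m y', zn z n (shf m y')) ∈ H}) ?_ ?_
  · simp only [Set.mem_ofPred_eq] at this
    rw [this, rho, lintegral_map ?_ (meas_bl l)]
    · simp only [inner]
    · simp only [← inner]
      exact measurable_measure_prodMk_left hG
  · exact (((meas_bl l).comp measurable_fst).prodMk measurable_snd) hG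
  · intro y y' h1 h2
    simp only [bl, pr_congr h1, sm_congr h1]

/-- the difference of the two compositions -/
def dl (u v : ℝ × ℝ) : ℝ := (u.2 + u.1 * v.2) - (v.2 + v.1 * u.2)

/-- good pairs -/
def HH (r L Dm : ℝ) : Set ((ℝ × ℝ) × (ℝ × ℝ)) :=
  {x | r ≤ |x.1.1 * x.2.1| ∧ 2 * L < |dl x.1 x.2| ∧ |dl x.1 x.2| ≤ Dm}

lemma meas_HH (r L Dm : ℝ) : MeasurableSet (HH r L Dm) := by
  have m1 : Measurable (fun x : (ℝ × ℝ) × (ℝ × ℝ) => |x.1.1 * x.2.1|) := by fun_prop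
  have m2 : Measurable (fun x : (ℝ × ℝ) × (ℝ × ℝ) => |dl x.1 x.2|) := by unfold dl; fun_prop
  exact (measurableSet_le measurable_const m1).inter
    ((measurableSet_lt measurable_const m2).inter (measurableSet_le m2 measurable_const))

/-- two loops in a row, with a condition -/
def GG (i : S) (l m : ℕ) (H : Set ((ℝ × ℝ) × (ℝ × ℝ))) : Set (ℕ → S × ℝ × ℝ) :=
  {y | y ∈ atS l i ∧ shf l y ∈ atS m i ∧ (bl l y, bl m (shf l y)) ∈ H}

lemma meas_GG (i : S) (l m : ℕ) (H : Set ((ℝ × ℝ) × (ℝ × ℝ))) (hH : MeasurableSet H) :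
    MeasurableSet (GG i l m H) :=
  (meas_atS l i).inter ((meas_shf l (meas_atS m i)).inter
    (((meas_bl l).prodMk ((meas_bl m).comp (meas_shf l))) hH))

lemma adp_GG (i : S) (l m : ℕ) (H : Set ((ℝ × ℝ) × (ℝ × ℝ))) : Adp (l + m) (· ∈ GG i l m H) := by
  intro y y' h1 h2
  have e0 : (y l).1 = (y' l).1 := by
    rcases Nat.eq_zero_or_pos m with h | h
    · subst h; exact h2
    · rw [h1 l (by omega)]
  have e1 : bl l y = bl l y' := by
    have : ∀ a, a < l → y a = y' a := fun a ha => h1 a (by omega)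
    simp only [bl, pr_congr this, sm_congr this]
  have e2 : bl m (shf l y) = bl m (shf l y') := by
    have : ∀ a, a < m → shf l y a = shf l y' a := fun a ha => h1 _ (by omega)
    simp only [bl, pr_congr this, sm_congr this]
  have e3 : (shf l y m).1 = (shf l y' m).1 := h2
  simp only [GG, atS, Set.mem_ofPred_eq, e0, e1, e2, e3]

lemma lw_const (i : S) (p : Prop) [Decidable p] :
    lw X i {_y | p} = if p then 1 else 0 := by
  by_cases h : p <;> simp [h]

lemma lw_GG (i : S) (l m : ℕ) (H : Set ((ℝ × ℝ) × (ℝ × ℝ))) (hH : MeasurableSet H) :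
    lw X i (GG i l m H) = ((rho X i l).prod (rho X i m)) H := by
  classical
  have := two_block X 0 i l m 0 {x | (x.1, x.2.1) ∈ H}
    ((measurable_fst.prodMk (measurable_fst.comp measurable_snd)) hH)
  simp only [Set.mem_ofPred_eq] at this
  rw [GG, this, Measure.prod_apply hH]
  refine lintegral_congr fun u => ?_
  simp only [lw_const]
  rw [← lintegral_indicator_one (measurable_prodMk_left hH)]
  refine lintegral_congr fun v => ?_
  simp [Set.indicator]

lemma pair_bound (z : ℝ) (i : S) (n : ℕ) (r L Dm w : ℝ) (hr : 0 < r) (hL : 0 < L)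
    (c : ℝ≥0∞) (hc : ∀ w, lw X i {y | |zn z n y - w| ≤ (L + Dm) / r} ≤ c)
    (u v : ℝ × ℝ) (huv : (u, v) ∈ HH r L Dm) :
    lw X i {y | |u.1 * (v.1 * zn z n y + v.2) + u.2 - w| ≤ L} +
      lw X i {y | |v.1 * (u.1 * zn z n y + u.2) + v.2 - w| ≤ L} ≤ c := by
  obtain ⟨h1, h2, h3⟩ := huv
  simp only at h1 h2 h3
  have e : ∀ x : ℝ, v.1 * (u.1 * x + u.2) + v.2 - w =
      (u.1 * (v.1 * x + v.2) + u.2 - w) - dl u v := by intro x; simp only [dl]; ring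
  have m1 : MeasurableSet {y : ℕ → S × ℝ × ℝ | |v.1 * (u.1 * zn z n y + u.2) + v.2 - w| ≤ L} := by
    refine measurableSet_le ?_ measurable_const
    have := meas_zn (S := S) z n
    fun_prop
  rw [← measure_union _ m1]
  · have hne : 0 < |u.1 * v.1| := hr.trans_le h1
    have hne' : u.1 * v.1 ≠ 0 := abs_pos.1 hne
    refine (measure_mono ?_).trans (hc ((w - u.2 - u.1 * v.2) / (u.1 * v.1)))
    intro y hy
    have hb : |u.1 * (v.1 * zn z n y + v.2) + u.2 - w| ≤ L + Dm := by
      rcases hy with hy | hy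
      · have : |u.1 * (v.1 * zn z n y + v.2) + u.2 - w| ≤ L := hy
        have := abs_nonneg (dl u v)
        linarith
      · have hy : |v.1 * (u.1 * zn z n y + u.2) + v.2 - w| ≤ L := hy
        rw [e] at hy
        have h4 := abs_sub_abs_le_abs_sub (u.1 * (v.1 * zn z n y + v.2) + u.2 - w) (dl u v)
        linarith
    have e2 : u.1 * (v.1 * zn z n y + v.2) + u.2 - w =
        (u.1 * v.1) * (zn z n y - (w - u.2 - u.1 * v.2) / (u.1 * v.1)) := by
      rw [mul_sub, mul_div_cancel₀ _ hne']; ring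
    rw [e2, abs_mul] at hb
    show |zn z n y - (w - u.2 - u.1 * v.2) / (u.1 * v.1)| ≤ (L + Dm) / r
    rw [le_div_iff₀ hr]
    refine le_trans ?_ hb
    rw [mul_comm]
    exact mul_le_mul_of_nonneg_right h1 (abs_nonneg _)
  · refine Set.disjoint_left.2 fun y hy hy' => ?_
    have hy : |u.1 * (v.1 * zn z n y + v.2) + u.2 - w| ≤ L := hy
    have hy' : |v.1 * (u.1 * zn z n y + u.2) + v.2 - w| ≤ L := hy'
    rw [e] at hy'
    have h5 : dl u v = (u.1 * (v.1 * zn z n y + v.2) + u.2 - w) -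
      ((u.1 * (v.1 * zn z n y + v.2) + u.2 - w) - dl u v) := by ring
    have h4 := abs_sub (u.1 * (v.1 * zn z n y + v.2) + u.2 - w)
      ((u.1 * (v.1 * zn z n y + v.2) + u.2 - w) - dl u v)
    rw [← h5] at h4
    linarith

lemma contract (z : ℝ) (i : S) (hit : ∀ᵐ y ∂lw X i, ∀ R : ℝ, ∃ a, (y a).1 = i ∧ R < |pr a y|)
    (l m : ℕ) (r L Dm : ℝ) (hr : 0 < r) (hL : 0 < L) (hDm : 0 < Dm) (c : ℝ≥0∞)
    (hc : ∀ L, 0 < L → ∀ᶠ n in atTop, ∀ w, lw X i {y | |zn z n y - w| ≤ L} ≤ c)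
    (ε : ℝ≥0∞) (hε : 0 < ε) :
    ∀ᶠ n in atTop, ∀ w, 2 * lw X i {y | |zn z n y - w| ≤ L} ≤
      c * ((rho X i l).prod (rho X i m)) (HH r L Dm) +
        2 * (c * (1 - ((rho X i l).prod (rho X i m)) (HH r L Dm)) + ε) := by
  set δ := ((rho X i l).prod (rho X i m)) (HH r L Dm) with hδ
  let H2 : Set ((ℝ × ℝ) × (ℝ × ℝ)) := {x | (x.2, x.1) ∈ HH r L Dm}
  have hH := meas_HH r L Dm
  have hH2 : MeasurableSet H2 := measurable_swap hH
  have d1 : lw X i (GG i l m (HH r L Dm)) = δ := lw_GG X i l m _ hH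
  have d2 : lw X i (GG i m l H2) = δ := by
    rw [lw_GG X i m l _ hH2, hδ, ← Measure.prod_swap, Measure.map_apply measurable_swap hH2]
    rfl
  have mG1 := meas_GG i l m _ hH
  have mG2 := meas_GG i m l _ hH2
  have g1 := gg X z i i hit (l + m) (GG i l m (HH r L Dm))ᶜ mG1.compl
    (fun y y' h1 h2 => by
      have := adp_GG i l m (HH r L Dm) y y' h1 h2
      simp only [Set.mem_compl_iff, this]) L L hL hL c (hc L hL) ε hε
  have g2 := gg X z i i hit (m + l) (GG i m l H2)ᶜ mG2.compl
    (fun y y' h1 h2 => by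
      have := adp_GG i m l H2 y y' h1 h2
      simp only [Set.mem_compl_iff, this]) L L hL hL c (hc L hL) ε hε
  have hpos : 0 < (L + Dm) / r := by positivity
  obtain ⟨n0, hn0⟩ := eventually_atTop.1 (hc _ hpos)
  filter_upwards [g1, g2, eventually_ge_atTop (l + m + n0)] with n hg1 hg2 hn w
  obtain ⟨n', rfl⟩ := Nat.exists_eq_add_of_le (show l + m ≤ n by omega)
  have hcn := hn0 n' (by omega)
  set Ez : Set (ℕ → S × ℝ × ℝ) := {y | |zn z (l + m + n') y - w| ≤ L} with hEz
  have mEz : MeasurableSet Ez :=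
    measurableSet_le ((meas_zn z (l + m + n')).sub_const w).abs measurable_const
  have k1 : lw X i Ez ≤ lw X i (Ez ∩ GG i l m (HH r L Dm)) + (c * (1 - δ) + ε) := by
    rw [← measure_inter_add_diff Ez mG1]
    gcongr
    have := hg1 w
    rw [prob_compl_eq_one_sub mG1, d1] at this
    refine le_trans (measure_mono ?_) this
    rintro y ⟨h1, h2⟩; exact ⟨h2, h1⟩
  have k2 : lw X i Ez ≤ lw X i (Ez ∩ GG i m l H2) + (c * (1 - δ) + ε) := by
    rw [← measure_inter_add_diff Ez mG2]
    gcongr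
    have := hg2 w
    rw [prob_compl_eq_one_sub mG2, d2] at this
    refine le_trans (measure_mono ?_) this
    rintro y ⟨h1, h2⟩; exact ⟨h2, h1⟩
  let B1 : Set ((ℝ × ℝ) × (ℝ × ℝ) × ℝ) :=
    {x | (x.1, x.2.1) ∈ HH r L Dm ∧ |x.1.1 * (x.2.1.1 * x.2.2 + x.2.1.2) + x.1.2 - w| ≤ L}
  let B2 : Set ((ℝ × ℝ) × (ℝ × ℝ) × ℝ) :=
    {x | (x.2.1, x.1) ∈ HH r L Dm ∧ |x.1.1 * (x.2.1.1 * x.2.2 + x.2.1.2) + x.1.2 - w| ≤ L}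
  have mb : MeasurableSet {x : (ℝ × ℝ) × (ℝ × ℝ) × ℝ |
      |x.1.1 * (x.2.1.1 * x.2.2 + x.2.1.2) + x.1.2 - w| ≤ L} := by
    refine measurableSet_le ?_ measurable_const
    fun_prop
  have mB1 : MeasurableSet B1 :=
    MeasurableSet.inter ((measurable_fst.prodMk (measurable_fst.comp measurable_snd)) hH) mb
  have mB2 : MeasurableSet B2 :=
    MeasurableSet.inter (((measurable_fst.comp measurable_snd).prodMk measurable_fst) hH) mb
  have t1 := two_block X z i l m n' B1 mB1
  have t2 := two_block X z i m l n' B2 mB2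
  have s1 : Ez ∩ GG i l m (HH r L Dm) = {y | y ∈ atS l i ∧ shf l y ∈ atS m i ∧
      (bl l y, bl m (shf l y), zn z n' (shf m (shf l y))) ∈ B1} := by
    ext y
    simp only [hEz, GG, B1, Set.mem_inter_iff, Set.mem_ofPred_eq, add_assoc, zn_add, bl]
    tauto
  have s2 : Ez ∩ GG i m l H2 = {y | y ∈ atS m i ∧ shf m y ∈ atS l i ∧
      (bl m y, bl l (shf m y), zn z n' (shf l (shf m y))) ∈ B2} := by
    have : l + m + n' = m + (l + n') := by omega
    ext y
    simp only [hEz, GG, B2, H2, Set.mem_inter_iff, Set.mem_ofPred_eq, this, zn_add, bl]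
    tauto
  rw [← s1] at t1
  rw [← s2] at t2
  have mg : ∀ B : Set ((ℝ × ℝ) × (ℝ × ℝ) × ℝ), MeasurableSet B →
      Measurable (fun x : (ℝ × ℝ) × (ℝ × ℝ) => lw X i {y | (x.1, x.2, zn z n' y) ∈ B}) := by
    intro B hB
    have : MeasurableSet {x : ((ℝ × ℝ) × (ℝ × ℝ)) × (ℕ → S × ℝ × ℝ) |
        (x.1.1, x.1.2, zn z n' x.2) ∈ B} :=
      ((measurable_fst.comp measurable_fst).prodMk ((measurable_snd.comp measurable_fst).prodMk
        ((meas_zn z n').comp measurable_snd))) hB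
    exact measurable_measure_prodMk_left this
  have key : lw X i (Ez ∩ GG i l m (HH r L Dm)) + lw X i (Ez ∩ GG i m l H2) ≤ c * δ := by
    have q1 : ∫⁻ u, ∫⁻ v, lw X i {y | (u, v, zn z n' y) ∈ B1} ∂rho X i m ∂rho X i l =
        ∫⁻ x, lw X i {y | (x.1, x.2, zn z n' y) ∈ B1} ∂((rho X i l).prod (rho X i m)) :=
      (lintegral_prod _ (mg B1 mB1).aemeasurable).symm
    have q2 : ∫⁻ u, ∫⁻ v, lw X i {y | (u, v, zn z n' y) ∈ B2} ∂rho X i l ∂rho X i m =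
        ∫⁻ x, lw X i {y | (x.2, x.1, zn z n' y) ∈ B2} ∂((rho X i l).prod (rho X i m)) := by
      exact (lintegral_prod_symm (fun x : (ℝ × ℝ) × (ℝ × ℝ) =>
        lw X i {y | (x.2, x.1, zn z n' y) ∈ B2})
        ((mg B2 mB2).comp measurable_swap).aemeasurable).symm
    rw [t1, t2, q1, q2, ← lintegral_add_left (mg B1 mB1)]
    calc _ ≤ ∫⁻ x, (HH r L Dm).indicator (fun _ => c) x ∂((rho X i l).prod (rho X i m)) := by
          refine lintegral_mono fun x => ?_
          by_cases hx : x ∈ HH r L Dm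
          · simp only [hx, Set.indicator_of_mem]
            refine le_trans (add_le_add (measure_mono ?_) (measure_mono ?_))
              (pair_bound X z i n' r L Dm w hr hL c hcn x.1 x.2 hx)
            · rintro y ⟨_, h⟩; exact h
            · rintro y ⟨_, h⟩; exact h
          · have hx' : (x.1, x.2) ∉ HH r L Dm := hx
            simp [hx, B1, B2]
      _ = c * δ := by
          rw [lintegral_indicator hH, lintegral_const]; simp [hδ]
  calc 2 * lw X i Ez = lw X i Ez + lw X i Ez := two_mul _
    _ ≤ _ := add_le_add k1 k2
    _ = (lw X i (Ez ∩ GG i l m (HH r L Dm)) + lw X i (Ez ∩ GG i m l H2)) +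
        2 * (c * (1 - δ) + ε) := by ring
    _ ≤ _ := by gcongr

lemma conc_zero (z : ℝ) (i : S)
    (hit : ∀ᵐ y ∂lw X i, ∀ R : ℝ, ∃ a, (y a).1 = i ∧ R < |pr a y|)
    (l m : ℕ) (r L0 Dm : ℝ) (hr : 0 < r) (hL0 : 0 < L0) (hDm : 0 < Dm)
    (hδ : 0 < ((rho X i l).prod (rho X i m)) (HH r L0 Dm)) (ε : ℝ) (hε : 0 < ε) :
    ∀ L, 0 < L → ∀ᶠ n in atTop, ∀ w, lw X i {y | |zn z n y - w| ≤ L} ≤ ENNReal.ofReal ε := by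
  let C : Set ℝ := {c | 0 ≤ c ∧ ∀ L, 0 < L → ∀ᶠ n in atTop, ∀ w,
    lw X i {y | |zn z n y - w| ≤ L} ≤ ENNReal.ofReal c}
  have h1 : (1 : ℝ) ∈ C := ⟨zero_le_one, fun L _ => Eventually.of_forall fun n w => by
    simpa using prob_le_one⟩
  have hb : BddBelow C := ⟨0, fun c hc => hc.1⟩
  have hδ1 : ((rho X i l).prod (rho X i m)) (HH r L0 Dm) ≤ 1 := by
    rw [← lw_GG X i l m _ (meas_HH r L0 Dm)]; exact prob_le_one
  obtain ⟨d, hd⟩ : ∃ d : ℝ, ((rho X i l).prod (rho X i m)) (HH r L0 Dm) = ENNReal.ofReal d :=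
    ⟨_, (ENNReal.ofReal_toReal (ne_top_of_le_ne_top ENNReal.one_ne_top hδ1)).symm⟩
  rw [hd] at hδ hδ1
  have hd0 : 0 < d := ENNReal.ofReal_pos.1 hδ
  have hd1 : d ≤ 1 := by simpa using hδ1
  have step : ∀ c ∈ C, ∀ e : ℝ, 0 < e → c * (1 - d / 2) + 2 * e ∈ C := by
    rintro c ⟨hc0, hc⟩ e he
    have hnn : 0 ≤ c * (1 - d / 2) := mul_nonneg hc0 (by linarith)
    refine ⟨by linarith, fun L hL => ?_⟩
    have k := contract X z i hit l m r L0 Dm hr hL0 hDm (ENNReal.ofReal c) hc (ENNReal.ofReal e)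
      (ENNReal.ofReal_pos.2 he)
    have k2 : ∀ᶠ n in atTop, ∀ w, lw X i {y | |zn z n y - w| ≤ L0} ≤
        ENNReal.ofReal (c * (1 - d / 2) + e) := by
      filter_upwards [k] with n hn w
      have := hn w
      rw [hd] at this
      have e1 : (1 : ℝ≥0∞) - ENNReal.ofReal d = ENNReal.ofReal (1 - d) := by
        rw [ENNReal.ofReal_sub _ hd0.le, ENNReal.ofReal_one]
      have e2 : ENNReal.ofReal c * ENNReal.ofReal d + 2 * (ENNReal.ofReal c *
          (1 - ENNReal.ofReal d) + ENNReal.ofReal e) =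
          2 * ENNReal.ofReal (c * (1 - d / 2) + e) := by
        have e3 : (2 : ℝ≥0∞) = ENNReal.ofReal 2 := by simp
        have hm : 0 ≤ c * (1 - d) := mul_nonneg hc0 (by linarith)
        rw [e1, e3, ← ENNReal.ofReal_mul hc0, ← ENNReal.ofReal_mul hc0,
          ← ENNReal.ofReal_add hm he.le, ← ENNReal.ofReal_mul (by norm_num),
          ← ENNReal.ofReal_add (by positivity) (by positivity),
          ← ENNReal.ofReal_mul (by norm_num)]
        congr 1; ring
      rw [e2] at this
      exact (ENNReal.mul_le_mul_iff_right (by norm_num) (by norm_num)).1 this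
    have g := gg X z i i hit 0 Set.univ MeasurableSet.univ (fun _ _ _ _ => rfl) L L0 hL hL0 _ k2
      (ENNReal.ofReal e) (ENNReal.ofReal_pos.2 he)
    filter_upwards [g] with n hn w
    have := hn w
    rw [Set.univ_inter, measure_univ, mul_one, ← ENNReal.ofReal_add (by linarith) he.le] at this
    refine this.trans (le_of_eq ?_)
    congr 1; ring
  have hq0 : 0 ≤ sInf C := le_csInf ⟨1, h1⟩ fun c hc => hc.1
  have hq : sInf C ≤ sInf C * (1 - d / 2) := by
    refine le_of_forall_pos_le_add fun e he => ?_
    obtain ⟨c, hc, hce⟩ := exists_lt_of_csInf_lt ⟨1, h1⟩ (show sInf C < sInf C + e / 2 by linarith)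
    have := csInf_le hb (step c hc (e / 4) (by linarith))
    nlinarith
  have hq' : sInf C = 0 := by
    refine le_antisymm ?_ hq0
    by_contra h
    push Not at h
    nlinarith
  obtain ⟨c, hc, hce⟩ := exists_lt_of_csInf_lt ⟨1, h1⟩ (show sInf C < ε by linarith)
  intro L hL
  filter_upwards [hc.2 L hL] with n hn w
  exact (hn w).trans (ENNReal.ofReal_le_ofReal hce.le)

lemma tend_zero (z : ℝ) (i : S)
    (hit : ∀ j, ∀ᵐ y ∂lw X j, ∀ R : ℝ, ∃ a, (y a).1 = i ∧ R < |pr a y|)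
    (l m : ℕ) (r L0 Dm : ℝ) (hr : 0 < r) (hL0 : 0 < L0) (hDm : 0 < Dm)
    (hδ : 0 < ((rho X i l).prod (rho X i m)) (HH r L0 Dm)) (j : S) (x : ℝ) (hx : 0 < x) :
    Tendsto (fun n => lw X j {y | |zn z n y| ≤ x}) atTop (nhds 0) := by
  rw [ENNReal.tendsto_nhds_zero]
  intro ε hε
  obtain ⟨e, he, hee⟩ : ∃ e : ℝ, 0 < e ∧ ENNReal.ofReal e + ENNReal.ofReal e ≤ ε := by
    by_cases ht : ε = ⊤
    · exact ⟨1, one_pos, by simp [ht]⟩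
    · refine ⟨ε.toReal / 2, ?_, ?_⟩
      · have := ENNReal.toReal_pos hε.ne' ht
        linarith
      · rw [← ENNReal.ofReal_add (by positivity) (by positivity), add_halves,
          ENNReal.ofReal_toReal ht]
  have h0 := conc_zero X z i (hit i) l m r L0 Dm hr hL0 hDm hδ e he x hx
  have g := gg X z i j (hit j) 0 Set.univ MeasurableSet.univ (fun _ _ _ _ => rfl) x x hx hx _ h0
      (ENNReal.ofReal e) (ENNReal.ofReal_pos.2 he)
  filter_upwards [g] with n hn
  have := hn 0
  simp only [Set.univ_inter, measure_univ, mul_one, sub_zero] at this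
  exact this.trans hee

lemma rho_ne (hA : ∀ j, ∀ᵐ y ∂lw X j, ∀ n, pr n y ≠ 0) (i : S) (l : ℕ) :
    ∀ᵐ u ∂rho X i l, u.1 ≠ 0 := by
  have hm : MeasurableSet {u : ℝ × ℝ | u.1 ≠ 0} :=
    (measurable_fst (measurableSet_singleton 0)).compl
  rw [rho, ae_map_iff (meas_bl l).aemeasurable hm]
  refine ae_restrict_of_ae ?_
  filter_upwards [hA i] with y hy using hy l

lemma exists_HH (hA : ∀ j, ∀ᵐ y ∂lw X j, ∀ n, pr n y ≠ 0) (i : S) (l m : ℕ)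
    (h : ¬ ∀ᵐ x ∂((rho X i l).prod (rho X i m)), dl x.1 x.2 = 0) :
    ∃ r L Dm : ℝ, 0 < r ∧ 0 < L ∧ 0 < Dm ∧ 0 < ((rho X i l).prod (rho X i m)) (HH r L Dm) := by
  by_contra hcon
  push Not at hcon
  apply h
  have h1 : ∀ᵐ x ∂((rho X i l).prod (rho X i m)), x.1.1 ≠ 0 :=
    Measure.quasiMeasurePreserving_fst.ae (rho_ne X hA i l)
  have h2 : ∀ᵐ x ∂((rho X i l).prod (rho X i m)), x.2.1 ≠ 0 :=
    Measure.quasiMeasurePreserving_snd.ae (rho_ne X hA i m)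
  have h3 : ∀ᵐ x ∂((rho X i l).prod (rho X i m)), ∀ N : ℕ,
      x ∉ HH (1 / ((N : ℝ) + 1)) (1 / ((N : ℝ) + 1)) ((N : ℝ) + 1) := by
    rw [ae_all_iff]
    intro N
    rw [ae_iff]
    have := hcon (1 / ((N : ℝ) + 1)) (1 / ((N : ℝ) + 1)) ((N : ℝ) + 1) (by positivity)
      (by positivity) (by positivity)
    simpa using this
  filter_upwards [h1, h2, h3] with x a b c
  by_contra hne
  have p1 : 0 < |x.1.1 * x.2.1| := abs_pos.2 (mul_ne_zero a b)
  have p2 : 0 < |dl x.1 x.2| / 2 := half_pos (abs_pos.2 hne)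
  obtain ⟨N1, hN1⟩ := exists_nat_one_div_lt p1
  obtain ⟨N2, hN2⟩ := exists_nat_one_div_lt p2
  obtain ⟨N3, hN3⟩ := exists_nat_gt |dl x.1 x.2|
  have q1 : (N1 : ℝ) ≤ ((N1 + N2 + N3 : ℕ) : ℝ) := by exact_mod_cast (by omega)
  have q2 : (N2 : ℝ) ≤ ((N1 + N2 + N3 : ℕ) : ℝ) := by exact_mod_cast (by omega)
  have q3 : (N3 : ℝ) ≤ ((N1 + N2 + N3 : ℕ) : ℝ) := by exact_mod_cast (by omega)
  refine c (N1 + N2 + N3) ⟨?_, ?_, ?_⟩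
  · refine le_trans (one_div_le_one_div_of_le (by positivity) ?_) hN1.le
    linarith
  · have := one_div_le_one_div_of_le (show (0 : ℝ) < (N2 : ℝ) + 1 by positivity)
      (show (N2 : ℝ) + 1 ≤ ((N1 + N2 + N3 : ℕ) : ℝ) + 1 by linarith)
    linarith
  · linarith

lemma ae_shift (Q : Set (ℕ → S × ℝ × ℝ)) (hQ : MeasurableSet Q) (h : ∀ j, ∀ᵐ y ∂lw X j, y ∈ Q)
    (j : S) : ∀ᵐ y ∂lw X j, ∀ n, shf n y ∈ Q := by
  rw [ae_all_iff]
  intro n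
  have : ∀ᵐ y ∂lw X j, ∀ k, y ∈ atS n k → shf n y ∈ Q := by
    rw [ae_all_iff]
    intro k
    exact (markov_ae X j k n (fun _ => Q) (measurable_snd hQ) (fun _ _ _ _ => rfl)).2
      (Eventually.of_forall fun _ _ => h k)
  filter_upwards [this] with y hy using hy _ rfl

lemma pr_ne (h : ∀ j, ∀ᵐ y ∂lw X j, (y 0).2.1 ≠ 0) (j : S) : ∀ᵐ y ∂lw X j, ∀ n, pr n y ≠ 0 := by
  have hQ : MeasurableSet {y : ℕ → S × ℝ × ℝ | (y 0).2.1 ≠ 0} :=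
    (show Measurable (fun y : ℕ → S × ℝ × ℝ => (y 0).2.1) by fun_prop)
      (measurableSet_singleton 0).compl
  filter_upwards [ae_shift X _ hQ h j] with y hy n
  exact Finset.prod_ne_zero_iff.2 fun a _ => hy a

lemma lw_atS (j k : S) (n : ℕ) : lw X j (atS n k) = X.P j {ω | X.M n ω = k} := by
  rw [lw, Measure.map_apply (meas_Y X) (meas_atS n k)]
  rfl

lemma lw_start (j : S) : ∀ᵐ y ∂lw X j, (y 0).1 = j := by
  have h : lw X j (atS 0 j) = 1 := by rw [lw_atS]; exact X.start j
  exact (mem_ae_iff_prob_eq_one (meas_atS 0 j)).2 h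

lemma ex_atS (j k : S) (n : ℕ) (h : 0 < X.P j {ω | X.M n ω = k}) (p : (ℕ → S × ℝ × ℝ) → Prop)
    (hp : ∀ᵐ y ∂lw X j, p y) : ∃ y, y ∈ atS n k ∧ p y := by
  have hf : ∃ᵐ y ∂lw X j, y ∈ atS n k := by
    rw [frequently_ae_iff]
    have := lw_atS X j k n
    exact ne_of_gt (this ▸ h)
  exact (hf.and_eventually hp).exists

lemma comm_D (hA : ∀ j, ∀ᵐ y ∂lw X j, ∀ n, pr n y ≠ 0) (i : S)
    (hit : ∀ᵐ y ∂lw X i, ∀ R : ℝ, ∃ a, (y a).1 = i ∧ R < |pr a y|)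
    (hcom : ∀ l m, ∀ᵐ x ∂((rho X i l).prod (rho X i m)), dl x.1 x.2 = 0) :
    ∃ c : S → ℝ, ∀ j, ∀ᵐ y ∂lw X j, (y 0).2.1 * c (y 1).1 + (y 0).2.2 = c (y 0).1 := by
  have s1 : ∃ l, ¬ ∀ᵐ u ∂rho X i l, u.1 = 1 := by
    by_contra hcon
    push Not at hcon
    have h1 : ∀ᵐ y ∂lw X i, ∀ l, y ∈ atS l i → pr l y = 1 := by
      rw [ae_all_iff]
      intro l
      have := hcon l
      rw [rho, ae_map_iff (meas_bl l).aemeasurable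
        (show MeasurableSet {u : ℝ × ℝ | u.1 = 1} from
          measurable_fst (measurableSet_singleton (1 : ℝ))), ae_restrict_iff' (meas_atS l i)] at this
      exact this
    obtain ⟨y, hy1, hy2⟩ := (h1.and hit).exists
    obtain ⟨a, ha, hb⟩ := hy2 1
    rw [hy1 a ha] at hb
    simp at hb
  obtain ⟨l, hl⟩ := s1
  have s2 : ∀ᵐ u ∂rho X i l, ∀ m, ∀ᵐ v ∂rho X i m, dl u v = 0 := by
    rw [ae_all_iff]
    intro m
    exact Measure.ae_ae_of_ae_prod (hcom l m)
  obtain ⟨u, hu1, hu⟩ := ((not_eventually.1 hl).and_eventually s2).exists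
  have hu1' : 1 - u.1 ≠ 0 := fun h => hu1 (by linarith)
  obtain ⟨c, hc⟩ : ∃ c, c = u.2 / (1 - u.1) := ⟨_, rfl⟩
  have s3 : ∀ m, ∀ᵐ y ∂lw X i, y ∈ atS m i → zn c m y = c := by
    intro m
    have := hu m
    have hm : MeasurableSet {v : ℝ × ℝ | dl u v = 0} :=
      (show Measurable (fun v => dl u v) by unfold dl; fun_prop) (measurableSet_singleton 0)
    rw [rho, ae_map_iff (meas_bl m).aemeasurable hm, ae_restrict_iff' (meas_atS m i)] at this
    filter_upwards [this] with y hy h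
    have := hy h
    simp only [dl, bl] at this
    have e : c * (1 - u.1) = u.2 := by rw [hc]; field_simp
    apply mul_right_cancel₀ hu1'
    simp only [zn]
    rw [add_mul, mul_assoc, e]
    linarith
  have s4 : ∀ j, ∃ cj : ℝ, ∀ n, ∀ᵐ y ∂lw X j, y ∈ atS n i → zn c n y = cj := by
    intro j
    obtain ⟨m, hm⟩ := X.irreducible i j
    have h1 : ∀ᵐ y ∂lw X i, ∀ n, y ∈ atS m j → ∀ᵐ y' ∂lw X j, y' ∈ atS n i →
        pr m y * zn c n y' + sm m y = c := by
      rw [ae_all_iff]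
      intro n
      refine (markov_ae X i j m (fun y => {y' | y' ∈ atS n i →
        pr m y * zn c n y' + sm m y = c}) ?_ ?_).1 ?_
      · have f1 : MeasurableSet {x : (ℕ → S × ℝ × ℝ) × (ℕ → S × ℝ × ℝ) | x.2 ∈ atS n i} :=
          measurable_snd (meas_atS n i)
        have f2 : MeasurableSet {x : (ℕ → S × ℝ × ℝ) × (ℕ → S × ℝ × ℝ) |
            pr m x.1 * zn c n x.2 + sm m x.1 = c} :=
          ((((meas_pr m).comp measurable_fst).mul ((meas_zn c n).comp measurable_snd)).add
            ((meas_sm m).comp measurable_fst)) (measurableSet_singleton c)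
        exact f1.imp f2
      · intro y y' h1 _
        simp only [pr_congr h1, sm_congr h1]
      · filter_upwards [s3 (m + n)] with y hy _ h
        rw [← zn_add]
        exact hy h
    obtain ⟨y0, hy0, hy1, hy2⟩ := ex_atS X i j m hm _ (h1.and (hA i))
    refine ⟨(c - sm m y0) / pr m y0, fun n => ?_⟩
    filter_upwards [hy1 n hy0] with y' h h'
    rw [eq_div_iff (hy2 m)]
    have := h h'
    linarith
  choose cc hcc using s4
  refine ⟨cc, fun j => ?_⟩
  have s5 : ∀ᵐ y ∂lw X j, ∀ k, y ∈ atS 1 k → pr 1 y * cc k + sm 1 y = cc j := by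
    rw [ae_all_iff]
    intro k
    obtain ⟨n, hn⟩ := X.irreducible k i
    have h1 : ∀ᵐ y ∂lw X j, y ∈ atS 1 k → ∀ᵐ y' ∂lw X k, y' ∈ atS n i →
        pr 1 y * zn c n y' + sm 1 y = cc j := by
      refine (markov_ae X j k 1 (fun y => {y' | y' ∈ atS n i →
        pr 1 y * zn c n y' + sm 1 y = cc j}) ?_ ?_).1 ?_
      · have f1 : MeasurableSet {x : (ℕ → S × ℝ × ℝ) × (ℕ → S × ℝ × ℝ) | x.2 ∈ atS n i} :=
          measurable_snd (meas_atS n i)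
        have f2 : MeasurableSet {x : (ℕ → S × ℝ × ℝ) × (ℕ → S × ℝ × ℝ) |
            pr 1 x.1 * zn c n x.2 + sm 1 x.1 = cc j} :=
          ((((meas_pr 1).comp measurable_fst).mul ((meas_zn c n).comp measurable_snd)).add
            ((meas_sm 1).comp measurable_fst)) (measurableSet_singleton (cc j))
        exact f1.imp f2
      · intro y y' h1 _
        simp only [pr_congr h1, sm_congr h1]
      · filter_upwards [hcc j (1 + n)] with y hy _ h
        rw [← zn_add]
        exact hy h
    filter_upwards [h1] with y hy h
    obtain ⟨y', g1, g2, g3⟩ := ex_atS X k i n hn _ ((hy h).and (hcc k n))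
    rw [← g3 g1]
    exact g2 g1
  filter_upwards [s5, lw_start X j] with y hy h0
  have := hy _ rfl
  simpa [pr, sm, h0] using this

lemma D_iter (c : S → ℝ)
    (hD : ∀ j, ∀ᵐ y ∂lw X j, (y 0).2.1 * c (y 1).1 + (y 0).2.2 = c (y 0).1) (j : S) :
    ∀ᵐ y ∂lw X j, ∀ n, zn (c (y n).1) n y = c (y 0).1 := by
  have hc : Measurable c := measurable_of_countable c
  have hQ : MeasurableSet {y : ℕ → S × ℝ × ℝ |
      (y 0).2.1 * c (y 1).1 + (y 0).2.2 = c (y 0).1} := by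
    refine measurableSet_eq_fun ?_ ?_ <;> fun_prop
  filter_upwards [ae_shift X _ hQ hD j] with y hy n
  induction n with
  | zero => simp [zn, pr, sm]
  | succ n ih =>
    have h := hy n
    simp only [shf, add_zero] at h
    rw [← ih, ← h, zn, zn, pr, sm, Finset.prod_range_succ, Finset.sum_range_succ]
    simp only [pr, sm]
    ring

lemma lw_one (j k : S) : lw X j (atS 1 k) = X.p j k := by
  classical
  rw [lw_atS]
  have h := X.chain j 1 (fun a => if a = 0 then j else k) rfl
  simp [Finset.range_add_one] at h
  rw [← h]
  have := X.prob j
  have h0 : ∀ᵐ ω ∂X.P j, X.M 0 ω = j :=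
    (mem_ae_iff_prob_eq_one (X.measM 0 (measurableSet_singleton j))).2 (X.start j)
  apply measure_congr
  filter_upwards [h0] with ω h1
  apply propext
  exact ⟨fun h => ⟨h, h1⟩, fun h => h.1⟩

lemma first_step (j l : S) (n : ℕ) :
    lw X j (atS (1 + n) l) = ∑' k, X.p j k * lw X k (atS n l) := by
  rw [measure_eq_tsum_fiber (lw X j) (fun y => (y 1).1) (by fun_prop) _ (meas_atS (1 + n) l)]
  refine tsum_congr fun k => ?_
  have := markov_set X j k 1 (fun _ => atS n l) (measurable_snd (meas_atS n l))
    (fun _ _ _ _ => rfl)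
  rw [lintegral_const, Measure.restrict_apply_univ, lw_one] at this
  rw [mul_comm, ← this]
  congr 1
  ext y
  simp [atS, shf, and_comm]

lemma stat (n : ℕ) (l : S) : ∑' j, X.π j * lw X j (atS n l) = X.π l := by
  induction n with
  | zero =>
    rw [tsum_eq_single l]
    · rw [lw_atS, X.start l, mul_one]
    · intro j hj
      rw [lw_atS, start_ne X (Ne.symm hj), mul_zero]
  | succ n ih =>
    rw [add_comm n 1]
    simp only [first_step, ← ENNReal.tsum_mul_left]
    rw [ENNReal.tsum_comm]
    conv_rhs => rw [← ih]
    refine tsum_congr fun k => ?_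
    rw [← X.stationary k, ← ENNReal.tsum_mul_right]
    refine tsum_congr fun j => ?_
    rw [mul_assoc]

lemma Pπ_apply (E : Set Ω) (hE : MeasurableSet E) : X.Pπ E = ∑' j, X.π j * X.P j E := by
  rw [Pπ, Measure.sum_apply _ hE]
  rfl

lemma Pπ_ae (p : Ω → Prop) : (∀ᵐ ω ∂X.Pπ, p ω) ↔ ∀ j, ∀ᵐ ω ∂X.P j, p ω := by
  rw [Pπ, Measure.ae_sum_iff]
  refine forall_congr' fun j => ?_
  rw [Measure.ae_ennreal_smul_measure_iff (X.πpos j).ne']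

lemma Pπ_prob : IsProbabilityMeasure X.Pπ := by
  constructor
  rw [Pπ_apply X _ MeasurableSet.univ, ← X.πsum]
  refine tsum_congr fun j => ?_
  have := X.prob j
  simp

lemma D_not (i : S) (c : S → ℝ) (hc : X.DegenD c) :
    ¬ ∀ Z : Ω → ℝ, X.Admissible Z → TendstoInfInMeasure X.Pπ (X.Zb Z) := by
  intro hall
  have hPp := Pπ_prob X
  have hcm : Measurable c := measurable_of_countable c
  have hD : ∀ j, ∀ᵐ y ∂lw X j, (y 0).2.1 * c (y 1).1 + (y 0).2.2 = c (y 0).1 := by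
    intro j
    rw [lw, ae_map_iff (meas_Y X).aemeasurable]
    · exact (Pπ_ae X _).1 hc j
    · refine measurableSet_eq_fun ?_ ?_ <;> fun_prop
  have hI : ∀ᵐ ω ∂X.Pπ, ∀ n, X.M n ω = i → X.Zb (fun _ => c i) n ω = c (X.M 0 ω) := by
    rw [Pπ_ae]
    intro j
    have := ae_of_ae_map (meas_Y X).aemeasurable (D_iter X c hD j)
    filter_upwards [this] with ω h n hn
    have h2 := h n
    simp only [Yc, hn] at h2
    exact h2
  have hadm : X.Admissible (fun _ => c i) := by
    refine ⟨measurable_const, fun j => ?_⟩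
    have := X.prob j
    exact indepFun_const_left _ _
  have hM : ∀ n, X.Pπ {ω | X.M n ω = i} = X.π i := by
    intro n
    rw [Pπ_apply X {ω | X.M n ω = i} (X.measM n (measurableSet_singleton i)), ← stat X n i]
    refine tsum_congr fun j => ?_
    rw [lw_atS]
  have hm0 : Measurable (fun ω => |c (X.M 0 ω)|) := (hcm.comp (X.measM 0)).abs
  have htail : Tendsto (fun N : ℕ => X.Pπ {ω | (N : ℝ) < |c (X.M 0 ω)|}) atTop (nhds 0) := by
    have h := tendsto_measure_iInter_atTop (μ := X.Pπ)
      (s := fun N : ℕ => {ω | (N : ℝ) < |c (X.M 0 ω)|})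
      (fun N => (measurableSet_lt measurable_const hm0).nullMeasurableSet)
      (fun N N' h ω (hω : (N' : ℝ) < |c (X.M 0 ω)|) =>
        show (N : ℝ) < |c (X.M 0 ω)| from lt_of_le_of_lt (Nat.cast_le.2 h) hω) ⟨0, measure_ne_top _ _⟩
    have he : ⋂ N : ℕ, {ω | (N : ℝ) < |c (X.M 0 ω)|} = ∅ := by
      refine Set.eq_empty_of_forall_notMem fun ω hω => ?_
      obtain ⟨N, hN⟩ := exists_nat_gt |c (X.M 0 ω)|
      have := Set.mem_iInter.1 hω N
      exact lt_asymm hN this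
    rw [he, measure_empty] at h
    exact h
  obtain ⟨N, hN⟩ := (htail.eventually (gt_mem_nhds (X.πpos i))).exists
  have hle : ∀ n, X.π i ≤ X.Pπ {ω | |X.Zb (fun _ => c i) n ω| ≤ (N : ℝ) + 1} +
      X.Pπ {ω | (N : ℝ) < |c (X.M 0 ω)|} := by
    intro n
    rw [← hM n]
    refine le_trans (measure_mono_ae ?_) (measure_union_le _ _)
    filter_upwards [hI] with ω hω h
    have h1 := hω n h
    by_cases h2 : (N : ℝ) < |c (X.M 0 ω)|
    · exact Or.inr h2
    · left
      show |X.Zb (fun _ => c i) n ω| ≤ (N : ℝ) + 1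
      rw [h1]
      push Not at h2
      linarith
  have hT := (hall _ hadm ((N : ℝ) + 1) (by positivity)).add_const
    (X.Pπ {ω | (N : ℝ) < |c (X.M 0 ω)|})
  rw [zero_add] at hT
  exact absurd (ge_of_tendsto' hT hle) (not_le.2 hN)

lemma hit_of (i : S) (hlim : ∀ᵐ ω ∂ X.Pπ, ∀ C : ℝ, ∃ n, C < |X.Pprod (X.tau i n ω) ω|) (j : S) :
    ∀ᵐ y ∂lw X j, ∀ R : ℝ, ∃ a, (y a).1 = i ∧ R < |pr a y| := by
  have hN : ∀ᵐ y ∂lw X j, ∀ R : ℕ, ∃ a, (y a).1 = i ∧ (R : ℝ) < |pr a y| := by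
    rw [lw, ae_map_iff (meas_Y X).aemeasurable]
    · filter_upwards [(Pπ_ae X _).1 hlim j] with ω hω R
      obtain ⟨n, hn⟩ := hω (max R 1)
      have h1 := (le_max_left (R : ℝ) 1).trans_lt hn
      have h2 := (le_max_right (R : ℝ) 1).trans_lt hn
      refine ⟨X.tau i n ω, ?_, h1⟩
      have h0 : X.tau i n ω ≠ 0 := by
        intro h
        rw [h] at h2
        simp [Pprod] at h2
      cases n with
      | zero => exact absurd rfl h0
      | succ n =>
        have hne : {k | X.tau i n ω < k ∧ X.M k ω = i}.Nonempty := by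
          by_contra hcon
          rw [Set.not_nonempty_iff_eq_empty] at hcon
          apply h0
          simp [tau, hcon]
        exact (Nat.sInf_mem hne).2
    · have : {y : ℕ → S × ℝ × ℝ | ∀ R : ℕ, ∃ a, (y a).1 = i ∧ (R : ℝ) < |pr a y|} =
          ⋂ R : ℕ, ⋃ a, atS a i ∩ {y | (R : ℝ) < |pr a y|} := by
        ext y; simp [atS]
      rw [this]
      exact MeasurableSet.iInter fun R => MeasurableSet.iUnion fun a =>
        (meas_atS a i).inter (measurableSet_lt measurable_const (meas_pr a).abs)
  filter_upwards [hN] with y hy R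
  obtain ⟨N, hN⟩ := exists_nat_gt R
  obtain ⟨a, h1, h2⟩ := hy N
  exact ⟨a, h1, hN.trans h2⟩

lemma adm_tend (j : S) (x : ℝ)
    (ht : ∀ z, Tendsto (fun n => lw X j {y | |zn z n y| ≤ x}) atTop (nhds 0))
    (Z : Ω → ℝ) (hZ : X.Admissible Z) :
    Tendsto (fun n => X.P j {ω | |X.Zb Z n ω| ≤ x}) atTop (nhds 0) := by
  have := X.prob j
  let T : Ω → (ℕ → S × ℝ × ℝ) := fun ω n => (X.M (n + 1) ω, X.A n ω, X.B n ω)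
  have hT : Measurable T := measurable_pi_lambda _ fun n =>
    (X.measM _).prodMk ((X.measA n).prodMk (X.measB n))
  have hind := (indepFun_iff_map_prod_eq_prod_map_map hZ.1.aemeasurable hT.aemeasurable).1 (hZ.2 j)
  have hp1 : IsProbabilityMeasure ((X.P j).map Z) :=
    Measure.isProbabilityMeasure_map hZ.1.aemeasurable
  have hp2 : IsProbabilityMeasure ((X.P j).map T) :=
    Measure.isProbabilityMeasure_map hT.aemeasurable
  have hzn : ∀ z n ω, zn z n (T ω) = zn z n (fun a => Yc X a ω) := fun z n ω => rfl
  have hmz : ∀ n, Measurable (fun q : ℝ × (ℕ → S × ℝ × ℝ) => zn q.1 n q.2) := fun n =>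
    (((meas_pr n).comp measurable_snd).mul measurable_fst).add ((meas_sm n).comp measurable_snd)
  have hme : ∀ n, MeasurableSet {q : ℝ × (ℕ → S × ℝ × ℝ) | |zn q.1 n q.2| ≤ x} := fun n =>
    measurableSet_le (hmz n).abs measurable_const
  have hme' : ∀ z n, MeasurableSet {y : ℕ → S × ℝ × ℝ | |zn z n y| ≤ x} := fun z n =>
    measurableSet_le (meas_zn z n).abs measurable_const
  have e1 : ∀ n, X.P j {ω | |X.Zb Z n ω| ≤ x} =
      ∫⁻ z, lw X j {y | |zn z n y| ≤ x} ∂((X.P j).map Z) := by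
    intro n
    have a1 : X.P j {ω | |X.Zb Z n ω| ≤ x} =
        (X.P j).map (fun ω => (Z ω, T ω)) {q | |zn q.1 n q.2| ≤ x} := by
      rw [Measure.map_apply (hZ.1.prodMk hT) (hme n)]
      rfl
    rw [a1, hind, Measure.prod_apply (hme n)]
    refine lintegral_congr fun z => ?_
    have a2 : Prod.mk z ⁻¹' {q : ℝ × (ℕ → S × ℝ × ℝ) | |zn q.1 n q.2| ≤ x} =
      {y | |zn z n y| ≤ x} := rfl
    rw [a2, Measure.map_apply hT (hme' z n), lw, Measure.map_apply (meas_Y X) (hme' z n)]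
    rfl
  simp only [e1]
  have key := tendsto_lintegral_of_dominated_convergence (μ := (X.P j).map Z)
    (F := fun n z => lw X j {y | |zn z n y| ≤ x}) (f := fun _ => 0) (fun _ => 1)
    (fun n => measurable_measure_prodMk_left (hme n))
    (fun n => Eventually.of_forall fun z => prob_le_one) (by simp)
    (Eventually.of_forall fun z => ht z)
  simpa using key

lemma Pπ_tend (E : ℕ → Set Ω) (hE : ∀ n, MeasurableSet (E n))
    (h : ∀ j, Tendsto (fun n => X.P j (E n)) atTop (nhds 0)) :
    Tendsto (fun n => X.Pπ (E n)) atTop (nhds 0) := by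
  have key := tendsto_lintegral_of_dominated_convergence (μ := (Measure.count : Measure S))
    (F := fun n j => X.π j * X.P j (E n)) (f := fun _ => 0) X.π
    (fun n => measurable_of_countable _)
    (fun n => Eventually.of_forall fun j => by
      have := X.prob j
      exact mul_le_of_le_one_right' prob_le_one)
    (by rw [lintegral_count, X.πsum]; simp)
    (Eventually.of_forall fun j => by
      have hfin : X.π j ≠ ⊤ := ne_top_of_le_ne_top ENNReal.one_ne_top
        (X.πsum ▸ ENNReal.le_tsum j)
      simpa using ENNReal.Tendsto.const_mul (h j) (Or.inr hfin))
  simp only [lintegral_count, lintegral_zero] at key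
  simpa only [Pπ_apply X _ (hE _)] using key

lemma final (hA : X.Pπ {ω | X.A 0 ω = 0} = 0)
    (i : S) (hlim : ∀ᵐ ω ∂ X.Pπ, ∀ C : ℝ, ∃ n, C < |X.Pprod (X.tau i n ω) ω|) :
    (∀ Z : Ω → ℝ, X.Admissible Z → TendstoInfInMeasure X.Pπ (X.Zb Z)) ↔
      ¬ ∃ c : S → ℝ, X.DegenD c := by
  constructor
  · rintro h ⟨c, hc⟩
    exact D_not X i c hc h
  · intro hD
    have hit := hit_of X i hlim
    have hA0 : ∀ j, ∀ᵐ y ∂lw X j, (y 0).2.1 ≠ 0 := by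
      intro j
      have h1 : ∀ᵐ ω ∂X.Pπ, X.A 0 ω ≠ 0 := by
        rw [ae_iff]; simpa using hA
      rw [lw, ae_map_iff (meas_Y X).aemeasurable]
      · exact (Pπ_ae X _).1 h1 j
      · exact (show Measurable (fun y : ℕ → S × ℝ × ℝ => (y 0).2.1) by fun_prop)
          (measurableSet_singleton 0).compl
    have hA1 := pr_ne X hA0
    by_cases hcom : ∀ l m, ∀ᵐ x ∂((rho X i l).prod (rho X i m)), dl x.1 x.2 = 0
    · exfalso
      obtain ⟨c, hc⟩ := comm_D X hA1 i (hit i) hcom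
      refine hD ⟨c, ?_⟩
      rw [DegenD, Pπ_ae]
      intro j
      exact ae_of_ae_map (meas_Y X).aemeasurable (hc j)
    · simp only [not_forall] at hcom
      obtain ⟨l, m, hlm⟩ := hcom
      obtain ⟨r, L, Dm, hr, hL, hDm, hδ⟩ := exists_HH X hA1 i l m hlm
      intro Z hZ x hx
      refine Pπ_tend X _ (fun n => ?_) fun j => ?_
      · have h1 : Measurable (X.Pprod n) := (meas_pr n).comp (meas_Y X)
        have h2 : Measurable (X.Ssum n) := (meas_sm n).comp (meas_Y X)
        exact measurableSet_le ((h1.mul hZ.1).add h2).abs measurable_const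
      · exact adm_tend X j x (fun z => tend_zero X z i hit l m r L Dm hr hL hDm hδ j x hx) Z hZ

end Helpers

/-- **Lemma 6.8**. In the Markov-modulated setting with `P_π(A_1 = 0) = 0` and
`P_π(B_1 = 0) < 1`, suppose `limsup_n |Π_{τ_n(i)}| = ∞` a.s. (for some `i ∈ S`).
Then `|Ψ_1 ∘ ⋯ ∘ Ψ_n(Z_0)| → ∞` in `P_π`-probability for every admissible `Z_0`
if and only if the degeneracy condition (D) fails. -/
theorem divergence_iff_nondegenerate
    {S : Type*} [MeasurableSpace S] [MeasurableSingletonClass S] [Countable S]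
    {Ω : Type*} [MeasurableSpace Ω] (X : MMSetting S Ω)
    (hA : X.Pπ {ω | X.A 0 ω = 0} = 0) (hB : X.Pπ {ω | X.B 0 ω = 0} < 1)
    (i : S) (hlim : ∀ᵐ ω ∂ X.Pπ, ∀ C : ℝ, ∃ n, C < |X.Pprod (X.tau i n ω) ω|) :
    (∀ Z : Ω → ℝ, X.Admissible Z → TendstoInfInMeasure X.Pπ (X.Zb Z)) ↔
      ¬ ∃ c : S → ℝ, X.DegenD c := by
  exact final X hA i hlim

end Perpetuities
end
end
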